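/- arXiv:2112.04220 — 2 statements merged into one kernel-verified Lean document; each statement's English description precedes it below -/
import Mathlib

section
/- Let G be a finite nonabelian simple group such that exactly three primes divide |G| and each of these primes belongs to {2, 3, 5, 7, 11, 13}. Then either G is isomorphic to the alternating group A_5, or o(G) ≥ 71/20. -/
/-- The average element order `o(G) = ψ(G)/|G|` of a finite group `G`,
where `ψ(G) = ∑_{x ∈ G} |x|` is the sum of the orders of all elements of `G`. -/
noncomputable def avgOrder (G : Type*) [Group G] [Fintype G] : ℚ :=
  (∑ x : G, (orderOf x : ℚ)) / (Fintype.card G : ℚ)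


/-- no three-term progressions -/
def apOK (p : ℕ) (l : List Bool) : Bool :=
  (List.range p).all fun a => (List.range p).all fun d =>
    d == 0 || !(l.getD a false && l.getD ((a+d)%p) false && l.getD ((a+2*d)%p) false)

/-- no three-term progressions inside the prefix (no wrap around) -/
def apPre (l : List Bool) : Bool :=
  (List.range l.length).all fun d => 
    d == 0 || !(l.getD 0 false && l.getD d false && l.getD (2*d) false)

/-- search -/
def apSearch (p r : ℕ) : ℕ → List Bool → Bool
  | 0, l => !(apOK p l) || decide (l.count true ≤ r)
  | k+1, l => !(apPre l) || (apSearch p r k (true :: l) && apSearch p r k (false :: l))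

theorem apSearch5 : apSearch 5 2 5 [] = true := by decide +kernel
theorem apSearch7 : apSearch 7 3 7 [] = true := by decide +kernel
theorem apSearch11 : apSearch 11 4 11 [] = true := by decide +kernel
theorem apSearch13 : apSearch 13 5 13 [] = true := by decide +kernel

theorem apSearch_sound (p r : ℕ) (b : ℕ → Bool)
    (hb : ∀ a d, d % p ≠ 0 → ¬ (b (a % p) = true ∧ b ((a+d) % p) = true ∧ b ((a+2*d) % p) = true)) :
    ∀ k m, m + k = p → apSearch p r k ((List.range' k m).map b) = true →
      ((List.range' 0 p).map b).count true ≤ r := by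
  intro k
  induction k with
  | zero =>
    intro m hm h
    have : m = p := by omega
    subst this
    simp only [apSearch, Bool.or_eq_true, Bool.not_eq_true', decide_eq_true_eq] at h
    rcases h with h | h
    · exfalso
      revert h
      change ¬ _
      rw [Bool.not_eq_false]
      simp only [apOK, List.all_eq_true, List.mem_range]
      intro a ha d hd
      by_cases h0 : d = 0
      · simp [h0]
      · have := hb a d (by rw [Nat.mod_eq_of_lt hd]; exact h0)
        have h1 : (a+d) % m < m := Nat.mod_lt _ (by omega)
        have h2 : (a+2*d) % m < m := Nat.mod_lt _ (by omega)
        rw [Nat.mod_eq_of_lt ha] at this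
        simp [List.getD, h0, ha, h1, h2]
        by_contra hc
        simp only [not_or, Bool.not_eq_false] at hc
        grind
    · exact h
  | succ k ih =>
    intro m hm h
    rw [apSearch, Bool.or_eq_true] at h
    rcases h with h | h
    · exfalso
      revert h
      rw [Bool.not_eq_true']
      change ¬ _
      rw [Bool.not_eq_false]
      simp only [apPre, List.all_eq_true, List.mem_range]
      intro d hd
      simp at hd
      by_cases h0 : d = 0
      · simp [h0]
      by_cases h2 : 2 * d < m
      · have := hb (k+1) d (by rw [Nat.mod_eq_of_lt (by omega)]; exact h0)
        rw [Nat.mod_eq_of_lt (show k+1 < p by omega), Nat.mod_eq_of_lt (show k+1+d < p by omega), Nat.mod_eq_of_lt (show k+1+2*d < p by omega)] at this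
        simp [List.getD, h0, hd, h2, show 0 < m by omega]
        by_contra hc
        grind
      · simp [List.getD, h2, h0]
    · rw [Bool.and_eq_true] at h
      apply ih (m+1) (by omega)
      rw [List.range'_succ, List.map_cons]
      cases b k
      · exact h.2
      · exact h.1

theorem ap_bound (p r : ℕ) [NeZero p] (hs : apSearch p r p [] = true) (T : Finset (ZMod p))
    (hT : ∀ a h, a ∈ T → a + h ∈ T → a + h + h ∈ T → h = 0) : T.card ≤ r := by
  classical
  have key := apSearch_sound p r (fun n : ℕ => decide ((n : ZMod p) ∈ T)) (by
    rintro a d hd ⟨h1, h2, h3⟩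
    simp only [ZMod.natCast_mod, decide_eq_true_eq] at h1 h2 h3
    push_cast at h2 h3
    have := hT a d h1 h2 (by convert h3 using 1; ring)
    rw [ZMod.natCast_eq_zero_iff] at this
    exact hd (Nat.mod_eq_zero_of_dvd this)) p 0 (by omega) (by simpa using hs)
  refine le_trans ?_ key
  rw [List.count_eq_countP, List.countP_map, List.countP_eq_length_filter]
  have hnd : ((List.range' 0 p).filter (fun n : ℕ => decide ((n : ZMod p) ∈ T))).Nodup :=
    List.Nodup.filter _ List.nodup_range'
  have e : ((List.range' 0 p).filter ((fun x => x == true) ∘ fun n : ℕ => decide ((n : ZMod p) ∈ T)))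
     = ((List.range' 0 p).filter (fun n : ℕ => decide ((n : ZMod p) ∈ T))) := by
    congr 1
    funext n
    simp
  rw [e, ← List.toFinset_card_of_nodup hnd]
  refine Finset.card_le_card_of_injOn (fun x => x.val) ?_ ?_
  · intro x hx
    simp [ZMod.val_lt, List.mem_range'] 
    exact hx
  · intro x _ y _ h
    exact ZMod.val_injective p h

/-- A set containing, with each three-term progression, the whole line. -/
def APClosed (p : ℕ) {V : Type*} [AddCommGroup V] [Module (ZMod p) V] (T : Set V) : Prop :=
  ∀ a h, a ∈ T → a + h ∈ T → a + h + h ∈ T → ∀ i : ZMod p, a + i • h ∈ T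

theorem line_bound {p r : ℕ} [Fact p.Prime]
    (hr : ∀ T : Finset (ZMod p), (∀ a h, a ∈ T → a + h ∈ T → a + h + h ∈ T → h = 0) → T.card ≤ r)
    {V : Type*} [AddCommGroup V] [Module (ZMod p) V] {T : Set V} (hT : APClosed p T)
    (w v : V) (hw : ∃ i : ZMod p, w + i • v ∉ T) :
    {i : ZMod p | w + i • v ∈ T}.ncard ≤ r := by
  classical
  rw [Set.ncard_eq_toFinset_card']
  apply hr
  intro a h h1 h2 h3
  simp only [Set.mem_toFinset, Set.mem_ofPred_eq] at h1 h2 h3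
  by_contra h0
  obtain ⟨i, hi⟩ := hw
  apply hi
  have := hT (w + a • v) (h • v) h1 (by convert h2 using 1; module) (by convert h3 using 1; module)
    ((i - a) / h)
  convert this using 1
  rw [smul_smul, div_mul_cancel₀ _ h0]
  module

theorem plane_upper {p r : ℕ} [Fact p.Prime]
    (hr : ∀ T : Finset (ZMod p), (∀ a h, a ∈ T → a + h ∈ T → a + h + h ∈ T → h = 0) → T.card ≤ r)
    {T : Set (ZMod p × ZMod p)} (hT : APClosed p T) (hne : T ≠ Set.univ) :
    T.ncard ≤ r * (p + 1) := by
  classical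
  obtain ⟨w, hw⟩ := (Set.ne_univ_iff_exists_notMem T).1 hne
  have h1 : T ⊆ (⋃ m ∈ (Finset.univ : Finset (Option (ZMod p))),
      Set.image (fun i : ZMod p => w + i • (m.elim ((0 : ZMod p), (1 : ZMod p)) (fun m => ((1 : ZMod p), m))))
        {i : ZMod p | w + i • (m.elim ((0 : ZMod p), (1 : ZMod p)) (fun m => ((1 : ZMod p), m))) ∈ T}) := by
    intro x hx
    simp only [Finset.mem_univ, Set.iUnion_true, Set.mem_iUnion]
    by_cases h : x.1 = w.1
    · refine ⟨none, x.2 - w.2, ?_⟩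
      have e : w + (x.2 - w.2) • ((0 : ZMod p), (1 : ZMod p)) = x := by
        ext <;> simp [h]
      simp only [Set.mem_ofPred_eq, Option.elim]
      rw [e]; exact ⟨hx, rfl⟩
    · refine ⟨some ((x.2 - w.2) / (x.1 - w.1)), x.1 - w.1, ?_⟩
      have h' : x.1 - w.1 ≠ 0 := sub_ne_zero.2 h
      have e : w + (x.1 - w.1) • ((1 : ZMod p), (x.2 - w.2) / (x.1 - w.1)) = x := by
        ext
        · simp
        · simp [mul_div_cancel₀ _ h']
      simp only [Set.mem_ofPred_eq, Option.elim]
      rw [e]; exact ⟨hx, rfl⟩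
  refine (Set.ncard_le_ncard h1 (Set.toFinite _)).trans ((Finset.set_ncard_biUnion_le _ _).trans ?_)
  refine (Finset.sum_le_card_nsmul _ _ r ?_).trans ?_
  · intro m _
    refine (Set.ncard_image_le (Set.toFinite _)).trans (line_bound hr hT _ _ ⟨0, by simpa using hw⟩)
  · simp [ZMod.card]; ring_nf; rfl

theorem plane_lower {p : ℕ} [Fact p.Prime] (c : ZMod p → ZMod p) (M : Finset (ZMod p)) :
    2 * p * M.card ≤ 2 * (M.biUnion fun m => Finset.univ.image
      fun x : ZMod p => (x, m * x + c m)).card + M.card * M.card - M.card := by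
  classical
  induction M using Finset.induction_on with
  | empty => simp
  | insert m M hm ih =>
    rw [Finset.biUnion_insert, Finset.card_insert_of_notMem hm]
    set U := M.biUnion fun m => Finset.univ.image fun x : ZMod p => (x, m * x + c m)
    set L := Finset.univ.image fun x : ZMod p => (x, m * x + c m) with hL
    have h1 := Finset.card_union_add_card_inter L U
    have h2 : L.card = p := by
      rw [hL, Finset.card_image_of_injective _ (fun a b h => (Prod.mk.inj h).1)]
      simp [ZMod.card]
    have h3 : (L ∩ U).card ≤ M.card := by
      have : L ∩ U ⊆ M.image fun m' => ((c m' - c m) / (m - m'), m * ((c m' - c m) / (m - m')) + c m) := by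
        intro x hx
        simp only [L, U, Finset.mem_inter, Finset.mem_image, Finset.mem_univ, true_and, Finset.mem_biUnion] at hx ⊢
        obtain ⟨⟨y, rfl⟩, m', hm', z, hz⟩ := hx
        obtain ⟨rfl, hz⟩ := Prod.mk.inj hz
        refine ⟨m', hm', ?_⟩
        have hne : m - m' ≠ 0 := sub_ne_zero.2 (fun h => hm (h ▸ hm'))
        have : (c m' - c m) / (m - m') = z := by
          rw [div_eq_iff hne]; linear_combination hz
        rw [this]
      exact (Finset.card_le_card this).trans Finset.card_image_le
    have e : (M.card + 1) * (M.card + 1) = M.card * M.card + 2 * M.card + 1 := by ring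
    have e2 : 2 * p * (M.card + 1) = 2 * p * M.card + 2 * p := by ring
    have e3 : M.card ≤ M.card * M.card := Nat.le_mul_self _
    omega

theorem plane_lemma {p r : ℕ} [Fact p.Prime] (hrp : 2 * r < p)
    (hr : ∀ T : Finset (ZMod p), (∀ a h, a ∈ T → a + h ∈ T → a + h + h ∈ T → h = 0) → T.card ≤ r)
    {T : Set (ZMod p × ZMod p)} (hT : APClosed p T) (hne : T ≠ Set.univ) :
    ∃ m : ZMod p, ∀ c : ZMod p, ∃ x, (x, m * x + c) ∉ T := by
  classical
  by_contra hcon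
  push Not at hcon
  choose c hc using hcon
  have h1 := plane_lower c Finset.univ
  have h2 := plane_upper hr hT hne
  have h3 : (Finset.univ.biUnion fun m => Finset.univ.image
      fun x : ZMod p => (x, m * x + c m)).card ≤ T.ncard := by
    rw [← Set.ncard_coe_finset]
    refine Set.ncard_le_ncard ?_ (Set.toFinite _)
    intro x hx
    simp at hx
    obtain ⟨m, y, rfl⟩ := hx
    exact hc _ _
  have h4 := h3.trans h2
  rw [Finset.card_univ, ZMod.card] at h1
  have e3 : p ≤ p * p := Nat.le_mul_self _
  have h5 : 2 * p * p + p ≤ 2 * (r * (p+1)) + p * p := by omega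
  nlinarith

theorem ap_main {p r : ℕ} [Fact p.Prime] (hrp : 2 * r < p)
    (hr : ∀ T : Finset (ZMod p), (∀ a h, a ∈ T → a + h ∈ T → a + h + h ∈ T → h = 0) → T.card ≤ r) :
    ∀ (d : ℕ) (V : Type*) [AddCommGroup V] [Module (ZMod p) V] [Finite V]
    (T : Set V), Module.finrank (ZMod p) V = d → APClosed p T → T ≠ Set.univ →
    p * T.ncard ≤ r * Nat.card V := by
  classical
  intro d
  induction d with
  | zero =>
    intro V _ _ _ T hd hT hne
    have : Subsingleton V := Module.finrank_zero_iff.1 hd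
    have : T = ∅ := by
      by_contra h
      obtain ⟨x, hx⟩ := Set.nonempty_iff_ne_empty.2 h
      exact hne (Set.eq_univ_of_forall fun y => by rwa [Subsingleton.elim y x])
    simp [this]
  | succ d ih =>
    intro V _ _ _ T hd hT hne
    obtain _ | d := d
    · obtain ⟨v, hv0, hv⟩ := finrank_eq_one_iff'.1 hd
      have hbij : Function.Bijective (fun i : ZMod p => i • v) := by
        refine ⟨fun a b h => smul_left_injective _ hv0 h, fun x => hv x⟩
      have hc : Nat.card V = p := by
        rw [← Nat.card_eq_of_bijective _ hbij, Nat.card_zmod]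
      have hb := line_bound hr hT 0 v (by
        obtain ⟨w, hw⟩ := (Set.ne_univ_iff_exists_notMem T).1 hne
        obtain ⟨i, hi⟩ := hv w
        exact ⟨i, by simpa [hi] using hw⟩)
      have : T.ncard ≤ {i : ZMod p | 0 + i • v ∈ T}.ncard := by
        have : T ⊆ Set.image (fun i : ZMod p => i • v) {i : ZMod p | 0 + i • v ∈ T} := by
          intro x hx
          obtain ⟨i, hi⟩ := hv x
          exact ⟨i, by simpa [hi] using hx, hi⟩
        exact (Set.ncard_le_ncard this (Set.toFinite _)).trans (Set.ncard_image_le (Set.toFinite _))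
      rw [hc, mul_comm]
      exact Nat.mul_le_mul_right _ (this.trans hb)
    · -- two coordinates
      have hex : ∃ F : V →ₗ[ZMod p] (ZMod p × ZMod p), Function.Surjective F := by
        let b := Module.finBasisOfFinrankEq (ZMod p) V hd
        refine ⟨(b.coord 0).prod (b.coord 1), ?_⟩
        rintro ⟨x, y⟩
        refine ⟨x • b 0 + y • b 1, ?_⟩
        simp [Finsupp.single_apply]
      obtain ⟨F, hF⟩ := hex
      let T' : Set (ZMod p × ZMod p) := {u | ∀ x, F x = u → x ∈ T}
      have hT' : APClosed p T' := by
        intro a h h1 h2 h3 i x hx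
        obtain ⟨y, rfl⟩ := hF h
        have := hT (x - i • y) y (h1 _ (by simp [hx])) (h2 _ (by simp [hx])) (h3 _ (by simp [hx])) i
        simpa using this
      have hne' : T' ≠ Set.univ := by
        intro h
        apply hne
        refine Set.eq_univ_of_forall fun x => ?_
        have : F x ∈ T' := h ▸ Set.mem_univ _
        exact this x rfl
      obtain ⟨m, hm⟩ := plane_lemma hrp hr hT' hne'
      let f : V →ₗ[ZMod p] ZMod p := LinearMap.comp (LinearMap.snd (ZMod p) (ZMod p) (ZMod p) - m • LinearMap.fst (ZMod p) (ZMod p) (ZMod p)) F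
      have hf : ∀ x, f x = (F x).2 - m * (F x).1 := fun x => by simp [f]
      have hfs : Function.Surjective f := by
        intro c
        obtain ⟨x, hx⟩ := hF (0, c)
        exact ⟨x, by simp [hf, hx]⟩
      have hker : Module.finrank (ZMod p) (LinearMap.ker f) = d + 1 := by
        have := LinearMap.finrank_range_add_finrank_ker f
        rw [LinearMap.range_eq_top.2 hfs, finrank_top, Module.finrank_self, hd] at this
        omega
      have hcard : Nat.card V = p * Nat.card (LinearMap.ker f) := by
        rw [Module.natCard_eq_pow_finrank (K := ZMod p) (V := V),
          Module.natCard_eq_pow_finrank (K := ZMod p) (V := LinearMap.ker f), hd, hker, Nat.card_zmod]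
        ring
      have hfib : ∀ c : ZMod p, p * {x ∈ T | f x = c}.ncard ≤ r * Nat.card (LinearMap.ker f) := by
        intro c
        obtain ⟨x0, hx0⟩ := hfs c
        let Tc : Set (LinearMap.ker f) := {k | x0 + k ∈ T}
        have hTc : APClosed p Tc := by
          intro a h h1 h2 h3 i
          have := hT (x0 + a) h h1 (by simpa [Tc, add_assoc] using h2)
            (by simpa [Tc, add_assoc] using h3) i
          simpa [Tc, add_assoc] using this
        have hTcne : Tc ≠ Set.univ := by
          obtain ⟨x, hx⟩ := hm c
          intro h
          apply hx
          intro y hy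
          have hyk : y - x0 ∈ LinearMap.ker f := by
            rw [LinearMap.mem_ker, map_sub, hx0, hf, hy]; simp
          have : (⟨y - x0, hyk⟩ : LinearMap.ker f) ∈ Tc := h ▸ Set.mem_univ _
          simpa [Tc] using this
        have := ih (LinearMap.ker f) Tc hker hTc hTcne
        refine le_trans (Nat.mul_le_mul_left _ ?_) this
        have hsub : {x ∈ T | f x = c} ⊆ Set.image (fun k : LinearMap.ker f => x0 + (k : V)) Tc := by
          rintro x ⟨hx, hxc⟩
          exact ⟨⟨x - x0, by rw [LinearMap.mem_ker, map_sub, hx0, hxc, sub_self]⟩, by simpa [Tc] using hx, by simp⟩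
        exact (Set.ncard_le_ncard hsub (Set.toFinite _)).trans (Set.ncard_image_le (Set.toFinite _))
      have hTle : T.ncard ≤ ∑ c : ZMod p, {x ∈ T | f x = c}.ncard := by
        refine le_trans (Set.ncard_le_ncard ?_ (Set.toFinite _)) (Finset.set_ncard_biUnion_le Finset.univ _)
        intro x hx
        simp [hx]
      calc p * T.ncard ≤ p * ∑ c : ZMod p, {x ∈ T | f x = c}.ncard := Nat.mul_le_mul_left _ hTle
        _ = ∑ c : ZMod p, p * {x ∈ T | f x = c}.ncard := Finset.mul_sum _ _ _
        _ ≤ ∑ c : ZMod p, r * Nat.card (LinearMap.ker f) := Finset.sum_le_sum fun c _ => hfib c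
        _ = r * Nat.card V := by
          rw [Finset.sum_const, Finset.card_univ, ZMod.card, hcard]; simp; ring

theorem cube_key {G : Type*} [Group G] (t k : G) :
    (t * k) ^ 3 = t ^ 3 * ((t⁻¹ * t⁻¹ * k * t * t) * (t⁻¹ * k * t) * k) := by
  rw [pow_succ, pow_two (t * k)]; group

theorem three_ap {G : Type*} [Group G] {t h : G} (h0 : t ^ 3 = 1) (h1 : (t * h) ^ 3 = 1)
    (h2 : (t * h * h) ^ 3 = 1) (i : ℕ) : (t * h ^ i) ^ 3 = 1 := by
  have key : ∀ k : G, (t * k) ^ 3 = t ^ 3 * ((t⁻¹ * t⁻¹ * k * t * t) * (t⁻¹ * k * t) * k) := by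
    intro k; exact cube_key t k
  obtain ⟨u, hu⟩ : ∃ u, u = t⁻¹ * h * t := ⟨_, rfl⟩
  obtain ⟨v, hv⟩ : ∃ v, v = t⁻¹ * t⁻¹ * h * t * t := ⟨_, rfl⟩
  have hun : ∀ n : ℕ, t⁻¹ * h ^ n * t = u ^ n := by
    intro n; rw [hu]
    have := conj_pow (i := n) (a := t⁻¹) (b := h)
    simpa using this.symm
  have hvn : ∀ n : ℕ, t⁻¹ * t⁻¹ * h ^ n * t * t = v ^ n := by
    intro n; rw [hv]
    have := conj_pow (i := n) (a := t⁻¹ * t⁻¹) (b := h)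
    simpa [mul_assoc] using this.symm
  have k1 := key h
  rw [h1, h0, one_mul, ← hu, ← hv] at k1
  have k2 := key (h ^ 2)
  rw [hun, hvn, pow_two h, ← mul_assoc, h2, h0, one_mul] at k2
  have ev : v = h⁻¹ * u⁻¹ := by
    have : v * (u * h) = 1 := by rw [← mul_assoc]; exact k1.symm
    rw [eq_inv_of_mul_eq_one_left this]; group
  have hc : Commute u h := by
    have e1 : h⁻¹ * (u⁻¹ * h⁻¹ * u * h) * h = 1 := by
      rw [ev] at k2
      rw [k2, pow_two (h⁻¹ * u⁻¹)]; group
    have e2 : u⁻¹ * h⁻¹ * u * h = 1 := by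
      have : u⁻¹ * h⁻¹ * u * h = h * (h⁻¹ * (u⁻¹ * h⁻¹ * u * h) * h) * h⁻¹ := by group
      rw [this, e1]; group
    have : u * h = h * u * (u⁻¹ * h⁻¹ * u * h) := by group
    rw [e2, mul_one] at this
    exact this
  have k3 := key (h ^ i)
  rw [hun, hvn, h0, one_mul, ev] at k3
  rw [k3, mul_assoc, ← hc.mul_pow, ← mul_inv_rev, inv_pow, inv_mul_cancel]

/-- `A` is a maximal elementary abelian `p`-subgroup. -/
structure MaxEl {G : Type*} [Group G] (p : ℕ) (A : Subgroup G) : Prop where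
  comm : ∀ a ∈ A, ∀ b ∈ A, a * b = b * a
  exp : ∀ a ∈ A, a ^ p = 1
  max : ∀ g : G, g ^ p = 1 → (∀ a ∈ A, g * a = a * g) → g ∈ A

theorem T_bound {G : Type*} [Group G] [Fintype G] {p r : ℕ} [Fact p.Prime] (hrp : 2 * r < p)
    (hr : ∀ T : Finset (ZMod p), (∀ a h, a ∈ T → a + h ∈ T → a + h + h ∈ T → h = 0) → T.card ≤ r)
    {A : Subgroup G} (hA : MaxEl p A) (x : G) (hx : ¬ ∀ a ∈ A, (x * a) ^ 3 = 1) :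
    p * {a : A | (x * a) ^ 3 = 1}.ncard ≤ r * Nat.card A := by
  let _ : CommGroup A := { (inferInstance : Group A) with
    mul_comm := fun a b => Subtype.ext (hA.comm a a.2 b b.2) }
  let _ : Module (ZMod p) (Additive A) := AddCommGroup.zmodModule (n := p) (by
    intro a
    have : (Additive.toMul a) ^ p = 1 := Subtype.ext (hA.exp _ (Additive.toMul a).2)
    exact this)
  have := ap_main hrp hr _ (Additive A) {a : Additive A | (x * (Additive.toMul a : A)) ^ 3 = 1} rfl
    (by
      intro a h h0 h1 h2 i
      simp only [Set.mem_ofPred_eq] at h0 h1 h2 ⊢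
      have e : i • h = i.val • h := by
        conv_lhs => rw [← ZMod.natCast_zmod_val i]
        exact Nat.cast_smul_eq_nsmul _ _ _
      rw [e]
      have := three_ap (t := x * (Additive.toMul a : A)) (h := (Additive.toMul h : A)) h0
        (by simpa [mul_assoc] using h1) (by simpa [mul_assoc] using h2) i.val
      simpa [mul_assoc] using this)
    (by
      intro h
      apply hx
      intro a ha
      have : (Additive.ofMul (⟨a, ha⟩ : A)) ∈ {a : Additive A | (x * (Additive.toMul a : A)) ^ 3 = 1} := by
        rw [h]; trivial
      exact this)
  exact this

theorem F_norm_aux {G : Type*} [Group G] {A : Subgroup G}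
    (hc : ∀ a ∈ A, ∀ b ∈ A, a * b = b * a) {t : G}
    (k1 : ∀ a ∈ A, (t⁻¹ * t⁻¹ * a * t * t) * (t⁻¹ * a * t) * a = 1) :
    ∀ a ∈ A, ∀ b ∈ A, t⁻¹ * b * t * a = a * (t⁻¹ * b * t) := by
  intro a ha b hb
  obtain ⟨u, hu⟩ : ∃ u, u = t⁻¹ * a * t := ⟨_, rfl⟩
  obtain ⟨w, hw⟩ : ∃ w, w = t⁻¹ * b * t := ⟨_, rfl⟩
  have ea := k1 a ha
  have eb := k1 b hb
  have eba := k1 (b * a) (A.mul_mem hb ha)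
  have s1 : t⁻¹ * t⁻¹ * a * t * t = a⁻¹ * u⁻¹ := by
    rw [hu]
    rw [mul_assoc _ (t⁻¹ * a * t)] at ea
    rw [eq_inv_of_mul_eq_one_left ea]; group
  have s2 : t⁻¹ * t⁻¹ * b * t * t = b⁻¹ * w⁻¹ := by
    rw [hw]
    rw [mul_assoc _ (t⁻¹ * b * t)] at eb
    rw [eq_inv_of_mul_eq_one_left eb]; group
  have s3 : t⁻¹ * t⁻¹ * (b * a) * t * t
      = (t⁻¹ * t⁻¹ * b * t * t) * (t⁻¹ * t⁻¹ * a * t * t) := by group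
  have s4 : t⁻¹ * (b * a) * t = w * u := by rw [hu, hw]; group
  rw [s3, s4, s1, s2] at eba
  have huw : w * u = u * w := by
    rw [hu, hw]
    have : t⁻¹ * b * t * (t⁻¹ * a * t) = t⁻¹ * (b * a) * t := by group
    rw [this, hc b hb a ha]; group
  have hab := hc a ha b hb
  rw [← hw]
  have e1 : b⁻¹ * w⁻¹ * (a⁻¹ * u⁻¹) * (w * u) * (b * a) = b⁻¹ * (w⁻¹ * a⁻¹ * w * a) * b := by
    rw [huw, ← hab]; group
  rw [e1] at eba
  have e2 : w⁻¹ * a⁻¹ * w * a = 1 := by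
    have : w⁻¹ * a⁻¹ * w * a = b * (b⁻¹ * (w⁻¹ * a⁻¹ * w * a) * b) * b⁻¹ := by group
    rw [this, eba]; group
  have : w * a = a * w * (w⁻¹ * a⁻¹ * w * a) := by group
  rw [this, e2, mul_one]

theorem F_norm {G : Type*} [Group G] {p : ℕ} 
    {A : Subgroup G} (hA : MaxEl p A) {t : G} (ht : ∀ a ∈ A, (t * a) ^ 3 = 1) :
    ∀ a ∈ A, t⁻¹ * a * t ∈ A := by
  have h0 : t ^ 3 = 1 := by simpa using ht 1 A.one_mem
  have key : ∀ k : G, (t * k) ^ 3 = t ^ 3 * ((t⁻¹ * t⁻¹ * k * t * t) * (t⁻¹ * k * t) * k) := by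
    intro k; exact cube_key t k
  have k1 : ∀ a ∈ A, (t⁻¹ * t⁻¹ * a * t * t) * (t⁻¹ * a * t) * a = 1 := by
    intro a ha
    have := key a
    rw [ht a ha, h0, one_mul] at this
    exact this.symm
  intro a ha
  apply hA.max
  · have := conj_pow (i := p) (a := t⁻¹) (b := a)
    rw [inv_inv] at this
    rw [this, hA.exp a ha]; group
  · intro b hb
    have := F_norm_aux hA.comm k1 b hb a ha
    exact this

theorem C_bound {G : Type*} [Group G] [Fintype G] {p : ℕ} [hp : Fact p.Prime]
    {A : Subgroup G} [Fintype A] (hA : MaxEl p A) (x : G) (hx : ∀ a ∈ A, x⁻¹ * a * x = a) :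
    p * Fintype.card A + 1 ≤ ∑ a : A, orderOf (x * a) + p := by
  classical
  have hxc : ∀ a ∈ A, Commute x a := by
    intro a ha
    have := hx a ha
    have e : x * (x⁻¹ * a * x) = a * x := by group
    rw [this] at e
    exact e
  have hp1 := hp.out.one_lt
  let B : Finset A := Finset.univ.filter (fun a : A => ¬ p ∣ orderOf (x * a))
  have hB : B.card ≤ 1 := by
    rw [Finset.card_le_one]
    intro a ha b hb
    simp only [B, Finset.mem_filter, Finset.mem_univ, true_and] at ha hb
    have ca := (Nat.Prime.coprime_iff_not_dvd hp.out).2 ha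
    have cb := (Nat.Prime.coprime_iff_not_dvd hp.out).2 hb
    have cab := Nat.Coprime.mul_right ca cb
    set k := orderOf (x * a) with hk
    set l := orderOf (x * b) with hl
    have e1 : (x * (a : G)) ^ (k * l) = 1 := by rw [pow_mul, hk, pow_orderOf_eq_one, one_pow]
    have e2 : (x * (b : G)) ^ (k * l) = 1 := by
      rw [mul_comm, pow_mul, hl, pow_orderOf_eq_one, one_pow]
    rw [(hxc a a.2).mul_pow] at e1
    rw [(hxc b b.2).mul_pow] at e2
    have e3 : (a : G) ^ (k * l) = (b : G) ^ (k * l) := mul_left_cancel (e1.trans e2.symm)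
    have hab : Commute (a : G) (b : G) := hA.comm a a.2 b b.2
    have e4 : ((a : G) * (b : G)⁻¹) ^ (k * l) = 1 := by
      rw [hab.inv_right.mul_pow, e3, inv_pow, mul_inv_cancel]
    have e5 : ((a : G) * (b : G)⁻¹) ^ p = 1 := hA.exp _ (A.mul_mem a.2 (A.inv_mem b.2))
    have e6 : orderOf ((a : G) * (b : G)⁻¹) ∣ 1 := by
      have := Nat.dvd_gcd (orderOf_dvd_of_pow_eq_one e5) (orderOf_dvd_of_pow_eq_one e4)
      rwa [cab] at this
    have e7 : (a : G) * (b : G)⁻¹ = 1 := orderOf_eq_one_iff.1 (Nat.dvd_one.1 e6)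
    exact Subtype.ext (mul_inv_eq_one.1 e7)
  have hpt : ∀ a : A, p ≤ orderOf (x * a) + (if ¬ p ∣ orderOf (x * a) then (p - 1) else 0) := by
    intro a
    have h0 := orderOf_pos (x * (a : G))
    split_ifs with h
    · have := Nat.le_of_dvd h0 h
      omega
    · omega
  have hs := Finset.sum_le_sum (s := Finset.univ) (fun a _ => hpt a)
  rw [Finset.sum_add_distrib, ← Finset.sum_filter, Finset.sum_const, Finset.sum_const] at hs
  simp only [smul_eq_mul, Finset.card_univ] at hs
  have h2 : B.card * (p - 1) ≤ 1 * (p - 1) := Nat.mul_le_mul_right _ hB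
  have h3 : Fintype.card A * p = p * Fintype.card A := mul_comm _ _
  change _ ≤ _ + B.card * (p - 1) at hs
  omega

theorem mem_C_shift {G : Type*} [Group G] {A : Subgroup G} 
    (hc : ∀ a ∈ A, ∀ b ∈ A, a * b = b * a) {x c : G} (hcA : c ∈ A)
    (hx : ∀ a ∈ A, (x * c)⁻¹ * a * (x * c) = a) : ∀ a ∈ A, x⁻¹ * a * x = a := by
  intro a ha
  have e := hx a ha
  have : x⁻¹ * a * x = c * ((x * c)⁻¹ * a * (x * c)) * c⁻¹ := by group
  rw [this, e, hc c hcA a ha]; group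

theorem mem_I_shift {G : Type*} [Group G] {A : Subgroup G} 
    (hc : ∀ a ∈ A, ∀ b ∈ A, a * b = b * a) {x c : G} (hcA : c ∈ A)
    (hx : ∀ a ∈ A, (x * c)⁻¹ * a * (x * c) = a⁻¹) : ∀ a ∈ A, x⁻¹ * a * x = a⁻¹ := by
  intro a ha
  have e := hx a ha
  have : x⁻¹ * a * x = c * ((x * c)⁻¹ * a * (x * c)) * c⁻¹ := by group
  rw [this, e, hc c hcA a⁻¹ (A.inv_mem ha)]; group

theorem ne_one_of_not_C {G : Type*} [Group G] {A : Subgroup G} 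
    (hc : ∀ a ∈ A, ∀ b ∈ A, a * b = b * a) {x : G}
    (hx : ¬ ∀ a ∈ A, x⁻¹ * a * x = a) {c : G} (hcA : c ∈ A) : x * c ≠ 1 := by
  intro h
  apply hx
  apply mem_C_shift hc hcA
  intro a _
  rw [h]; group

theorem I_bound {G : Type*} [Group G] [Fintype G] {p : ℕ}
    {A : Subgroup G} [Fintype A] (hA : MaxEl p A) (x : G) (hx : ¬ ∀ a ∈ A, x⁻¹ * a * x = a) :
    2 * Fintype.card A ≤ ∑ a : A, orderOf (x * a) := by
  have hs := Finset.sum_le_sum (s := (Finset.univ : Finset A)) (f := fun _ => 2)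
    (g := fun a : A => orderOf (x * a)) (fun a _ => by
      have h0 := orderOf_pos (x * (a : G))
      have h1 : orderOf (x * (a : G)) ≠ 1 :=
        fun h => ne_one_of_not_C hA.comm hx a.2 (orderOf_eq_one_iff.1 h)
      omega)
  rw [Finset.sum_const, Finset.card_univ] at hs
  simp only [smul_eq_mul] at hs
  omega

theorem F_bound {G : Type*} [Group G] [Fintype G] {p : ℕ}
    {A : Subgroup G} [Fintype A] (hA : MaxEl p A) (x : G) (hx : ¬ ∀ a ∈ A, x⁻¹ * a * x = a)
    (hF : ∀ a ∈ A, (x * a) ^ 3 = 1) :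
    3 * Fintype.card A ≤ ∑ a : A, orderOf (x * a) := by
  have hs := Finset.sum_le_sum (s := (Finset.univ : Finset A)) (f := fun _ => 3)
    (g := fun a : A => orderOf (x * a)) (fun a _ => by
      have : orderOf (x * (a : G)) = 3 :=
        orderOf_eq_prime (hF a a.2) (ne_one_of_not_C hA.comm hx a.2)
      exact this.ge)
  rw [Finset.sum_const, Finset.card_univ] at hs
  simp only [smul_eq_mul] at hs
  omega

theorem order_cases {G : Type*} [Group G] [Fintype G] (y : G) (h1 : y ≠ 1) (h2 : y ^ 2 ≠ 1)
    (h3 : y ^ 3 ≠ 1) : 4 ≤ orderOf y := by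
  by_contra h
  have h0 := orderOf_pos y
  have := pow_orderOf_eq_one y
  have h4 : orderOf y < 4 := by omega
  interval_cases hh : orderOf y
  · simp at this; exact h1 this
  · exact h2 this
  · exact h3 this

theorem T_card {G : Type*} [Group G] {A : Subgroup G} [Fintype A] (x : G)
    [DecidablePred fun a : A => (x * (a : G)) ^ 3 = 1] :
    {a : A | (x * a) ^ 3 = 1}.ncard =
      (Finset.univ.filter fun a : A => (x * (a : G)) ^ 3 = 1).card := by
  rw [← Set.ncard_coe_finset]; congr 1; ext a; simp

/-- the bound when no element of the coset is an involution -/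
theorem gen_bound1 {G : Type*} [Group G] [Fintype G] {p r : ℕ} [Fact p.Prime] (hrp : 2 * r < p)
    (hr : ∀ T : Finset (ZMod p), (∀ a h, a ∈ T → a + h ∈ T → a + h + h ∈ T → h = 0) → T.card ≤ r)
    {A : Subgroup G} [Fintype A] (hA : MaxEl p A) (x : G)
    (hC : ¬ ∀ a ∈ A, x⁻¹ * a * x = a)
    (hF : ¬ ∀ a ∈ A, (x * a) ^ 3 = 1) (h2 : ∀ a ∈ A, (x * a) ^ 2 ≠ 1) :
    4 * p * Fintype.card A ≤ p * ∑ a : A, orderOf (x * a) + r * Fintype.card A := by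
  classical
  have hT := T_bound hrp hr hA x hF
  rw [T_card, Nat.card_eq_fintype_card] at hT
  have hpt : ∀ a : A, 4 ≤ orderOf (x * a) + (if (x * (a : G)) ^ 3 = 1 then 1 else 0) := by
    intro a
    have hne := ne_one_of_not_C hA.comm hC a.2
    split_ifs with h
    · have : orderOf (x * (a : G)) = 3 := orderOf_eq_prime h hne
      omega
    · have := order_cases _ hne (h2 a a.2) h
      omega
  have hs := Finset.sum_le_sum (s := Finset.univ) (fun a _ => hpt a)
  rw [Finset.sum_add_distrib, Finset.sum_boole, Finset.sum_const] at hs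
  simp only [smul_eq_mul, Finset.card_univ, Nat.cast_id] at hs
  nlinarith

theorem S_bound {G : Type*} [Group G] [Fintype G] {p : ℕ} [hp : Fact p.Prime]
    {A : Subgroup G} (hA : MaxEl p A) (x : G)
    (hI : ¬ ∀ a ∈ A, x⁻¹ * a * x = a⁻¹) :
    p * {a : A | x⁻¹ * a * x = (a : G)⁻¹}.ncard ≤ Nat.card A := by
  let S : Subgroup A :=
    { carrier := {a : A | x⁻¹ * a * x = (a : G)⁻¹}
      mul_mem' := by
        intro a b ha hb
        simp only [Set.mem_ofPred_eq] at ha hb ⊢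
        have : x⁻¹ * ((a * b : A) : G) * x = (x⁻¹ * a * x) * (x⁻¹ * b * x) := by
          push_cast; group
        rw [this, ha, hb, ← mul_inv_rev, hA.comm b b.2 a a.2]; rfl
      one_mem' := by simp
      inv_mem' := by
        intro a ha
        simp only [Set.mem_ofPred_eq] at ha ⊢
        have : x⁻¹ * ((a⁻¹ : A) : G) * x = (x⁻¹ * a * x)⁻¹ := by
          push_cast; group
        rw [this, ha]; rfl }
  have hpg : IsPGroup p A := fun a => ⟨1, by
    rw [pow_one]; exact Subtype.ext (hA.exp a a.2)⟩
  obtain ⟨n, hn⟩ := hpg.index S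
  have hS : S ≠ ⊤ := by
    intro h
    apply hI
    intro a ha
    have : (⟨a, ha⟩ : A) ∈ S := by rw [h]; trivial
    exact this
  have hn0 : n ≠ 0 := by
    rintro rfl
    exact hS (Subgroup.index_eq_one.1 (by simpa using hn))
  have hpi : p ≤ S.index := by
    rw [hn]; exact Nat.le_self_pow hn0 p
  have hc := S.card_mul_index
  have : {a : A | x⁻¹ * a * x = (a : G)⁻¹}.ncard = Nat.card S := rfl
  rw [this, ← hc, mul_comm]
  exact Nat.mul_le_mul_left _ hpi

theorem gen_bound2 {G : Type*} [Group G] [Fintype G] {p : ℕ} [hp : Fact p.Prime] (hp5 : 5 ≤ p)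
    {A : Subgroup G} [Fintype A] (hA : MaxEl p A) (x : G)
    (hC : ¬ ∀ a ∈ A, x⁻¹ * a * x = a)
    (hI : ¬ ∀ a ∈ A, x⁻¹ * a * x = a⁻¹) (hx2 : x ^ 2 = 1) :
    4 * p * Fintype.card A ≤ p * ∑ a : A, orderOf (x * a) + 2 * Fintype.card A := by
  classical
  have hS := S_bound hA x hI
  have hxi : x⁻¹ = x := by
    rw [pow_two] at hx2; exact inv_eq_of_mul_eq_one_left hx2
  have hSiff : ∀ a : G, (x * a) ^ 2 = 1 ↔ x⁻¹ * a * x = a⁻¹ := by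
    intro a
    rw [hxi, pow_two, ← mul_assoc, mul_eq_one_iff_eq_inv]
  have hScard : {a : A | x⁻¹ * a * x = (a : G)⁻¹}.ncard =
      (Finset.univ.filter fun a : A => (x * (a : G)) ^ 2 = 1).card := by
    rw [← Set.ncard_coe_finset]; congr 1; ext a
    simp [hSiff]
  rw [hScard, Nat.card_eq_fintype_card] at hS
  let T : Finset A := Finset.univ.filter fun a : A => (x * (a : G)) ^ 3 = 1
  let T2 : Finset A := T.image (fun a => a ^ 2)
  have hT2 : T2.card = T.card := by
    apply Finset.card_image_of_injective
    intro a b hab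
    have e1 : (a : G) ^ 2 = (b : G) ^ 2 := by
      have := congrArg (fun z : A => (z : G)) hab
      simpa using this
    have hco : Nat.Coprime 2 p := by
      rw [Nat.coprime_primes Nat.prime_two hp.out]; omega
    have hcomm : Commute (a : G) (b : G) := hA.comm a a.2 b b.2
    have e4 : ((a : G) * (b : G)⁻¹) ^ 2 = 1 := by
      rw [hcomm.inv_right.mul_pow, e1, inv_pow, mul_inv_cancel]
    have e5 : ((a : G) * (b : G)⁻¹) ^ p = 1 := hA.exp _ (A.mul_mem a.2 (A.inv_mem b.2))
    have e6 : orderOf ((a : G) * (b : G)⁻¹) ∣ 1 := by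
      have := Nat.dvd_gcd (orderOf_dvd_of_pow_eq_one e4) (orderOf_dvd_of_pow_eq_one e5)
      rwa [hco] at this
    have e7 : (a : G) * (b : G)⁻¹ = 1 := orderOf_eq_one_iff.1 (Nat.dvd_one.1 e6)
    exact Subtype.ext (mul_inv_eq_one.1 e7)
  have hxT : ∀ b ∈ T2, 5 ≤ orderOf (x * (b : G)) := by
    intro b hb
    obtain ⟨a, ha, rfl⟩ := Finset.mem_image.1 hb
    simp only [T, Finset.mem_filter, Finset.mem_univ, true_and] at ha
    have ha1 : (a : G) ≠ 1 := by
      intro h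
      rw [h, mul_one, pow_succ, hx2, one_mul] at ha
      exact ne_one_of_not_C hA.comm hC A.one_mem (by rw [ha, mul_one])
    have hoa : orderOf (a : G) = p := orderOf_eq_prime (hA.exp a a.2) ha1
    have e : x * ((a ^ 2 : A) : G) = (x * a)⁻¹ * (a : G)⁻¹ * ((x * a)⁻¹)⁻¹ := by
      have ei : (x * (a : G))⁻¹ = x * a * (x * a) := by
        rw [pow_succ, pow_two] at ha
        exact inv_eq_of_mul_eq_one_left ha
      have : (x * (a : G))⁻¹ * (a : G)⁻¹ * ((x * a)⁻¹)⁻¹ = x * a * (x * a) * (a : G)⁻¹ * (x * a) := by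
        rw [inv_inv, ei]
      rw [this]
      have : x * (a : G) * (x * a) * (a : G)⁻¹ * (x * a) = x * a * (x ^ 2 * a) := by
        rw [pow_two]; group
      rw [this, hx2]; push_cast; rw [pow_two]; group
    have : orderOf (x * ((a ^ 2 : A) : G)) = p := by
      rw [e, ← hoa, ← MulAut.conj_apply, MulEquiv.orderOf_eq, orderOf_inv]
    omega
  have hpt : ∀ a : A, 4 + (if a ∈ T2 then 1 else 0) ≤ orderOf (x * (a : G)) +
      (if (x * (a : G)) ^ 2 = 1 then 2 else 0) + (if a ∈ T then 1 else 0) := by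
    intro a
    by_cases ha : a ∈ T2
    · have := hxT a ha
      rw [if_pos ha]; omega
    · rw [if_neg ha]
      have hne := ne_one_of_not_C hA.comm hC a.2
      by_cases h2 : (x * (a : G)) ^ 2 = 1
      · have : orderOf (x * (a : G)) = 2 := orderOf_eq_prime h2 hne
        rw [if_pos h2]; omega
      · rw [if_neg h2]
        by_cases h3 : (x * (a : G)) ^ 3 = 1
        · have : orderOf (x * (a : G)) = 3 := orderOf_eq_prime h3 hne
          have haT : a ∈ T := by simp [T, h3]
          rw [if_pos haT]; omega
        · have := order_cases _ hne h2 h3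
          omega
  have hs := Finset.sum_le_sum (s := Finset.univ) (fun a _ => hpt a)
  rw [Finset.sum_add_distrib, Finset.sum_add_distrib, Finset.sum_add_distrib,
    Finset.sum_boole, Finset.sum_boole, Finset.sum_const, ← Finset.sum_filter,
    Finset.sum_const] at hs
  simp only [smul_eq_mul, Finset.card_univ, Nat.cast_id, Finset.filter_univ_mem] at hs
  rw [hT2] at hs
  nlinarith

theorem gen_bound {G : Type*} [Group G] [Fintype G] {p r : ℕ} [hp : Fact p.Prime] (hp5 : 5 ≤ p)
    (hr2 : 2 ≤ r) (hrp : 2 * r < p)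
    (hr : ∀ T : Finset (ZMod p), (∀ a h, a ∈ T → a + h ∈ T → a + h + h ∈ T → h = 0) → T.card ≤ r)
    {A : Subgroup G} [Fintype A] (hA : MaxEl p A) (x : G)
    (hC : ¬ ∀ a ∈ A, x⁻¹ * a * x = a)
    (hI : ¬ ∀ a ∈ A, x⁻¹ * a * x = a⁻¹)
    (hF : ¬ ∀ a ∈ A, (x * a) ^ 3 = 1) :
    4 * p * Fintype.card A ≤ p * ∑ a : A, orderOf (x * a) + r * Fintype.card A := by
  by_cases h2 : ∀ a ∈ A, (x * a) ^ 2 ≠ 1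
  · exact gen_bound1 hrp hr hA x hC hF h2
  · push Not at h2
    obtain ⟨c, hc, hc2⟩ := h2
    have := gen_bound2 hp5 hA (x * c) (fun h => hC (mem_C_shift hA.comm hc h))
      (fun h => hI (mem_I_shift hA.comm hc h)) hc2
    have e : ∑ a : A, orderOf (x * c * a) = ∑ a : A, orderOf (x * a) := by
      rw [← Equiv.sum_comp (Equiv.mulLeft (⟨c, hc⟩ : A)) (fun a : A => orderOf (x * (a : G)))]
      simp [mul_assoc]
    rw [e] at this
    have := Nat.mul_le_mul_right (Fintype.card A) hr2
    omega

open Classical in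
/-- elements centralizing `A` -/
noncomputable def setC {G : Type*} [Group G] [Fintype G] (A : Subgroup G) : Finset G :=
  Finset.univ.filter fun x => ∀ a ∈ A, x⁻¹ * a * x = a

open Classical in
/-- elements inverting but not centralizing `A` -/
noncomputable def setI {G : Type*} [Group G] [Fintype G] (A : Subgroup G) : Finset G :=
  Finset.univ.filter fun x => (∀ a ∈ A, x⁻¹ * a * x = a⁻¹) ∧ ¬ ∀ a ∈ A, x⁻¹ * a * x = a

open Classical in
/-- elements `x` outside the previous two sets with `x A` consisting of cube roots of one -/
noncomputable def setF {G : Type*} [Group G] [Fintype G] (A : Subgroup G) : Finset G :=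
  Finset.univ.filter fun x => (∀ a ∈ A, (x * a) ^ 3 = 1) ∧ (¬ ∀ a ∈ A, x⁻¹ * a * x = a) ∧
    ¬ ∀ a ∈ A, x⁻¹ * a * x = a⁻¹

theorem main_ineq {G : Type*} [Group G] [Fintype G] {p r : ℕ} [hp : Fact p.Prime] (hp5 : 5 ≤ p)
    (hr2 : 2 ≤ r) (hrp : 2 * r < p)
    (hr : ∀ T : Finset (ZMod p), (∀ a h, a ∈ T → a + h ∈ T → a + h + h ∈ T → h = 0) → T.card ≤ r)
    {A : Subgroup G} (hA : MaxEl p A) (hA1 : A ≠ ⊥) :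
    (4 * p - r : ℤ) * Fintype.card G + (p * p - 5 * p + 1 + r) * (setC A).card
      - (2 * p - r) * (setI A).card - (p - r) * (setF A).card ≤ p * ∑ x : G, (orderOf x : ℤ) := by
  classical
  obtain ⟨α, hα⟩ : ∃ α : ℤ, α = ((Fintype.card A : ℕ) : ℤ) := ⟨_, rfl⟩
  have hαp : (p : ℤ) ≤ α := by
    have hpg : IsPGroup p A := fun a => ⟨1, by
      rw [pow_one]; exact Subtype.ext (hA.exp a a.2)⟩
    obtain ⟨n, hn⟩ := IsPGroup.iff_card.1 hpg
    have hn0 : n ≠ 0 := by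
      rintro rfl
      exact hA1 (Subgroup.card_eq_one.1 (by simpa using hn))
    rw [hα, ← Nat.card_eq_fintype_card, hn]
    exact_mod_cast Nat.le_self_pow hn0 p
  have hp0 : (5 : ℤ) ≤ p := by exact_mod_cast hp5
  have hα0 : 0 < α := by omega
  have hsum : ∑ x : G, ∑ a : A, (orderOf (x * (a : G)) : ℤ) = α * ∑ x : G, (orderOf x : ℤ) := by
    rw [Finset.sum_comm]
    have : ∀ a : A, ∑ x : G, (orderOf (x * (a : G)) : ℤ) = ∑ x : G, (orderOf x : ℤ) := fun a =>
      Equiv.sum_comp (Equiv.mulRight (a : G)) (fun x : G => (orderOf x : ℤ))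
    rw [Finset.sum_congr rfl (fun a _ => this a), Finset.sum_const, Finset.card_univ]
    simp [hα]
  have hpt : ∀ x : G, α * ((4 * p - r : ℤ) + (if x ∈ setC A then (p * p - 5 * p + 1 + r : ℤ) else 0)
      - (if x ∈ setI A then (2 * p - r : ℤ) else 0) - (if x ∈ setF A then (p - r : ℤ) else 0)) ≤
      p * ∑ a : A, (orderOf (x * (a : G)) : ℤ) := by
    intro x
    by_cases hC : ∀ a ∈ A, x⁻¹ * a * x = a
    · have b := C_bound hA x hC
      have h1 : x ∈ setC A := by simp only [setC, Finset.mem_filter, Finset.mem_univ, true_and]; exact hC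
      have h2 : x ∉ setI A := by
        simp only [setI, Finset.mem_filter, Finset.mem_univ, true_and]; exact fun h => h.2 hC
      have h3 : x ∉ setF A := by
        simp only [setF, Finset.mem_filter, Finset.mem_univ, true_and]; exact fun h => h.2.1 hC
      rw [if_pos h1, if_neg h2, if_neg h3]
      zify at b
      nlinarith [mul_nonneg (sub_nonneg.2 hαp) (by linarith : (0 : ℤ) ≤ p - 1),
        mul_le_mul_of_nonneg_left b (by linarith : (0 : ℤ) ≤ p)]
    · have h1 : x ∉ setC A := by simp only [setC, Finset.mem_filter, Finset.mem_univ, true_and]; exact hC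
      by_cases hI : ∀ a ∈ A, x⁻¹ * a * x = a⁻¹
      · have b := I_bound hA x hC
        have h2 : x ∈ setI A := by
          simp only [setI, Finset.mem_filter, Finset.mem_univ, true_and]; exact ⟨hI, hC⟩
        have h3 : x ∉ setF A := by
          simp only [setF, Finset.mem_filter, Finset.mem_univ, true_and]; exact fun h => h.2.2 hI
        rw [if_neg h1, if_pos h2, if_neg h3]
        zify at b
        nlinarith [mul_le_mul_of_nonneg_left b (by linarith : (0 : ℤ) ≤ p)]
      · have h2 : x ∉ setI A := by
          simp only [setI, Finset.mem_filter, Finset.mem_univ, true_and]; exact fun h => hI h.1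
        by_cases hF : ∀ a ∈ A, (x * a) ^ 3 = 1
        · have b := F_bound hA x hC hF
          have h3 : x ∈ setF A := by
            simp only [setF, Finset.mem_filter, Finset.mem_univ, true_and]; exact ⟨hF, hC, hI⟩
          rw [if_neg h1, if_neg h2, if_pos h3]
          zify at b
          nlinarith [mul_le_mul_of_nonneg_left b (by linarith : (0 : ℤ) ≤ p)]
        · have b := gen_bound hp5 hr2 hrp hr hA x hC hI hF
          have h3 : x ∉ setF A := by
            simp only [setF, Finset.mem_filter, Finset.mem_univ, true_and]; exact fun h => hF h.1
          rw [if_neg h1, if_neg h2, if_neg h3]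
          zify at b
          rw [← hα] at b
          linarith
  have hs := Finset.sum_le_sum (s := Finset.univ) (fun x _ => hpt x)
  rw [← Finset.mul_sum, ← Finset.mul_sum, hsum, Finset.sum_sub_distrib, Finset.sum_sub_distrib,
    Finset.sum_add_distrib, ← Finset.sum_filter, ← Finset.sum_filter, ← Finset.sum_filter,
    Finset.sum_const, Finset.sum_const, Finset.sum_const, Finset.sum_const] at hs
  simp only [Finset.filter_univ_mem, Finset.card_univ, nsmul_eq_mul] at hs
  have : α * ((4 * p - r : ℤ) * Fintype.card G + (p * p - 5 * p + 1 + r) * (setC A).card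
      - (2 * p - r) * (setI A).card - (p - r) * (setF A).card) ≤
      α * (p * ∑ x : G, (orderOf x : ℤ)) := by linarith
  exact le_of_mul_le_mul_left this hα0

open Classical in
theorem fiber_card {G : Type*} [Group G] [Fintype G] (A : Subgroup G) (φ : G → G) :
    (Finset.univ.filter fun x : G => ∀ a ∈ A, x⁻¹ * a * x = φ a).card ≤ (setC A).card := by
  by_cases h : ∃ s : G, ∀ a ∈ A, s⁻¹ * a * s = φ a
  · obtain ⟨s, hs⟩ := h
    apply Finset.card_le_card_of_injOn (fun x => x * s⁻¹)
    · intro x hx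
      simp only [Finset.coe_filter, Finset.mem_univ, true_and, Set.mem_ofPred_eq, setC] at hx ⊢
      intro a ha
      have : (x * s⁻¹)⁻¹ * a * (x * s⁻¹) = s * (x⁻¹ * a * x) * s⁻¹ := by group
      rw [this, hx a ha, ← hs a ha]; group
    · intro x _ y _ hxy
      exact mul_right_cancel hxy
  · push Not at h
    rw [Finset.card_eq_zero.2]
    · exact Nat.zero_le _
    · apply Finset.filter_eq_empty_iff.2
      intro x _ hx
      obtain ⟨a, ha, hne⟩ := h x
      exact hne (hx a ha)

theorem setI_card_le {G : Type*} [Group G] [Fintype G] (A : Subgroup G) :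
    (setI A).card ≤ (setC A).card := by
  classical
  refine le_trans (Finset.card_le_card ?_) (fiber_card A (fun a => a⁻¹))
  intro x hx
  simp only [setI, Finset.mem_filter, Finset.mem_univ, true_and] at hx ⊢
  exact hx.1

theorem mem_normalizer_of {G : Type*} [Group G] [Finite G] {A : Subgroup G} {x : G}
    (h : ∀ a ∈ A, x⁻¹ * a * x ∈ A) : x ∈ Subgroup.normalizer (A : Set G) := by
  have : x⁻¹ ∈ Subgroup.normalizer (A : Set G) := by
    apply Subgroup.mem_normalizer_fintype
    intro n hn
    rw [inv_inv]; exact h n hn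
  simpa using (Subgroup.normalizer (A : Set G)).inv_mem this

theorem sets_card_le {G : Type*} [Group G] [Fintype G] {p : ℕ} {A : Subgroup G} (hA : MaxEl p A) :
    (setC A).card + (setI A).card + (setF A).card ≤ Nat.card (Subgroup.normalizer (A : Set G)) := by
  classical
  have h1 : Disjoint (setC A) (setI A) := by
    rw [Finset.disjoint_left]
    intro x hx hy
    simp only [setC, setI, Finset.mem_filter, Finset.mem_univ, true_and] at hx hy
    exact hy.2 hx
  have h2 : Disjoint (setC A ∪ setI A) (setF A) := by
    rw [Finset.disjoint_left]
    intro x hx hy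
    simp only [setC, setI, setF, Finset.mem_union, Finset.mem_filter, Finset.mem_univ, true_and] at hx hy
    rcases hx with hx | hx
    · exact hy.2.1 hx
    · exact hy.2.2 hx.1
  rw [← Finset.card_union_of_disjoint h1, ← Finset.card_union_of_disjoint h2,
    ← Set.ncard_coe_finset]
  change _ ≤ ((Subgroup.normalizer (A : Set G) : Subgroup G) : Set G).ncard
  apply Set.ncard_le_ncard _ (Set.toFinite _)
  intro x hx
  apply mem_normalizer_of
  simp only [setC, setI, setF, Finset.coe_union, Finset.coe_filter, Finset.mem_univ, true_and, Set.mem_union, Set.mem_ofPred_eq] at hx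
  intro a ha
  rcases hx with (hx | hx) | hx
  · rw [hx a ha]; exact ha
  · rw [hx.1 a ha]; exact A.inv_mem ha
  · exact F_norm hA hx.1 a ha

theorem exists_maxEl {G : Type*} [Group G] [Fintype G] {p : ℕ} [hp : Fact p.Prime]
    (hd : p ∣ Fintype.card G) : ∃ A : Subgroup G, MaxEl p A ∧ A ≠ ⊥ := by
  classical
  obtain ⟨g, hg⟩ := exists_prime_orderOf_dvd_card p hd
  let P : Subgroup G → Prop := fun A => (∀ a ∈ A, ∀ b ∈ A, a * b = b * a) ∧ (∀ a ∈ A, a ^ p = 1)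
  have h0 : P (Subgroup.zpowers g) := by
    constructor
    · rintro a ⟨i, rfl⟩ b ⟨j, rfl⟩
      exact (Commute.refl g).zpow_zpow i j
    · rintro a ⟨i, rfl⟩
      change (g ^ i) ^ p = 1
      rw [← zpow_natCast, ← zpow_mul, mul_comm, zpow_mul, zpow_natCast, ← hg, pow_orderOf_eq_one,
        one_zpow]
  obtain ⟨A, hle, hA⟩ := (Set.toFinite {A : Subgroup G | P A}).exists_le_maximal h0
  refine ⟨A, ⟨hA.prop.1, hA.prop.2, ?_⟩, ?_⟩
  · intro x hx hxA
    let B : Subgroup G := Subgroup.closure ((A : Set G) ∪ {x})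
    have hcomm : ∀ u ∈ (A : Set G) ∪ {x}, ∀ v ∈ (A : Set G) ∪ {x}, u * v = v * u := by
      rintro u (hu | hu) v (hv | hv)
      · exact hA.prop.1 u hu v hv
      · rw [Set.mem_singleton_iff.1 hv]; exact (hxA u hu).symm
      · rw [Set.mem_singleton_iff.1 hu]; exact (hxA v hv)
      · rw [Set.mem_singleton_iff.1 hu, Set.mem_singleton_iff.1 hv]
    have hBc : ∀ a ∈ B, ∀ b ∈ B, a * b = b * a := by
      intro a ha b hb
      have := (Subgroup.isMulCommutative_closure hcomm).is_comm.comm (⟨a, ha⟩ : B) ⟨b, hb⟩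
      exact congrArg Subtype.val this
    have hB : P B := by
      refine ⟨hBc, ?_⟩
      intro a ha
      induction ha using Subgroup.closure_induction with
      | mem y hy =>
        rcases hy with hy | hy
        · exact hA.prop.2 y hy
        · rw [Set.mem_singleton_iff.1 hy]; exact hx
      | one => exact one_pow _
      | mul y z hy hz h1 h2 =>
        have : Commute y z := hBc y hy z hz
        rw [this.mul_pow, h1, h2, one_mul]
      | inv y hy h1 => rw [inv_pow, h1, inv_one]
    have hAB : A ≤ B := fun a ha => Subgroup.subset_closure (Or.inl ha)
    exact hA.le_of_ge hB hAB (Subgroup.subset_closure (Or.inr rfl))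
  · rintro rfl
    have : g ∈ (⊥ : Subgroup G) := hle (Subgroup.mem_zpowers g)
    rw [Subgroup.mem_bot] at this
    rw [this, orderOf_one] at hg
    exact hp.out.one_lt.ne hg

theorem faithful_of_ne_top {G : Type*} [Group G] (hs : IsSimpleGroup G) {N : Subgroup G}
    (hN : N ≠ ⊤) (g : G) (hg : ∀ q : G ⧸ N, g • q = q) : g = 1 := by
  have hk : g ∈ N.normalCore := by
    rw [Subgroup.normalCore_eq_ker, MonoidHom.mem_ker]
    ext q; exact hg q
  rcases hs.eq_bot_or_eq_top_of_normal N.normalCore inferInstance with h | h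
  · rw [h] at hk; exact Subgroup.mem_bot.1 hk
  · exact absurd (top_le_iff.1 (h ▸ N.normalCore_le)) hN

theorem perm_inj {G : Type*} [Group G] (hs : IsSimpleGroup G) {N : Subgroup G}
    (hN : N ≠ ⊤) : Function.Injective (MulAction.toPermHom G (G ⧸ N)) := by
  rw [injective_iff_map_eq_one]
  intro g hg
  apply faithful_of_ne_top hs hN
  intro q
  exact congrArg (fun e : Equiv.Perm (G ⧸ N) => e q) hg

theorem card_dvd_factorial {G : Type*} [Group G] [Fintype G] (hs : IsSimpleGroup G) {N : Subgroup G}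
    (hN : N ≠ ⊤) : Fintype.card G ∣ (N.index).factorial := by
  have := Subgroup.card_dvd_of_injective _ (perm_inj hs hN)
  rwa [Nat.card_perm, Nat.card_eq_fintype_card] at this

theorem norm_ne_top {G : Type*} [Group G] [Fintype G] (hs : IsSimpleGroup G)
    (hna : ¬ ∀ a b : G, a * b = b * a) {p : ℕ} {A : Subgroup G} (hA : MaxEl p A) (hA1 : A ≠ ⊥) :
    Subgroup.normalizer (A : Set G) ≠ ⊤ := by
  intro h
  have hn : A.Normal := Subgroup.normalizer_eq_top_iff.1 h
  rcases hs.eq_bot_or_eq_top_of_normal A hn with h | h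
  · exact hA1 h
  · apply hna
    intro a b
    exact hA.comm a (by rw [h]; trivial) b (by rw [h]; trivial)

theorem quot_prime {Q : Type*} [Group Q] (K : Subgroup Q) [K.Normal] {p : ℕ}
    [hp : Fact p.Prime] (hk : K.index = p) (x y : Q) : x * y * (y * x)⁻¹ ∈ K ∧ x ^ p ∈ K := by
  have hcyc : IsCyclic (Q ⧸ K) := isCyclic_of_prime_card (p := p) hk
  constructor
  · rw [← QuotientGroup.eq_one_iff]
    have hc : ∀ u v : Q ⧸ K, u * v = v * u := fun u v => IsCyclic.commGroup.mul_comm u v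
    have h1 : ((x * y * (y * x)⁻¹ : Q) : Q ⧸ K) =
        (x : Q ⧸ K) * y * ((y : Q ⧸ K) * (x : Q ⧸ K))⁻¹ := rfl
    rw [h1, hc (x : Q ⧸ K) y, mul_inv_cancel]
  · rw [← hk]
    exact K.pow_index_mem x

theorem nu_lemma {G : Type*} [Group G] [Fintype G] (hs : IsSimpleGroup G)
    (hna : ¬ ∀ a b : G, a * b = b * a) {p : ℕ} [hp : Fact p.Prime] {A : Subgroup G}
    (hA : MaxEl p A) (hA1 : A ≠ ⊥) (hlt : (Subgroup.normalizer (A : Set G)).index < p ^ 2) :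
    (Subgroup.normalizer (A : Set G)).index ≡ 1 [MOD p] := by
  classical
  have hN := norm_ne_top hs hna hA hA1
  obtain ⟨N, hNdef⟩ : ∃ N, N = Subgroup.normalizer (A : Set G) := ⟨_, rfl⟩
  rw [← hNdef] at hN hlt ⊢
  have hpg : IsPGroup p A := fun a => ⟨1, by
    rw [pow_one]; exact Subtype.ext (hA.exp a a.2)⟩
  obtain ⟨P, hAP⟩ := hpg.exists_le_sylow
  have hP1 : Nat.card P ≠ 1 := by
    intro h
    have := Subgroup.card_eq_one.1 h
    apply hA1
    rw [eq_bot_iff, ← this]; exact hAP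
  obtain ⟨m, hm⟩ := IsPGroup.iff_card.1 P.isPGroup'
  have hm0 : m ≠ 0 := by rintro rfl; exact hP1 (by simpa using hm)
  have key : ∀ q : G ⧸ N, ∀ x y : P, x * y * (y * x)⁻¹ ∈ MulAction.stabilizer P q ∧
      x ^ p ∈ MulAction.stabilizer P q := by
    intro q x y
    obtain ⟨K, hK⟩ : ∃ K, K = MulAction.stabilizer P q := ⟨_, rfl⟩
    rw [← hK]
    have hi : K.index < p ^ 2 := by
      rw [hK, MulAction.index_stabilizer]
      refine lt_of_le_of_lt ?_ hlt
      exact Set.ncard_le_card _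
    obtain ⟨k, hk⟩ := P.isPGroup'.index K
    have hk2 : k < 2 := by
      rw [hk] at hi
      exact (Nat.pow_lt_pow_iff_right hp.out.one_lt).1 hi
    interval_cases k
    · have : K = ⊤ := Subgroup.index_eq_one.1 (by simpa using hk)
      rw [this]; exact ⟨trivial, trivial⟩
    · rw [pow_one] at hk
      have hKn : K.Normal := by
        apply Subgroup.normal_of_index_eq_minFac_card
        rw [hm, hk, hp.out.pow_minFac hm0]
      exact quot_prime K hk x y
  have hPA : (P : Subgroup G) = A := by
    apply le_antisymm _ hAP
    have hc : ∀ x y : P, x * y = y * x := by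
      intro x y
      have : ((x * y * (y * x)⁻¹ : P) : G) = 1 :=
        faithful_of_ne_top hs hN _ (fun q => (key q x y).1)
      exact mul_inv_eq_one.1 (Subtype.ext this)
    intro x hx
    apply hA.max
    · exact faithful_of_ne_top hs hN _ (fun q => (key q ⟨x, hx⟩ 1).2)
    · intro a ha
      exact congrArg Subtype.val (hc ⟨x, hx⟩ ⟨a, hAP ha⟩)
  have h1 := card_sylow_modEq_one p G
  have h2 := P.card_eq_index_normalizer
  rw [h2] at h1
  have h3 : Subgroup.normalizer (P : Set G) = N := by
    rw [hNdef, ← hPA]; rfl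
  rwa [h3] at h1

theorem simple60 {G : Type*} [Group G] [Fintype G] (hs : IsSimpleGroup G)
    (hc : Fintype.card G = 60) (N : Subgroup G) (hN : N.index = 6) :
    Nonempty (G ≃* alternatingGroup (Fin 5)) := by
  classical
  have hNt : N ≠ ⊤ := by rintro rfl; simp at hN
  let φ := MulAction.toPermHom G (G ⧸ N)
  have hφ : Function.Injective φ := perm_inj hs hNt
  have hX : Nat.card (G ⧸ N) = 6 := hN
  have hsign : ∀ g : G, φ g ∈ alternatingGroup (G ⧸ N) := by
    let ψ : G →* ℤˣ := Equiv.Perm.sign.comp φ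
    have : ψ.ker = ⊤ := by
      rcases hs.eq_bot_or_eq_top_of_normal ψ.ker inferInstance with h | h
      · exfalso
        have := Fintype.card_le_of_injective ψ ((MonoidHom.ker_eq_bot_iff ψ).1 h)
        rw [hc] at this
        simp at this
      · exact h
    intro g
    have hg : g ∈ ψ.ker := by rw [this]; trivial
    exact hg
  let φalt : G →* alternatingGroup (G ⧸ N) := φ.codRestrict _ hsign
  have hφalt : Function.Injective φalt := by
    intro a b hab
    exact hφ (congrArg Subtype.val hab)
  have hnt : Nontrivial (G ⧸ N) := Finite.one_lt_card_iff_nontrivial.1 (by rw [hX]; norm_num)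
  have hA6 : Nat.card (alternatingGroup (G ⧸ N)) = 360 := by
    have := two_mul_nat_card_alternatingGroup (α := G ⧸ N)
    rw [Nat.card_perm, hX] at this
    have h6 : (6).factorial = 720 := by decide
    omega
  have hs6 : IsSimpleGroup (alternatingGroup (G ⧸ N)) :=
    alternatingGroup.isSimpleGroup (by rw [hX]; norm_num)
  let H := φalt.range
  have hHc : Nat.card H = 60 := by
    rw [← hc, ← Nat.card_eq_fintype_card]
    exact (Nat.card_congr (MonoidHom.ofInjective hφalt).toEquiv).symm
  have hHi : H.index = 6 := by
    have := H.card_mul_index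
    rw [hHc, hA6] at this
    omega
  have hHt : H ≠ ⊤ := by intro h; rw [h] at hHi; simp at hHi
  let Y := alternatingGroup (G ⧸ N) ⧸ H
  have hY : Nat.card Y = 6 := hHi
  let b : Y := QuotientGroup.mk 1
  have hb : ∀ g : G, φalt g • b = b := by
    intro g
    change (QuotientGroup.mk (φalt g * 1) : Y) = QuotientGroup.mk 1
    rw [mul_one]
    apply QuotientGroup.eq.2
    rw [mul_one]
    exact H.inv_mem ⟨g, rfl⟩
  have hiff : ∀ g : G, ∀ y : Y, (MulAction.toPerm (φalt g) y ≠ b) ↔ y ≠ b := by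
    intro g y
    have : MulAction.toPerm (φalt g) y = b ↔ y = b := by
      rw [MulAction.toPerm_apply]
      constructor
      · intro h
        rw [← hb g] at h
        exact (MulAction.injective (φalt g) h)
      · rintro rfl
        exact hb g
    exact not_congr this
  let ρ : G →* Equiv.Perm {y : Y // y ≠ b} :=
    { toFun := fun g => (MulAction.toPerm (φalt g)).subtypePerm (hiff g)
      map_one' := by ext y; simp
      map_mul' := by 
        intro g h; ext y
        change φalt (g * h) • (y : Y) = φalt g • (φalt h • (y : Y))
        rw [map_mul, mul_smul] }
  have hρ : Function.Injective ρ := by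
    rw [injective_iff_map_eq_one]
    intro g hg
    apply hφalt
    rw [map_one]
    apply faithful_of_ne_top hs6 hHt
    intro y
    by_cases hy : y = b
    · rw [hy]; exact hb g
    · have := congrArg (fun e : Equiv.Perm {y : Y // y ≠ b} => ((e ⟨y, hy⟩ : {y : Y // y ≠ b}) : Y)) hg
      exact this
  have hY5 : Nat.card {y : Y // y ≠ b} = 5 := by
    have h1 : Fintype.card Y = 6 := by rw [← Nat.card_eq_fintype_card]; exact hY
    rw [Nat.card_eq_fintype_card, Fintype.card_subtype_compl]
    simp [h1]
  have hidx : ρ.range.index = 2 := by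
    have := ρ.range.card_mul_index
    have h2 : Nat.card ρ.range = 60 := by
      rw [← hc, ← Nat.card_eq_fintype_card]
      exact (Nat.card_congr (MonoidHom.ofInjective hρ).toEquiv).symm
    rw [h2, Nat.card_perm, hY5] at this
    have h6 : (5).factorial = 120 := by decide
    omega
  have hr := Equiv.Perm.eq_alternatingGroup_of_index_eq_two hidx
  let e5 : {y : Y // y ≠ b} ≃ Fin 5 := Finite.equivFinOfCardEq hY5
  exact ⟨(MonoidHom.ofInjective hρ).trans ((MulEquiv.subgroupCongr hr).trans (Equiv.altCongrHom e5))⟩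

theorem general_bound {G : Type*} [Group G] [Fintype G] {p r : ℕ} [hp : Fact p.Prime] (hp5 : 5 ≤ p)
    (hr2 : 2 ≤ r) (hrp : 2 * r < p)
    (hr : ∀ T : Finset (ZMod p), (∀ a h, a ∈ T → a + h ∈ T → a + h + h ∈ T → h = 0) → T.card ≤ r)
    {A : Subgroup G} (hA : MaxEl p A) (hA1 : A ≠ ⊥) :
    (4 * p - r : ℤ) * Fintype.card G - (p - r) * Nat.card (Subgroup.normalizer (A : Set G))
      ≤ p * ∑ x : G, (orderOf x : ℤ) := by
  have h1 := main_ineq hp5 hr2 hrp hr hA hA1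
  have h2 := sets_card_le hA
  have h3 := setI_card_le A
  zify at h2 h3
  have hp0 : (5 : ℤ) ≤ p := by exact_mod_cast hp5
  have hrp' : (2 : ℤ) * r < p := by exact_mod_cast hrp
  have h4 : (0 : ℤ) ≤ r := by positivity
  have h5 : (0 : ℤ) ≤ (setC A).card := by positivity
  have e1 := mul_le_mul_of_nonneg_left h2 (by linarith : (0 : ℤ) ≤ p - r)
  have e2 := mul_le_mul_of_nonneg_left h3 (by linarith : (0 : ℤ) ≤ p)
  have e3 : (0 : ℤ) ≤ ((p : ℤ) * p - 5 * p + 1) * (setC A).card := by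
    apply mul_nonneg _ h5
    nlinarith
  nlinarith

theorem card_eq_p {G : Type*} [Group G] [Fintype G] {p : ℕ} [hp : Fact p.Prime]
    {A : Subgroup G} (hA : MaxEl p A) (hA1 : A ≠ ⊥) (hd : ¬ p ^ 2 ∣ Fintype.card G) :
    Nat.card A = p := by
  have hpg : IsPGroup p A := fun a => ⟨1, by
    rw [pow_one]; exact Subtype.ext (hA.exp a a.2)⟩
  obtain ⟨n, hn⟩ := IsPGroup.iff_card.1 hpg
  have hn0 : n ≠ 0 := by
    rintro rfl
    exact hA1 (Subgroup.card_eq_one.1 (by simpa using hn))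
  have hn2 : ¬ 2 ≤ n := by
    intro h
    apply hd
    refine (pow_dvd_pow p h).trans ?_
    rw [← hn, ← Nat.card_eq_fintype_card]
    exact A.card_subgroup_dvd_card
  have : n = 1 := by omega
  rw [hn, this, pow_one]

theorem F_cyclic {G : Type*} [Group G] [Fintype G] {p : ℕ} [hp : Fact p.Prime]
    {A : Subgroup G} (hA : MaxEl p A) (hAc : Nat.card A = p) {x : G}
    (hx : ∀ a ∈ A, (x * a) ^ 3 = 1) :
    ∃ i < p, p ∣ i * i + i + 1 ∧ ∀ a ∈ A, x⁻¹ * a * x = a ^ i := by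
  have hcyc : IsCyclic A := isCyclic_of_prime_card hAc
  obtain ⟨⟨h, hhA⟩, hh⟩ := hcyc.exists_generator
  have hgen : ∀ a ∈ A, ∃ j : ℕ, h ^ j = a := by
    intro a ha
    obtain ⟨j, hj⟩ := (mem_powers_iff_mem_zpowers.2 (hh ⟨a, ha⟩))
    refine ⟨j, ?_⟩
    have := congrArg Subtype.val hj
    simpa using this
  have hh1 : h ≠ 1 := by
    rintro rfl
    have : A = ⊥ := by
      rw [eq_bot_iff]
      intro a ha
      obtain ⟨j, hj⟩ := hgen a ha
      rw [one_pow] at hj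
      rw [← hj]; exact Subgroup.one_mem _
    rw [this] at hAc
    simp at hAc
    exact hp.out.one_lt.ne hAc
  have hord : orderOf h = p := orderOf_eq_prime (hA.exp h hhA) hh1
  obtain ⟨k, hk⟩ := hgen _ (F_norm hA hx h hhA)
  have hk' : h ^ (k % p) = x⁻¹ * h * x := by
    rw [← hk, ← hord, pow_mod_orderOf]
  obtain ⟨i, hi⟩ : ∃ i, i = k % p := ⟨_, rfl⟩
  rw [← hi] at hk'
  have hcp : ∀ j : ℕ, x⁻¹ * h ^ j * x = (h ^ i) ^ j := by
    intro j
    have := conj_pow (i := j) (a := x⁻¹) (b := h)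
    rw [inv_inv] at this
    rw [← this, hk']
  refine ⟨i, by rw [hi]; exact Nat.mod_lt _ hp.out.pos, ?_, ?_⟩
  · have h0 : x ^ 3 = 1 := by simpa using hx 1 A.one_mem
    have h1 := cube_key x h
    rw [hx h hhA, h0, one_mul] at h1
    have e1 : x⁻¹ * x⁻¹ * h * x * x = (h ^ i) ^ i := by
      rw [← hcp i, hk']; group
    rw [e1, ← hk', ← pow_mul, ← pow_add, ← pow_succ] at h1
    rw [← hord]
    exact orderOf_dvd_of_pow_eq_one h1.symm
  · intro a ha
    obtain ⟨j, rfl⟩ := hgen a ha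
    rw [hcp, ← pow_mul, ← pow_mul, mul_comm]

theorem setF_empty_five {G : Type*} [Group G] [Fintype G] [hp : Fact (Nat.Prime 5)]
    {A : Subgroup G} (hA : MaxEl 5 A) (hAc : Nat.card A = 5) : (setF A).card = 0 := by
  classical
  rw [Finset.card_eq_zero, Finset.eq_empty_iff_forall_notMem]
  intro x hx
  simp only [setF, Finset.mem_filter, Finset.mem_univ, true_and] at hx
  obtain ⟨i, hi, hd, _⟩ := F_cyclic hA hAc hx.1
  interval_cases i <;> omega

theorem setF_card_seven {G : Type*} [Group G] [Fintype G] [hp : Fact (Nat.Prime 7)]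
    {A : Subgroup G} (hA : MaxEl 7 A) (hAc : Nat.card A = 7) :
    (setF A).card ≤ 2 * (setC A).card := by
  classical
  have h2 := fiber_card A (fun a => a ^ 2)
  have h4 := fiber_card A (fun a => a ^ 4)
  have hsub : setF A ⊆ (Finset.univ.filter fun x : G => ∀ a ∈ A, x⁻¹ * a * x = a ^ 2) ∪
      (Finset.univ.filter fun x : G => ∀ a ∈ A, x⁻¹ * a * x = a ^ 4) := by
    intro x hx
    simp only [setF, Finset.mem_union, Finset.mem_filter, Finset.mem_univ, true_and] at hx ⊢
    obtain ⟨i, hi, hd, hf⟩ := F_cyclic hA hAc hx.1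
    interval_cases i
    all_goals first | (exact Or.inl hf) | (exact Or.inr hf) | omega
  have := (Finset.card_le_card hsub).trans (Finset.card_union_le _ _)
  have h2' := h2
  have h4' := h4
  omega

/-- for a Sylow 5-subgroup with six conjugates, the centralizer has at most 5 elements -/
theorem setC_card_five {G : Type*} [Group G] [Fintype G] (hs : IsSimpleGroup G)
    [hp : Fact (Nat.Prime 5)]
    {A : Subgroup G} (hA : MaxEl 5 A) (hA1 : A ≠ ⊥) (hAc : Nat.card A = 5)
    (hN : (Subgroup.normalizer (A : Set G)).index = 6) : (setC A).card ≤ 5 := by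
  classical
  obtain ⟨N, hNdef⟩ : ∃ N, N = Subgroup.normalizer (A : Set G) := ⟨_, rfl⟩
  rw [← hNdef] at hN
  have hNt : N ≠ ⊤ := by rintro rfl; simp at hN
  let b : G ⧸ N := QuotientGroup.mk 1
  have hb : ∀ g ∈ N, g • b = b := by
    intro g hg
    change (QuotientGroup.mk (g * 1) : G ⧸ N) = QuotientGroup.mk 1
    apply QuotientGroup.eq.2
    simpa using hg
  have hAN : A ≤ N := by rw [hNdef]; exact Subgroup.le_normalizer
  obtain ⟨a0, ha0⟩ := Subgroup.ne_bot_iff_exists_ne_one.1 hA1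
  have ha01 : (a0 : G) ≠ 1 := fun h => ha0 (Subtype.ext h)
  obtain ⟨q, hq⟩ : ∃ q : G ⧸ N, (a0 : G) • q ≠ q := by
    by_contra h
    push Not at h
    exact ha01 (faithful_of_ne_top hs hNt _ h)
  have horb : (MulAction.orbit A q).ncard = 5 := by
    rw [← MulAction.index_stabilizer]
    have hdvd : (MulAction.stabilizer A q).index ∣ 5 := by
      rw [← hAc]; exact Subgroup.index_dvd_card _
    rcases (Nat.dvd_prime hp.out).1 hdvd with h | h
    · exfalso
      have := Subgroup.index_eq_one.1 h
      have hm : a0 ∈ MulAction.stabilizer A q := by rw [this]; trivial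
      exact hq hm
    · exact h
  have hbn : b ∉ MulAction.orbit A q := by
    rintro ⟨a, ha⟩
    have h1 : (a : G) • q = b := ha
    have h2 : q = b := by
      have := hb (a : G)⁻¹ (N.inv_mem (hAN a.2))
      rw [← h1, inv_smul_smul] at this
      rw [this]; exact h1
    apply hq
    rw [h2]; exact hb _ (hAN a0.2)
  have hcov : ∀ y : G ⧸ N, y ≠ b → y ∈ MulAction.orbit A q := by
    intro y hy
    by_contra hy'
    have hcard : ({b, y} ∪ MulAction.orbit A q : Set (G ⧸ N)).ncard = 7 := by
      rw [Set.ncard_union_eq _ (Set.toFinite _) (Set.toFinite _), horb, Set.ncard_pair hy.symm]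
      rw [Set.disjoint_left]
      rintro z (hz | hz)
      · rw [hz]; exact hbn
      · rw [Set.mem_singleton_iff.1 hz]; exact hy'
    have hle := Set.ncard_le_card ({b, y} ∪ MulAction.orbit A q : Set (G ⧸ N))
    rw [hcard] at hle
    have h6 : Nat.card (G ⧸ N) = 6 := hN
    omega
  have hsub : ((setC A : Finset G) : Set G) ⊆ (A : Set G) := by
    intro c hc
    simp only [setC, Finset.coe_filter, Finset.mem_univ, true_and, Set.mem_ofPred_eq] at hc
    have hcc : ∀ a ∈ A, a * c = c * a := by
      intro a ha
      have h := hc a ha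
      have e : c * (c⁻¹ * a * c) = a * c := by group
      rw [h] at e
      exact e.symm
    have hcN : c ∈ N := by
      rw [hNdef]; apply mem_normalizer_of
      intro a ha; rw [hc a ha]; exact ha
    have hqb : q ≠ b := by
      rintro h
      apply hq
      rw [h]; exact hb _ (hAN a0.2)
    have hcq : c • q ≠ b := by
      intro h
      rw [← hb c hcN] at h
      exact hqb (MulAction.injective c h)
    obtain ⟨a, ha⟩ := hcov _ hcq
    have ha' : (a : G) • q = c • q := ha
    have h1 : (a : G)⁻¹ * c = 1 := by
      apply faithful_of_ne_top hs hNt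
      intro y
      by_cases hy : y = b
      · rw [hy]; exact hb _ (N.mul_mem (N.inv_mem (hAN a.2)) hcN)
      · obtain ⟨a', rfl⟩ := hcov y hy
        change ((a : G)⁻¹ * c) • ((a' : G) • q) = (a' : G) • q
        have e : (a : G)⁻¹ * c * (a' : G) = a' * ((a : G)⁻¹ * c) := by
          rw [mul_assoc, ← hcc a' a'.2, ← mul_assoc, ← mul_assoc,
            hA.comm (a : G)⁻¹ (A.inv_mem a.2) a' a'.2]
        rw [← mul_smul, e, mul_smul, mul_smul, ← ha', inv_smul_smul]
    have : c = a := by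
      rw [inv_mul_eq_one] at h1; exact h1.symm
    rw [this]; exact a.2
  have := Set.ncard_le_ncard hsub (Set.toFinite _)
  rw [Set.ncard_coe_finset] at this
  exact this.trans (le_of_eq hAc)

theorem even_of_setI {G : Type*} [Group G] [Fintype G] {A : Subgroup G} {s : G} (hsI : s ∈ setI A) :
    2 ∣ Nat.card (Subgroup.normalizer (A : Set G)) := by
  classical
  simp only [setI, Finset.mem_filter, Finset.mem_univ, true_and] at hsI
  obtain ⟨h1, h2⟩ := hsI
  have hsN : s ∈ Subgroup.normalizer (A : Set G) := by
    apply mem_normalizer_of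
    intro a ha; rw [h1 a ha]; exact A.inv_mem ha
  have hd : orderOf s ∣ Nat.card (Subgroup.normalizer (A : Set G)) :=
    Subgroup.orderOf_dvd_natCard _ hsN
  refine dvd_trans ?_ hd
  by_contra hodd
  apply h2
  obtain ⟨k, hk⟩ : ∃ k, orderOf s + 1 = 2 * k := ⟨(orderOf s + 1) / 2, by omega⟩
  have e : s = (s * s) ^ k := by
    rw [← pow_two, ← pow_mul, ← hk, pow_succ, pow_orderOf_eq_one, one_mul]
  have hsq : ∀ a ∈ A, Commute (s * s) a := by
    intro a ha
    have h3 : s⁻¹ * (s⁻¹ * a * s) * s = a := by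
      rw [h1 a ha, h1 _ (A.inv_mem ha), inv_inv]
    have h4 : s * s * (s⁻¹ * (s⁻¹ * a * s) * s) = a * (s * s) := by group
    rw [h3] at h4
    exact h4
  intro a ha
  have hc : Commute s a := by rw [e]; exact (hsq a ha).pow_left k
  rw [mul_assoc, ← hc.eq]; group

theorem avg_of_int {G : Type*} [Group G] [Fintype G]
    (h : (71 : ℤ) * Fintype.card G ≤ 20 * ∑ x : G, (orderOf x : ℤ)) : 71 / 20 ≤ avgOrder G := by
  unfold avgOrder
  have hn : (0 : ℚ) < Fintype.card G := by exact_mod_cast Fintype.card_pos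
  rw [le_div_iff₀ hn]
  have : (71 : ℚ) * Fintype.card G ≤ 20 * ∑ x : G, (orderOf x : ℚ) := by exact_mod_cast h
  linarith

theorem case_general {G : Type*} [Group G] [Fintype G] {p r : ℕ} [hp : Fact p.Prime] (hp5 : 5 ≤ p)
    (hr2 : 2 ≤ r) (hrp : 2 * r < p)
    (hr : ∀ T : Finset (ZMod p), (∀ a h, a ∈ T → a + h ∈ T → a + h + h ∈ T → h = 0) → T.card ≤ r)
    {A : Subgroup G} (hA : MaxEl p A) (hA1 : A ≠ ⊥) (ν : ℕ)
    (hν : ν ≤ (Subgroup.normalizer (A : Set G)).index)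
    (hnum : (20 * (p - r) : ℤ) ≤ (9 * p - 20 * r) * ν) : 71 / 20 ≤ avgOrder G := by
  apply avg_of_int
  have h1 := general_bound hp5 hr2 hrp hr hA hA1
  have h2 := (Subgroup.normalizer (A : Set G)).card_mul_index
  rw [Nat.card_eq_fintype_card (α := G)] at h2
  obtain ⟨m, hm⟩ : ∃ m, m = Nat.card (Subgroup.normalizer (A : Set G)) := ⟨_, rfl⟩
  rw [← hm] at h1 h2
  have hp0 : (5 : ℤ) ≤ p := by exact_mod_cast hp5
  have hrp' : (2 : ℤ) * r < p := by exact_mod_cast hrp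
  have hm0 : (0 : ℤ) ≤ m := by positivity
  have h3 : (m : ℤ) * ν ≤ Fintype.card G := by
    rw [← h2]; push_cast
    exact mul_le_mul_of_nonneg_left (by exact_mod_cast hν) hm0
  have hpos : (0 : ℤ) ≤ 9 * p - 20 * r := by
    by_contra hneg
    push Not at hneg
    have : (9 * p - 20 * r : ℤ) * ν ≤ 0 := mul_nonpos_of_nonpos_of_nonneg hneg.le (by positivity)
    have h0 : (0 : ℤ) ≤ r := by positivity
    linarith
  have h4 := mul_le_mul_of_nonneg_left hnum hm0
  have h5 := mul_le_mul_of_nonneg_left h3 hpos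
  have : (p : ℤ) * (71 * Fintype.card G) ≤ p * (20 * ∑ x : G, (orderOf x : ℤ)) := by nlinarith
  exact le_of_mul_le_mul_left this (by linarith)

theorem case_seven {G : Type*} [Group G] [Fintype G] (hs : IsSimpleGroup G) [hp : Fact (Nat.Prime 7)]
    (hr : ∀ T : Finset (ZMod 7), (∀ a h, a ∈ T → a + h ∈ T → a + h + h ∈ T → h = 0) → T.card ≤ 3)
    {A : Subgroup G} (hA : MaxEl 7 A) (hA1 : A ≠ ⊥)
    (hN : (Subgroup.normalizer (A : Set G)).index = 8) : 71 / 20 ≤ avgOrder G := by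
  have hNt : Subgroup.normalizer (A : Set G) ≠ ⊤ := by intro h; rw [h] at hN; simp at hN
  have hd := card_dvd_factorial hs hNt
  have hAc : Nat.card A = 7 := by
    apply card_eq_p hA hA1
    intro h
    have := h.trans hd
    rw [hN] at this
    revert this; decide
  have h1 := main_ineq (r := 3) (by norm_num) (by norm_num) (by norm_num) hr hA hA1
  have h2 := sets_card_le hA
  have h3 := setI_card_le A
  have h4 := setF_card_seven hA hAc
  have h5 := (Subgroup.normalizer (A : Set G)).card_mul_index
  rw [Nat.card_eq_fintype_card (α := G), hN] at h5
  apply avg_of_int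
  push_cast at h1
  zify at h2 h3 h4 h5
  linarith

theorem case_five {G : Type*} [Group G] [Fintype G] (hs : IsSimpleGroup G) [hp : Fact (Nat.Prime 5)]
    (hr : ∀ T : Finset (ZMod 5), (∀ a h, a ∈ T → a + h ∈ T → a + h + h ∈ T → h = 0) → T.card ≤ 2)
    {A : Subgroup G} (hA : MaxEl 5 A) (hA1 : A ≠ ⊥)
    (hN : (Subgroup.normalizer (A : Set G)).index = 6) :
    Nonempty (G ≃* alternatingGroup (Fin 5)) ∨ 71 / 20 ≤ avgOrder G := by
  have hNt : Subgroup.normalizer (A : Set G) ≠ ⊤ := by intro h; rw [h] at hN; simp at hN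
  have hd := card_dvd_factorial hs hNt
  have hAc : Nat.card A = 5 := by
    apply card_eq_p hA hA1
    intro h
    have := h.trans hd
    rw [hN] at this
    revert this; decide
  have h1 := main_ineq (r := 2) (by norm_num) (by norm_num) (by norm_num) hr hA hA1
  have h3 := setI_card_le A
  have h4 := setF_empty_five hA hAc
  have h5 := (Subgroup.normalizer (A : Set G)).card_mul_index
  have h6 := setC_card_five hs hA hA1 hAc hN
  rw [Nat.card_eq_fintype_card (α := G), hN] at h5
  rw [h4] at h1
  push_cast at h1
  by_cases hI : (setI A).card = 0
  · right
    apply avg_of_int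
    rw [hI] at h1
    have hc0 : (0 : ℤ) ≤ (setC A).card := by positivity
    have hn0 : (0 : ℤ) ≤ Fintype.card G := by positivity
    push_cast at h1
    linarith
  · obtain ⟨s, hsI⟩ := Finset.card_ne_zero.1 hI
    have h7 := even_of_setI hsI
    have h8 : 5 ∣ Nat.card (Subgroup.normalizer (A : Set G)) := by
      rw [← hAc]
      exact Subgroup.card_dvd_of_le Subgroup.le_normalizer
    by_cases hn : 100 ≤ Fintype.card G
    · right
      apply avg_of_int
      zify at h3 h6 hn
      linarith
    · left
      have hpos : 0 < Nat.card (Subgroup.normalizer (A : Set G)) := Nat.card_pos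
      have hn60 : Fintype.card G = 60 := by omega
      exact simple60 hs hn60 _ hN

theorem index_dvd' {G : Type*} [Group G] [Fintype G] (N : Subgroup G) :
    N.index ∣ Fintype.card G := by
  rw [← Nat.card_eq_fintype_card]; exact N.index_dvd_card


theorem simple_K3_group_avgOrder {G : Type*} [Group G] [Fintype G] (hs : IsSimpleGroup G)
    (hna : ¬ ∀ a b : G, a * b = b * a)
    (hcard : (Fintype.card G).primeFactors.card = 3)
    (hsub : (Fintype.card G).primeFactors ⊆ ({2, 3, 5, 7, 11, 13} : Finset ℕ)) :
    Nonempty (G ≃* alternatingGroup (Fin 5)) ∨ 71 / 20 ≤ avgOrder G := by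
  have hn0 : Fintype.card G ≠ 0 := Fintype.card_ne_zero
  have hidx1 : ∀ (p : ℕ) (A : Subgroup G), MaxEl p A → A ≠ ⊥ →
      (Subgroup.normalizer (A : Set G)).index ≠ 1 := by
    intro p A hA hA1 h
    exact norm_ne_top hs hna hA hA1 (Subgroup.index_eq_one.1 h)
  have hidx0 : ∀ (A : Subgroup G), (Subgroup.normalizer (A : Set G)).index ≠ 0 := fun A =>
    Subgroup.index_ne_zero_of_finite
  by_cases h11 : 11 ∣ Fintype.card G
  · right
    have : Fact (Nat.Prime 11) := ⟨by norm_num⟩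
    obtain ⟨A, hA, hA1⟩ := exists_maxEl h11
    apply case_general (p := 11) (r := 4) (by norm_num) (by norm_num) (by norm_num)
      (ap_bound 11 4 apSearch11) hA hA1 12 _ (by norm_num)
    have e1 := hidx1 11 A hA hA1
    have e0 := hidx0 A
    by_contra hlt
    have hm := nu_lemma hs hna hA hA1 (by omega)
    unfold Nat.ModEq at hm
    omega
  by_cases h13 : 13 ∣ Fintype.card G
  · right
    have : Fact (Nat.Prime 13) := ⟨by norm_num⟩
    obtain ⟨A, hA, hA1⟩ := exists_maxEl h13
    apply case_general (p := 13) (r := 5) (by norm_num) (by norm_num) (by norm_num)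
      (ap_bound 13 5 apSearch13) hA hA1 14 _ (by norm_num)
    have e1 := hidx1 13 A hA hA1
    have e0 := hidx0 A
    by_contra hlt
    have hm := nu_lemma hs hna hA hA1 (by omega)
    unfold Nat.ModEq at hm
    omega
  by_cases h5 : 5 ∣ Fintype.card G
  · have : Fact (Nat.Prime 5) := ⟨by norm_num⟩
    obtain ⟨A, hA, hA1⟩ := exists_maxEl h5
    have e1 := hidx1 5 A hA hA1
    have e0 := hidx0 A
    have ed := index_dvd' (Subgroup.normalizer (A : Set G))
    by_cases h6 : (Subgroup.normalizer (A : Set G)).index = 6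
    · exact case_five hs (ap_bound 5 2 apSearch5) hA hA1 h6
    right
    apply case_general (p := 5) (r := 2) (by norm_num) (by norm_num) (by norm_num)
      (ap_bound 5 2 apSearch5) hA hA1 16 _ (by norm_num)
    by_contra hlt
    have hm := nu_lemma hs hna hA hA1 (by omega)
    unfold Nat.ModEq at hm
    have hne : (Subgroup.normalizer (A : Set G)).index ≠ 11 := by
      intro h; rw [h] at ed; exact h11 ed
    omega
  · have h7 : 7 ∣ Fintype.card G := by
      by_contra h7
      have hs2 : (Fintype.card G).primeFactors ⊆ ({2, 3} : Finset ℕ) := by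
        intro q hq
        have h1 := hsub hq
        have h2 := Nat.dvd_of_mem_primeFactors hq
        simp only [Finset.mem_insert, Finset.mem_singleton] at h1 ⊢
        rcases h1 with h | h | h | h | h | h
        · exact Or.inl h
        · exact Or.inr h
        all_goals (rw [h] at h2; contradiction)
      have := Finset.card_le_card hs2
      rw [hcard] at this
      exact absurd this (by decide)
    have : Fact (Nat.Prime 7) := ⟨by norm_num⟩
    obtain ⟨A, hA, hA1⟩ := exists_maxEl h7
    have e1 := hidx1 7 A hA hA1
    have e0 := hidx0 A
    have ed := index_dvd' (Subgroup.normalizer (A : Set G))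
    right
    by_cases h8 : (Subgroup.normalizer (A : Set G)).index = 8
    · exact case_seven hs (ap_bound 7 3 apSearch7) hA hA1 h8
    apply case_general (p := 7) (r := 3) (by norm_num) (by norm_num) (by norm_num)
      (ap_bound 7 3 apSearch7) hA hA1 29 _ (by norm_num)
    by_contra hlt
    have hm := nu_lemma hs hna hA hA1 (by omega)
    unfold Nat.ModEq at hm
    have hne : (Subgroup.normalizer (A : Set G)).index ≠ 15 := by
      intro h; rw [h] at ed; exact h5 (dvd_trans (by norm_num) ed)
    have hne2 : (Subgroup.normalizer (A : Set G)).index ≠ 22 := by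
      intro h; rw [h] at ed; exact h11 (dvd_trans (by norm_num) ed)
    omega
end

section
/- Let G be a finite non-solvable group which contains no nontrivial solvable normal subgroups (i.e., every solvable normal subgroup of G is trivial), and let θ be an automorphism of G. If the number of elements g ∈ G with θ(g) = g⁻¹ is strictly greater than (2/9)·|G|, then G is isomorphic to the alternating group A_5. -/
open Polynomial in
theorem avg_roots_of_unity {ι : Type*} [Fintype ι] [Nonempty ι] (f : ι → ℂ) (n : ℕ) (hn : 0 < n)
    (hf : ∀ i, f i ^ n = 1) (hInt : IsIntegral ℤ ((∑ i, f i) / (Fintype.card ι : ℂ)))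
    (h0 : ∑ i, f i ≠ 0) : ∃ ζ : ℂ, ∀ i, f i = ζ := by
  classical
  set S : Set ℂ := Set.range f with hS
  have hfin : S.Finite := Set.finite_range f
  let K := IntermediateField.adjoin ℚ S
  have hfd : FiniteDimensional ℚ K := by
    have : Finite S := hfin
    apply IntermediateField.finiteDimensional_adjoin
    rintro x ⟨i, rfl⟩
    refine IsIntegral.of_pow hn ?_
    rw [hf i]; exact isIntegral_one
  have : NumberField K := { to_charZero := K.charZero, to_finiteDimensional := hfd }
  have hcard : (0 : ℝ) < Fintype.card ι := by exact_mod_cast Fintype.card_pos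
  let g : ι → K := fun i => ⟨f i, IntermediateField.subset_adjoin ℚ S ⟨i, rfl⟩⟩
  let y : K := (∑ i, g i) / (Fintype.card ι : K)
  have hy : (y : ℂ) = (∑ i, f i) / (Fintype.card ι : ℂ) := by
    have : algebraMap K ℂ y = (∑ i, algebraMap K ℂ (g i)) / (Fintype.card ι : ℂ) := by
      simp only [y, map_div₀, map_sum, map_natCast]
    exact this
  have hgn : ∀ i, g i ^ n = 1 := fun i => Subtype.ext (by simpa [g] using hf i)
  have hc0 : (Fintype.card ι : ℂ) ≠ 0 := by exact_mod_cast Fintype.card_ne_zero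
  have hy0 : y ≠ 0 := by
    intro h
    rw [h] at hy
    have : (∑ i, f i) / (Fintype.card ι : ℂ) = 0 := by rw [← hy]; rfl
    rcases div_eq_zero_iff.mp this with h | h
    · exact h0 h
    · exact hc0 h
  have hyi : IsIntegral ℤ y := by
    rw [← IntermediateField.coe_isIntegral_iff, hy]; exact hInt
  obtain ⟨m, hm, hym⟩ := NumberField.Embeddings.pow_eq_one_of_norm_le_one K ℂ hy0 hyi (by
    intro φ
    have h1 : ∀ i, ‖φ (g i)‖ = 1 := fun i => by
      apply Complex.norm_eq_one_of_pow_eq_one (n := n) _ hn.ne'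
      rw [← map_pow, hgn, map_one]
    have : φ y = (∑ i, φ (g i)) / (Fintype.card ι : ℂ) := by
      simp only [y, map_div₀, map_sum, map_natCast]
    rw [this, norm_div, Complex.norm_natCast, div_le_one hcard]
    refine (norm_sum_le _ _).trans ?_
    simp [h1])
  set w : ℂ := (∑ i, f i) / (Fintype.card ι : ℂ) with hw
  have hwm : w ^ m = 1 := by
    rw [← hy]; exact_mod_cast congrArg (algebraMap K ℂ) hym
  have hw1 : ‖w‖ = 1 := Complex.norm_eq_one_of_pow_eq_one hwm hm.ne'
  have hf1 : ∀ i, ‖f i‖ = 1 := fun i => Complex.norm_eq_one_of_pow_eq_one (hf i) hn.ne'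
  have hww : w * (starRingEnd ℂ) w = 1 := by
    rw [Complex.mul_conj, Complex.normSq_eq_norm_sq, hw1]; simp
  have hsum : ∑ i, (f i * (starRingEnd ℂ) w) = Fintype.card ι := by
    rw [← Finset.sum_mul]
    have : ∑ i, f i = w * Fintype.card ι := by rw [hw]; field_simp
    rw [this, mul_right_comm, hww, one_mul]
  have hle : ∀ i, (f i * (starRingEnd ℂ) w).re ≤ 1 := fun i => by
    refine (Complex.re_le_norm _).trans ?_
    rw [norm_mul, hf1, RCLike.norm_conj, hw1, one_mul]
  have hre : ∑ i, (1 - (f i * (starRingEnd ℂ) w).re) = 0 := by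
    rw [Finset.sum_sub_distrib, ← Complex.re_sum, hsum]; simp
  rw [Finset.sum_eq_zero_iff_of_nonneg (fun i _ => sub_nonneg.mpr (hle i))] at hre
  refine ⟨w, fun i => ?_⟩
  have h1 : (f i * (starRingEnd ℂ) w).re = 1 := by linarith [hre i (Finset.mem_univ i)]
  have h2 : ‖f i * (starRingEnd ℂ) w‖ = 1 := by
    rw [norm_mul, hf1, RCLike.norm_conj, hw1, one_mul]
  have h3 : f i * (starRingEnd ℂ) w = 1 := by
    apply Complex.ext
    · simpa using h1
    · have := Complex.sq_norm_sub_sq_re (f i * (starRingEnd ℂ) w)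
      rw [h1, h2] at this
      have : (f i * (starRingEnd ℂ) w).im = 0 := by nlinarith
      simpa using this
  calc f i = f i * (w * (starRingEnd ℂ) w) := by rw [hww, mul_one]
    _ = w * (f i * (starRingEnd ℂ) w) := by ring
    _ = w := by rw [h3, mul_one]

open Polynomial in
theorem matrix_scalar_of_trace {d : ℕ} [NeZero d] (M : Matrix (Fin d) (Fin d) ℂ) (n : ℕ)
    (hn : 0 < n) (hM : M ^ n = 1) (hInt : IsIntegral ℤ (M.trace / (d : ℂ)))
    (h0 : M.trace ≠ 0) : ∃ ζ : ℂ, M = Matrix.scalar (Fin d) ζ := by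
  classical
  set s := M.charpoly.roots with hs
  have htr : M.trace = s.sum := Matrix.trace_eq_sum_roots_charpoly M
  have hcard : Multiset.card s = d := by
    have := splits_iff_card_roots.mp (IsAlgClosed.splits M.charpoly)
    rw [hs, this, Matrix.charpoly_natDegree_eq_dim, Fintype.card_fin]
  have haev : aeval M (X ^ n - 1 : ℂ[X]) = 0 := by simp [hM]
  have hroot : ∀ z ∈ s, z ^ n = 1 := by
    intro z hz
    have h1 : z ∈ spectrum ℂ M := by
      rw [Matrix.mem_spectrum_iff_isRoot_charpoly]
      exact isRoot_of_mem_roots hz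
    have h2 := spectrum.pow_mem_pow M n h1
    rw [hM, spectrum.one_eq] at h2
    simpa using h2
  have hmap : (Finset.univ : Finset s).val.map (fun x : s => (x : ℂ)) = s := Multiset.map_univ_coe s
  have hsum : ∑ x : s, (x : ℂ) = s.sum := by
    rw [Finset.sum_eq_multiset_sum, hmap]
  have hc : Fintype.card s = d := by rw [Multiset.card_coe, hcard]
  have hne : Nonempty s := by
    rw [← Fintype.card_pos_iff, hc]; exact Nat.pos_of_ne_zero (NeZero.ne d)
  obtain ⟨ζ, hζ⟩ := avg_roots_of_unity (fun x : s => (x : ℂ)) n hn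
    (fun x => hroot _ (Multiset.coe_mem)) (by rw [hsum, hc, ← htr]; exact hInt)
    (by rw [hsum, ← htr]; exact h0)
  refine ⟨ζ, ?_⟩
  have hs2 : s = Multiset.replicate d ζ := by
    rw [Multiset.eq_replicate]
    refine ⟨hcard, fun b hb => ?_⟩
    rw [← hmap] at hb
    obtain ⟨x, -, rfl⟩ := Multiset.mem_map.mp hb
    exact hζ x
  have hchar : M.charpoly = (X - C ζ) ^ d := by
    have := (IsAlgClosed.splits M.charpoly).eq_prod_roots_of_monic (Matrix.charpoly_monic M)
    rw [this, ← hs, hs2]; simp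
  have hmin1 : minpoly ℂ M ∣ (X - C ζ) ^ d := by
    rw [← hchar]; exact Matrix.minpoly_dvd_charpoly M
  have hsq : Squarefree (minpoly ℂ M) := by
    refine Squarefree.squarefree_of_dvd (minpoly.dvd ℂ M haev) ?_
    refine (Polynomial.Separable.squarefree ?_)
    have : (X ^ n - 1 : ℂ[X]) = X ^ n - C 1 := by simp
    rw [this]
    exact separable_X_pow_sub_C (1 : ℂ) (by exact_mod_cast hn.ne') one_ne_zero
  have hmin2 : minpoly ℂ M ∣ (X - C ζ) := by
    exact (hsq.dvd_pow_iff_dvd (NeZero.ne d)).mp hmin1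
  have : aeval M (X - C ζ) = 0 := by
    obtain ⟨q, hq⟩ := hmin2
    rw [hq, map_mul, minpoly.aeval, zero_mul]
  rw [map_sub, aeval_X, aeval_C, sub_eq_zero] at this
  rw [this]; rfl


theorem trace_mulLeft_pi_matrix {n : ℕ} (d : Fin n → ℕ)
    (x : Π i, Matrix (Fin (d i)) (Fin (d i)) ℂ) :
    LinearMap.trace ℂ (Π i, Matrix (Fin (d i)) (Fin (d i)) ℂ) (LinearMap.mulLeft ℂ x) =
      ∑ i, (d i : ℂ) * (x i).trace := by
  classical
  let b := Pi.basis (fun i => Matrix.stdBasis ℂ (Fin (d i)) (Fin (d i)))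
  rw [LinearMap.trace_eq_matrix_trace ℂ b, Matrix.trace, Fintype.sum_sigma]
  refine Finset.sum_congr rfl fun i _ => ?_
  rw [Fintype.sum_prod_type, Matrix.trace, Finset.mul_sum]
  refine Finset.sum_congr rfl fun r _ => ?_
  have : ∀ c, (LinearMap.toMatrix b b (LinearMap.mulLeft ℂ x)).diag ⟨i, (r, c)⟩ = x i r r := by
    intro c
    rw [Matrix.diag_apply, LinearMap.toMatrix_apply]
    simp only [b, Pi.basis_repr, Pi.basis_apply, LinearMap.mulLeft_apply, Matrix.stdBasis_eq_single]
    simp [Matrix.stdBasis, Matrix.mul_apply, Matrix.single_apply]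
  simp only [this]
  simp

theorem trace_mulLeft_single {G : Type*} [Group G] [Fintype G] [DecidableEq G] (g : G) :
    LinearMap.trace ℂ (MonoidAlgebra ℂ G) (LinearMap.mulLeft ℂ (MonoidAlgebra.single g (1 : ℂ))) =
      if g = 1 then (Fintype.card G : ℂ) else 0 := by
  classical
  rw [LinearMap.trace_eq_matrix_trace ℂ (MonoidAlgebra.basis G ℂ), Matrix.trace]
  have : ∀ x, (LinearMap.toMatrix (MonoidAlgebra.basis G ℂ) (MonoidAlgebra.basis G ℂ)
      (LinearMap.mulLeft ℂ (MonoidAlgebra.single g (1 : ℂ)))).diag x = if g = 1 then 1 else 0 := by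
    intro x
    rw [Matrix.diag_apply, LinearMap.toMatrix_apply, MonoidAlgebra.basis_apply,
      LinearMap.mulLeft_apply, MonoidAlgebra.single_mul_single, one_mul, ← MonoidAlgebra.basis_apply,
      Module.Basis.repr_self, Finsupp.single_apply]
    simp
  simp only [this]
  split_ifs <;> simp

theorem burnside_rep {G : Type*} [Group G] [Fintype G] (g : G) (hg : g ≠ 1) (p k : ℕ)
    (hp : p.Prime) (hk' : Set.ncard {x : G | IsConj g x} = p ^ k) :
    ∃ (d : ℕ) (_ : NeZero d) (ρ : G →* Matrix (Fin d) (Fin d) ℂ),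
      (∃ h, ρ h ≠ 1) ∧ ∃ ζ : ℂ, ρ g = Matrix.scalar (Fin d) ζ := by
  classical
  have hk : (Finset.univ.filter (fun x : G => IsConj g x)).card = p ^ k := by
    rw [← hk', ← Set.ncard_coe_finset]
    congr 1
    ext x
    simp
  by_contra hcon
  push Not at hcon
  obtain ⟨n, d, hd, ⟨φ⟩⟩ := IsSemisimpleRing.exists_algEquiv_pi_matrix_of_isAlgClosed
    (F := ℂ) (R := MonoidAlgebra ℂ G)
  let π : ∀ i, MonoidAlgebra ℂ G →ₐ[ℂ] Matrix (Fin (d i)) (Fin (d i)) ℂ := fun i =>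
    (Pi.evalAlgHom ℂ (fun i => Matrix (Fin (d i)) (Fin (d i)) ℂ) i).comp φ.toAlgHom
  have hπs : ∀ i, Function.Surjective (π i) := fun i M => by
    refine ⟨φ.symm (Pi.single i M), ?_⟩
    simp [π]
  let ρ : ∀ i, G →* Matrix (Fin (d i)) (Fin (d i)) ℂ := fun i =>
    ((π i : MonoidAlgebra ℂ G →* Matrix (Fin (d i)) (Fin (d i)) ℂ)).comp (MonoidAlgebra.of ℂ G)
  have hρ : ∀ i h, ρ i h = π i (MonoidAlgebra.single h 1) := fun i h => rfl
  have hcentral : ∀ i (M : Matrix (Fin (d i)) (Fin (d i)) ℂ), (∀ h, Commute (ρ i h) M) →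
      ∃ ω : ℂ, M = Matrix.scalar (Fin (d i)) ω := by
    intro i M hM
    have h1 : ∀ a, Commute (π i a) M := by
      intro a
      induction a using MonoidAlgebra.induction_linear with
      | zero => simp
      | add f g hf hg => rw [map_add]; exact hf.add_left hg
      | single a r =>
        have : MonoidAlgebra.single a r = r • MonoidAlgebra.single a (1 : ℂ) := by simp
        rw [this, map_smul]
        exact (hM a).smul_left r
    have h2 : M ∈ Set.range (Matrix.scalar (Fin (d i))) := by
      rw [Matrix.mem_range_scalar_iff_commute_single]
      intro r c _
      obtain ⟨a, ha⟩ := hπs i (Matrix.single r c 1)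
      rw [← ha]; exact h1 a
    obtain ⟨ω, hω⟩ := h2
    exact ⟨ω, hω.symm⟩
  -- the trace formula
  have hτ : ∀ h : G, ∑ i, (d i : ℂ) * (ρ i h).trace = if h = 1 then (Fintype.card G : ℂ) else 0 := by
    intro h
    rw [← trace_mulLeft_single h, ← LinearMap.trace_conj' _ φ.toLinearEquiv]
    have : φ.toLinearEquiv.conj (LinearMap.mulLeft ℂ (MonoidAlgebra.single h (1 : ℂ))) =
        LinearMap.mulLeft ℂ (φ (MonoidAlgebra.single h 1)) := by
      ext x
      simp [LinearEquiv.conj_apply]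
    rw [this, trace_mulLeft_pi_matrix]
    rfl
  -- trivial components
  have htriv : ∀ i, (∀ h, ρ i h = 1) → d i = 1 := by
    intro i hi
    by_contra hne
    have h2 : 2 ≤ d i := by
      have := NeZero.ne (d i); omega
    obtain ⟨ω, hω⟩ := hcentral i (Matrix.single ⟨0, by omega⟩ ⟨1, by omega⟩ 1)
      (fun h => by rw [hi h]; exact Commute.one_left _)
    have := congrFun (congrFun hω ⟨0, by omega⟩) ⟨1, by omega⟩
    simp [Matrix.scalar_apply, Matrix.diagonal_apply] at this
  let Tr : Finset (Fin n) := Finset.univ.filter (fun i => ∀ h, ρ i h = 1)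
  have hTrcard : Tr.card = 1 := by
    have h1 : ∑ h : G, ∑ i, (d i : ℂ) * (ρ i h).trace = Fintype.card G := by
      simp only [hτ]; simp
    rw [Finset.sum_comm] at h1
    have h2 : ∀ i, ∑ h : G, (d i : ℂ) * (ρ i h).trace =
        if (∀ h, ρ i h = 1) then (Fintype.card G : ℂ) else 0 := by
      intro i
      split_ifs with hi
      · have := htriv i hi
        simp [hi, this]
      · rw [← Finset.mul_sum, ← Matrix.trace_sum]
        have hl : ∀ k, ρ i k * ∑ h, ρ i h = ∑ h, ρ i h := fun k => by
          rw [Finset.mul_sum]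
          simp only [← map_mul]
          exact Equiv.sum_comp (Equiv.mulLeft k) (fun h => ρ i h)
        have hr : ∀ k, (∑ h, ρ i h) * ρ i k = ∑ h, ρ i h := fun k => by
          rw [Finset.sum_mul]
          simp only [← map_mul]
          exact Equiv.sum_comp (Equiv.mulRight k) (fun h => ρ i h)
        obtain ⟨ω, hω⟩ := hcentral i (∑ h, ρ i h) (fun k => (hl k).trans (hr k).symm)
        push Not at hi
        obtain ⟨k, hk⟩ := hi
        have h3 := hr k
        rw [hω] at h3 ⊢
        have h4 : ω • (ρ i k) = ω • (1 : Matrix (Fin (d i)) (Fin (d i)) ℂ) := by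
          have hs : Matrix.scalar (Fin (d i)) ω = ω • (1 : Matrix (Fin (d i)) (Fin (d i)) ℂ) := by
            rw [Matrix.smul_one_eq_diagonal]; rfl
          rw [hs, smul_mul_assoc, one_mul] at h3
          exact h3
        by_cases h5 : ω = 0
        · simp [h5]
        · exact absurd (smul_right_injective _ h5 h4) hk
    simp only [h2] at h1
    rw [← Finset.sum_filter, Finset.sum_const, nsmul_eq_mul] at h1
    have h0 : (Fintype.card G : ℂ) ≠ 0 := by exact_mod_cast Fintype.card_ne_zero
    have := mul_right_cancel₀ h0 (h1.trans (one_mul _).symm)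
    exact_mod_cast this
  have hgn : ∀ i, ρ i g ^ (orderOf g) = 1 := fun i => by
    rw [← map_pow, pow_orderOf_eq_one, map_one]
  -- nontrivial components
  have hnontriv : ∀ i, (¬ ∀ h, ρ i h = 1) →
      ∃ β : ℂ, IsIntegral ℤ β ∧ (d i : ℂ) * (ρ i g).trace = p * β := by
    intro i hi
    have hχ : IsIntegral ℤ (ρ i g).trace := by
      rw [Matrix.trace_eq_sum_roots_charpoly]
      refine IsIntegral.multiset_sum ?_
      intro z hz
      have h1 : z ∈ spectrum ℂ (ρ i g) := by
        rw [Matrix.mem_spectrum_iff_isRoot_charpoly]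
        exact Polynomial.isRoot_of_mem_roots hz
      have h2 := spectrum.pow_mem_pow (ρ i g) (orderOf g) h1
      rw [hgn, spectrum.one_eq] at h2
      have h3 : z ^ (orderOf g) = 1 := by simpa using h2
      refine IsIntegral.of_pow (orderOf_pos g) ?_
      rw [h3]; exact isIntegral_one
    by_cases hpd : p ∣ d i
    · obtain ⟨c, hc⟩ := hpd
      refine ⟨c * (ρ i g).trace, ?_, ?_⟩
      · exact (isIntegral_natCast c).mul hχ
      · have hc' : (d i : ℂ) = p * c := by exact_mod_cast hc
        linear_combination (ρ i g).trace * hc'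
    · by_cases hz : (ρ i g).trace = 0
      · exact ⟨0, isIntegral_zero, by simp [hz]⟩
      · exfalso
        let CC := Finset.univ.filter (fun x : G => IsConj g x)
        have hCC : ∀ x ∈ CC, (ρ i x).trace = (ρ i g).trace := by
          intro x hx
          obtain ⟨c, hc⟩ := isConj_iff.mp (Finset.mem_filter.mp hx).2
          rw [← hc, map_mul, Matrix.trace_mul_comm, ← map_mul]
          simp
        obtain ⟨ω, hω⟩ := hcentral i (∑ x ∈ CC, ρ i x) (by
          intro h
          rw [Commute, SemiconjBy, Finset.mul_sum, Finset.sum_mul]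
          refine Finset.sum_bij (fun x _ => h * x * h⁻¹) ?_ ?_ ?_ ?_
          · intro x hx
            simp only [CC, Finset.mem_filter, Finset.mem_univ, true_and] at hx ⊢
            exact hx.trans (isConj_iff.mpr ⟨h, rfl⟩)
          · intro x _ y _ hxy
            simpa using hxy
          · intro y hy
            refine ⟨h⁻¹ * y * h, ?_, by group⟩
            simp only [CC, Finset.mem_filter, Finset.mem_univ, true_and] at hy ⊢
            exact hy.trans (isConj_iff.mpr ⟨h⁻¹, by simp⟩)
          · intro x _
            rw [← map_mul, ← map_mul]; congr 1; group)
        have hωint : IsIntegral ℤ ω := by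
          let K : MonoidAlgebra ℤ G := ∑ x ∈ CC, MonoidAlgebra.single x 1
          have hK : IsIntegral ℤ K := IsIntegral.of_finite ℤ K
          let F : MonoidAlgebra ℤ G →+* Matrix (Fin (d i)) (Fin (d i)) ℂ :=
            (π i : MonoidAlgebra ℂ G →+* Matrix (Fin (d i)) (Fin (d i)) ℂ).comp
              (MonoidAlgebra.mapRingHom G (Int.castRingHom ℂ))
          have hF : F K = ∑ x ∈ CC, ρ i x := by
            simp [F, K, hρ]
          have := IsIntegral.map (F.toIntAlgHom) hK
          have h5 : IsIntegral ℤ (algebraMap ℂ (Matrix (Fin (d i)) (Fin (d i)) ℂ) ω) := by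
            have h6 : algebraMap ℂ (Matrix (Fin (d i)) (Fin (d i)) ℂ) ω = F.toIntAlgHom K := by
              change _ = F K
              rw [hF, hω]; rfl
            rw [h6]; exact this
          exact (isIntegral_algebraMap_iff (algebraMap ℂ (Matrix (Fin (d i)) (Fin (d i)) ℂ)).injective).mp h5
        have htr : ((p ^ k : ℕ) : ℂ) * (ρ i g).trace = d i * ω := by
          have h7 := congrArg Matrix.trace hω
          rw [Matrix.trace_sum, Finset.sum_congr rfl hCC, Finset.sum_const, hk] at h7
          rw [← nsmul_eq_mul, h7]
          simp [Matrix.trace, Matrix.scalar_apply]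
        have hcop : IsCoprime ((p ^ k : ℕ) : ℤ) (d i : ℤ) := by
          rw [Nat.isCoprime_iff_coprime]
          exact Nat.Coprime.pow_left k ((Nat.Prime.coprime_iff_not_dvd hp).mpr hpd)
        obtain ⟨u, v, huv⟩ := hcop
        have huv' : (u : ℂ) * ((p ^ k : ℕ) : ℂ) + v * (d i : ℂ) = 1 := by exact_mod_cast huv
        have hd0 : (d i : ℂ) ≠ 0 := by exact_mod_cast NeZero.ne (d i)
        have heq : (ρ i g).trace / (d i : ℂ) = u * ω + v * (ρ i g).trace := by
          rw [div_eq_iff hd0]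
          linear_combination (-(ρ i g).trace) * huv' + u * htr
        have hi2 : IsIntegral ℤ ((ρ i g).trace / (d i : ℂ)) := by
          rw [heq]
          exact ((isIntegral_algebraMap (R := ℤ) (x := u)).mul hωint).add
            ((isIntegral_algebraMap (R := ℤ) (x := v)).mul hχ)
        have := hd i
        obtain ⟨ζ, hζ⟩ := matrix_scalar_of_trace (ρ i g) (orderOf g) (orderOf_pos g) (hgn i) hi2 hz
        push Not at hi
        exact hcon (d i) (hd i) (ρ i) hi ζ hζ
  choose! β hβ1 hβ2 using hnontriv
  have hsum := hτ g
  rw [if_neg hg, ← Finset.sum_filter_add_sum_filter_not Finset.univ (fun i => ∀ h, ρ i h = 1)] at hsum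
  have h1 : ∑ i ∈ Finset.univ.filter (fun i => ∀ h, ρ i h = 1), (d i : ℂ) * (ρ i g).trace = 1 := by
    have : ∀ i ∈ Finset.univ.filter (fun i => ∀ h, ρ i h = 1), (d i : ℂ) * (ρ i g).trace = 1 := by
      intro i hi
      have hi' := (Finset.mem_filter.mp hi).2
      rw [hi' g]; simp [htriv i hi']
    rw [Finset.sum_congr rfl this]
    simp only [Finset.sum_const, nsmul_eq_mul, mul_one]
    exact_mod_cast hTrcard
  have h2 : ∑ i ∈ Finset.univ.filter (fun i => ¬ ∀ h, ρ i h = 1), (d i : ℂ) * (ρ i g).trace =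
      p * ∑ i ∈ Finset.univ.filter (fun i => ¬ ∀ h, ρ i h = 1), β i := by
    rw [Finset.mul_sum]
    exact Finset.sum_congr rfl fun i hi => hβ2 i (Finset.mem_filter.mp hi).2
  rw [h1, h2] at hsum
  set B := ∑ i ∈ Finset.univ.filter (fun i => ¬ ∀ h, ρ i h = 1), β i with hB
  have hBint : IsIntegral ℤ B := IsIntegral.sum _ fun i hi => hβ1 i (Finset.mem_filter.mp hi).2
  have hp0 : (p : ℂ) ≠ 0 := by exact_mod_cast hp.ne_zero
  have hBq : B = algebraMap ℚ ℂ (-(1 / (p : ℚ))) := by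
    have : B = -(1 / (p : ℂ)) := by field_simp; linear_combination hsum
    rw [this]; simp
  rw [hBq] at hBint
  have hq : IsIntegral ℤ (-(1 / (p : ℚ))) :=
    (isIntegral_algebraMap_iff (algebraMap ℚ ℂ).injective).mp hBint
  obtain ⟨z, hz⟩ := IsIntegrallyClosed.isIntegral_iff.mp hq
  have hpq : (p : ℚ) ≠ 0 := by exact_mod_cast hp.ne_zero
  have h3 : (z : ℚ) * p = -1 := by
    have : (z : ℚ) = -(1 / (p : ℚ)) := by simpa using hz
    rw [this]; field_simp
  have h4 : z * (p : ℤ) = -1 := by exact_mod_cast h3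
  have h5 : (p : ℤ) ∣ 1 := ⟨-z, by linarith⟩
  have h6 : p ∣ 1 := by exact_mod_cast h5
  exact hp.one_lt.ne' (Nat.dvd_one.mp h6)


theorem comm_of_simple_of_class {G : Type*} [Group G] [Finite G] [IsSimpleGroup G] (g : G)
    (hg : g ≠ 1) (p k : ℕ) (hp : p.Prime) (hk : Set.ncard {x : G | IsConj g x} = p ^ k) (a b : G) :
    a * b = b * a := by
  have := Fintype.ofFinite G
  obtain ⟨d, _, ρ, ⟨h, hh⟩, ζ, hζ⟩ := burnside_rep g hg p k hp hk
  have hker : ρ.ker = ⊥ := by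
    rcases (inferInstance : ρ.ker.Normal).eq_bot_or_eq_top with h1 | h1
    · exact h1
    · exact absurd (by rw [← MonoidHom.mem_ker, h1]; trivial) hh
  have hinj : Function.Injective ρ := (MonoidHom.ker_eq_bot_iff ρ).mp hker
  have hcen : g ∈ Subgroup.center G := by
    rw [Subgroup.mem_center_iff]
    intro x
    apply hinj
    rw [map_mul, map_mul, hζ]
    exact (Matrix.scalar_commute ζ (fun r => Commute.all _ _) (ρ x)).symm
  have hc : Subgroup.center G = ⊤ := by
    rcases (inferInstance : (Subgroup.center G).Normal).eq_bot_or_eq_top with h1 | h1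
    · rw [h1, Subgroup.mem_bot] at hcen; exact absurd hcen hg
    · exact h1
  have : b ∈ Subgroup.center G := by rw [hc]; trivial
  exact (Subgroup.mem_center_iff.mp this a)

theorem ncard_conj_eq_index {G : Type*} [Group G] (g : G) :
    Set.ncard {x : G | IsConj g x} = (Subgroup.centralizer {g}).index := by
  have h1 := MulAction.index_stabilizer (ConjAct G) g
  rw [ConjAct.orbit_eq_carrier_conjClasses, ConjAct.stabilizer_eq_centralizer] at h1
  have h2 : (ConjClasses.mk g).carrier = {x : G | IsConj g x} := by
    ext x
    rw [ConjClasses.mem_carrier_iff_mk_eq, ConjClasses.mk_eq_mk_iff_isConj]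
    exact isConj_comm
  rw [h2] at h1
  exact h1.symm

theorem simple_pq {G : Type*} [Group G] [Finite G] [IsSimpleGroup G] (p q : ℕ)
    (hp : p.Prime) (hq : q.Prime)
    (h : ∀ r, r.Prime → r ∣ Nat.card G → r = p ∨ r = q) (a b : G) : a * b = b * a := by
  by_cases hc : Subgroup.center G = ⊤
  · have : b ∈ Subgroup.center G := by rw [hc]; trivial
    exact (Subgroup.mem_center_iff.mp this a)
  have hc' : Subgroup.center G = ⊥ := by
    rcases (inferInstance : (Subgroup.center G).Normal).eq_bot_or_eq_top with h1 | h1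
    · exact h1
    · exact absurd h1 hc
  have h1 : Nat.card G ≠ 1 := by
    have := (Finite.one_lt_card_iff_nontrivial (α := G)).mpr inferInstance
    omega
  obtain ⟨r, hr, hrd⟩ := Nat.exists_prime_and_dvd h1
  obtain ⟨s, hs, hrs⟩ : ∃ s, s.Prime ∧ ∀ t, t.Prime → t ∣ Nat.card G → t ≠ r → t = s := by
    rcases h r hr hrd with e | e
    · exact ⟨q, hq, fun t ht htd hne => (h t ht htd).resolve_left (e ▸ hne)⟩
    · exact ⟨p, hp, fun t ht htd hne => (h t ht htd).resolve_right (e ▸ hne)⟩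
  have : Fact r.Prime := ⟨hr⟩
  obtain ⟨S⟩ : Nonempty (Sylow r G) := inferInstance
  have hSn : Nontrivial S := by
    rw [← Finite.one_lt_card_iff_nontrivial]
    have := S.dvd_card_of_dvd_card hrd
    exact lt_of_lt_of_le hr.one_lt (Nat.le_of_dvd Nat.card_pos this)
  have := S.isPGroup'.center_nontrivial
  obtain ⟨⟨z, hz⟩, hz1⟩ := exists_ne (1 : Subgroup.center S)
  have hzz : (z : G) ≠ 1 := by
    intro e; apply hz1; ext; exact e
  have hle : (S : Subgroup G) ≤ Subgroup.centralizer {(z : G)} := by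
    intro x hx
    rw [Subgroup.mem_centralizer_singleton_iff]
    have := Subgroup.mem_center_iff.mp hz ⟨x, hx⟩
    exact congrArg Subtype.val this
  have hnd : ¬ r ∣ (Subgroup.centralizer {(z : G)}).index := fun hd =>
    S.not_dvd_index (hd.trans (Subgroup.index_dvd_of_le hle))
  have hpow : (Subgroup.centralizer {(z : G)}).index =
      s ^ (Subgroup.centralizer {(z : G)}).index.primeFactorsList.length :=
    Nat.eq_prime_pow_of_unique_prime_dvd Subgroup.index_ne_zero_of_finite (fun {t} ht htd =>
      hrs t ht (htd.trans (Subgroup.index_dvd_card _)) (fun e => hnd (e ▸ htd)))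
  exact comm_of_simple_of_class (z : G) hzz s _ hs ((ncard_conj_eq_index _).trans hpow) a b

universe u

theorem burnside_pq (p q : ℕ) (hp : p.Prime) (hq : q.Prime) (n : ℕ) :
    ∀ (G : Type u) [Group G] [Finite G], Nat.card G = n →
    (∀ r, r.Prime → r ∣ Nat.card G → r = p ∨ r = q) → Group.IsSolvable G := by
  induction n using Nat.strong_induction_on with
  | _ n ih =>
    intro G _ _ hn h
    by_cases hN : ∃ N : Subgroup G, N.Normal ∧ N ≠ ⊥ ∧ N ≠ ⊤
    · obtain ⟨N, hNn, hb, ht⟩ := hN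
      have hm := N.card_mul_index
      have h1 : 1 < N.index := by
        have : N.index ≠ 0 := Subgroup.index_ne_zero_of_finite
        have : N.index ≠ 1 := fun e => ht (Subgroup.index_eq_one.mp e)
        omega
      have h2 : 1 < Nat.card N := by
        have := Nat.card_pos (α := N)
        have : Nat.card N ≠ 1 := fun e => hb (Subgroup.card_eq_one.mp e)
        omega
      have i1 : Group.IsSolvable N := ih (Nat.card N) (by nlinarith) N rfl
        (fun r hr hd => h r hr (hd.trans N.card_subgroup_dvd_card))
      have i2 : Group.IsSolvable (G ⧸ N) := ih (Nat.card (G ⧸ N)) (by rw [← Subgroup.index]; nlinarith)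
        (G ⧸ N) rfl
        (fun r hr hd => h r hr (hd.trans N.card_quotient_dvd_card))
      exact Group.isSolvable_of_ker_le_range N.subtype (QuotientGroup.mk' N) (by simp)
    · push Not at hN
      by_cases hs : Nontrivial G
      · have : IsSimpleGroup G := ⟨fun N hNn => by
          by_cases hb : N = ⊥
          · exact Or.inl hb
          · exact Or.inr (hN N hNn hb)⟩
        exact Group.isSolvable_of_comm (simple_pq p q hp hq h)
      · rw [not_nontrivial_iff_subsingleton] at hs
        exact Group.isSolvable_of_comm (fun a b => Subsingleton.elim _ _)


/-- The set of elements inverted by an automorphism. -/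
def invSet {G : Type*} [Group G] (θ : G ≃* G) : Set G := {g | θ g = g⁻¹}

/-- The twist of an automorphism by conjugation. -/
def twist {G : Type*} [Group G] (θ : G ≃* G) (x : G) : G ≃* G := θ.trans (MulAut.conj x)

theorem mem_invSet {G : Type*} [Group G] {θ : G ≃* G} {g : G} : g ∈ invSet θ ↔ θ g = g⁻¹ := Iff.rfl

theorem twist_apply {G : Type*} [Group G] (θ : G ≃* G) (x g : G) :
    twist θ x g = x * θ g * x⁻¹ := rfl

theorem mem_twist {G : Type*} [Group G] {θ : G ≃* G} {x : G} (hx : x ∈ invSet θ) (g : G) :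
    g ∈ invSet (twist θ x) ↔ g * x ∈ invSet θ := by
  rw [mem_invSet] at *
  rw [mem_invSet, twist_apply, map_mul, hx, mul_inv_rev]
  constructor
  · intro h
    rw [← h]; group
  · intro h
    rw [mul_assoc, h]; group

theorem ncard_twist {G : Type*} [Group G] {θ : G ≃* G} {x : G} (hx : x ∈ invSet θ) :
    (invSet (twist θ x)).ncard = (invSet θ).ncard := by
  have : invSet θ = (fun g => g * x) '' invSet (twist θ x) := by
    ext g
    constructor
    · intro hg
      exact ⟨g * x⁻¹, (mem_twist hx _).mpr (by simpa using hg), by simp⟩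
    · rintro ⟨y, hy, rfl⟩
      exact (mem_twist hx _).mp hy
  rw [this, Set.ncard_image_of_injective _ (mul_left_injective x)]

theorem mul_mem_invSet {G : Type*} [Group G] {θ : G ≃* G} {x y : G} (hx : x ∈ invSet θ)
    (hy : y ∈ invSet θ) : x * y ∈ invSet θ ↔ x * y = y * x := by
  rw [mem_invSet] at *
  rw [map_mul, hx, hy, ← mul_inv_rev, inv_inj]
  exact eq_comm

theorem one_mem_invSet {G : Type*} [Group G] (θ : G ≃* G) : (1 : G) ∈ invSet θ := by
  simp [mem_invSet]

/-- counting along right cosets -/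
theorem card_coset_le {G : Type*} [Group G] [Finite G] (H : Subgroup G) (A S : Set G) (M : ℕ)
    (hS : ∀ h ∈ H, ∀ s ∈ S, h * s ∈ S) (hA : A ⊆ S)
    (hM : ∀ x ∈ A, {h | h ∈ H ∧ h * x ∈ A}.ncard ≤ M) :
    A.ncard * Nat.card H ≤ S.ncard * M := by
  classical
  have := Fintype.ofFinite G
  rw [Set.ncard_eq_toFinset_card' A, Set.ncard_eq_toFinset_card' S]
  refine Finset.card_mul_le_card_mul (fun a s => s * a⁻¹ ∈ H) ?_ ?_
  · intro a ha
    rw [Set.mem_toFinset] at ha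
    rw [← SetLike.coe_sort_coe, Nat.card_coe_set_eq, Set.ncard_eq_toFinset_card']
    refine Finset.card_le_card_of_injOn (fun h => h * a) ?_ (mul_left_injective a).injOn
    intro h hh
    have hh' : h ∈ H := by simpa using hh
    simp only [Finset.coe_bipartiteAbove, Set.mem_ofPred_eq]
    exact ⟨Set.mem_toFinset.mpr (hS h hh' a (hA ha)), by simpa using hh'⟩
  · intro s hs
    by_cases he : ∃ x ∈ A, s * x⁻¹ ∈ H
    · obtain ⟨x, hx, hsx⟩ := he
      refine le_trans ?_ (hM x hx)
      rw [← Set.ncard_coe_finset]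
      refine Set.ncard_le_ncard_of_injOn (fun a => a * x⁻¹) ?_ (mul_left_injective _).injOn
        (Set.toFinite _)
      intro a ha
      simp only [Finset.coe_bipartiteBelow, Set.mem_toFinset, Set.mem_ofPred_eq] at ha
      refine ⟨?_, by simpa using ha.1⟩
      have := H.mul_mem (H.inv_mem ha.2) hsx
      simpa using this
    · push Not at he
      rw [Finset.card_eq_zero.mpr]
      · exact Nat.zero_le _
      · ext a
        simp only [Finset.mem_bipartiteBelow, Set.mem_toFinset]
        constructor
        · rintro ⟨h1, h2⟩; exact absurd h2 (he a h1)
        · simp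

theorem exists_twist {G : Type*} [Group G] [Finite G] (H : Subgroup G) (θ : G ≃* G) :
    ∃ x ∈ invSet θ, (invSet θ).ncard * Nat.card H ≤
      Nat.card G * {h | h ∈ H ∧ h ∈ invSet (twist θ x)}.ncard := by
  by_contra hcon
  push Not at hcon
  let M := (((invSet θ).ncard * Nat.card H - 1) / Nat.card G)
  have hpos : 0 < Nat.card G := Nat.card_pos
  have hI : 0 < (invSet θ).ncard :=
    (Set.ncard_pos (Set.toFinite _)).mpr ⟨1, one_mem_invSet θ⟩
  have hH : 0 < Nat.card H := Nat.card_pos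
  have h1 := card_coset_le H (invSet θ) Set.univ M (fun _ _ _ _ => trivial) (fun _ _ => trivial) (by
    intro x hx
    have h2 := hcon x hx
    have h3 : {h | h ∈ H ∧ h * x ∈ invSet θ} = {h | h ∈ H ∧ h ∈ invSet (twist θ x)} := by
      ext h; simp only [Set.mem_ofPred_eq, mem_twist hx]
    rw [h3, Nat.le_div_iff_mul_le hpos]
    rw [mul_comm]
    omega)
  rw [Set.ncard_univ] at h1
  have h4 : Nat.card G * M ≤ (invSet θ).ncard * Nat.card H - 1 := Nat.mul_div_le _ _
  have := Nat.mul_pos hI hH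
  omega

theorem le_of_two_mul_card {G : Type*} [Group G] [Finite G] {K H : Subgroup G} (hK : K ≤ H)
    (h : Nat.card H < 2 * Nat.card K) : K = H := by
  obtain ⟨c, hc⟩ := Subgroup.card_dvd_of_le hK
  have hpos : 0 < Nat.card K := Nat.card_pos
  have hpos2 : 0 < Nat.card H := Nat.card_pos
  have : c = 1 := by
    have : c < 2 := by by_contra h2; push Not at h2; nlinarith
    have : c ≠ 0 := by rintro rfl; omega
    omega
  subst this
  exact Subgroup.eq_of_le_of_card_ge hK (by omega)

theorem three_quarters {G : Type*} [Group G] [Finite G] (H : Subgroup G) (J : Set G)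
    (hJH : ∀ x ∈ J, x ∈ H) (hJ : ∀ x ∈ J, ∀ y ∈ J, x * y ∈ J ↔ x * y = y * x)
    (hcard : 3 * Nat.card H < 4 * J.ncard) :
    (∀ x ∈ H, x ∈ J) ∧ ∀ x ∈ H, ∀ y ∈ H, x * y = y * x := by
  have hnc : ∀ K : Subgroup G, Nat.card K = (K : Set G).ncard := fun K => by
    rw [← SetLike.coe_sort_coe, Nat.card_coe_set_eq]
  have hcen : ∀ h ∈ J, ∀ x ∈ H, h * x = x * h := by
    intro h hh
    have hinj : Function.Injective (fun j : G => h * j) := mul_right_injective h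
    have h1 : (J ∩ (fun j => h * j) ⁻¹' J).ncard ≤ Nat.card (H ⊓ Subgroup.centralizer {h} : Subgroup G) := by
      rw [hnc]
      refine Set.ncard_le_ncard ?_ (Set.toFinite _)
      rintro j ⟨hj1, hj2⟩
      refine ⟨hJH j hj1, ?_⟩
      refine Subgroup.mem_centralizer_singleton_iff.mpr ?_
      exact ((hJ h hh j hj1).mp hj2).symm
    have h2 : ((fun j => h * j) '' J ∪ J).ncard ≤ Nat.card H := by
      rw [hnc]
      refine Set.ncard_le_ncard ?_ (Set.toFinite _)
      rintro _ (⟨j, hj, rfl⟩ | hj)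
      · exact H.mul_mem (hJH h hh) (hJH j hj)
      · exact hJH _ hj
    have h3 := Set.ncard_union_add_ncard_inter ((fun j => h * j) '' J) J (Set.toFinite _) (Set.toFinite _)
    rw [Set.ncard_image_of_injective _ hinj] at h3
    have h4 : (J ∩ (fun j => h * j) ⁻¹' J).ncard = ((fun j => h * j) '' J ∩ J).ncard := by
      rw [← Set.ncard_image_of_injective _ hinj, Set.image_inter_preimage]
    have h5 := le_of_two_mul_card (K := H ⊓ Subgroup.centralizer {h}) (H := H) inf_le_left (by omega)
    intro x hx
    rw [← h5] at hx
    exact (Subgroup.mem_centralizer_singleton_iff.mp hx.2).symm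
  have hab : ∀ x ∈ H, ∀ y ∈ H, x * y = y * x := by
    have h1 : J.ncard ≤ Nat.card (H ⊓ Subgroup.centralizer (H : Set G) : Subgroup G) := by
      rw [hnc]
      refine Set.ncard_le_ncard ?_ (Set.toFinite _)
      intro j hj
      refine ⟨hJH j hj, ?_⟩
      refine Subgroup.mem_centralizer_iff.mpr ?_
      intro x hx
      exact (hcen j hj x hx).symm
    have h5 := le_of_two_mul_card (K := H ⊓ Subgroup.centralizer (H : Set G)) (H := H) inf_le_left (by omega)
    intro x hx y hy
    rw [← h5] at hy
    exact Subgroup.mem_centralizer_iff.mp hy.2 x hx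
  refine ⟨?_, hab⟩
  intro x hx
  have hinj : Function.Injective (fun j : G => x * j⁻¹) := fun a b hab => by simpa using hab
  have h2 : ((fun j => x * j⁻¹) '' J ∪ J).ncard ≤ Nat.card H := by
    rw [hnc]
    refine Set.ncard_le_ncard ?_ (Set.toFinite _)
    rintro _ (⟨j, hj, rfl⟩ | hj)
    · exact H.mul_mem hx (H.inv_mem (hJH j hj))
    · exact hJH _ hj
  have h3 := Set.ncard_union_add_ncard_inter ((fun j => x * j⁻¹) '' J) J (Set.toFinite _) (Set.toFinite _)
  rw [Set.ncard_image_of_injective _ hinj] at h3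
  have h4 : ((fun j => x * j⁻¹) '' J ∩ J).Nonempty := by
    rw [← Set.ncard_pos (Set.toFinite _)]; omega
  obtain ⟨_, ⟨j, hj, rfl⟩, hj2⟩ := h4
  have := (hJ _ hj2 j hj).mpr (hab _ (hJH _ hj2) _ (hJH _ hj))
  simpa using this


theorem natCard_eq_ncard {G : Type*} [Group G] (K : Subgroup G) : Nat.card K = (K : Set G).ncard := by
  rw [← SetLike.coe_sort_coe, Nat.card_coe_set_eq]

theorem pgroup_eq_of_card {G : Type*} [Group G] [Finite G] {p : ℕ} (hp : p.Prime) {K P : Subgroup G}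
    (hP : IsPGroup p P) (hK : K ≤ P) (h : Nat.card P < p * Nat.card K) : K = P := by
  have : Fact p.Prime := ⟨hp⟩
  obtain ⟨n, hn⟩ := IsPGroup.iff_card.mp hP
  obtain ⟨c, hc⟩ := Subgroup.card_dvd_of_le hK
  have hpos : 0 < Nat.card K := Nat.card_pos
  have hcp : c < p := by
    by_contra h2; push Not at h2; nlinarith
  have hcd : c ∣ p ^ n := by rw [← hn, hc]; exact dvd_mul_left _ _
  obtain ⟨m, hm, rfl⟩ := (Nat.dvd_prime_pow hp).mp hcd
  have : m = 0 := by
    by_contra h0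
    have := Nat.le_of_dvd (pow_pos hp.pos m) (dvd_pow_self p h0)
    omega
  subst this
  rw [pow_zero, mul_one] at hc
  exact Subgroup.eq_of_le_of_card_ge hK (by omega)

theorem sylow_inverted {G : Type*} [Group G] [Finite G] {p : ℕ} (hp : p.Prime) (hp5 : 5 ≤ p)
    (P : Subgroup G) (hP : IsPGroup p P) (θ : G ≃* G)
    (h : 2 * Nat.card P < 9 * {h | h ∈ P ∧ h ∈ invSet θ}.ncard) : ∀ u ∈ P, θ u = u⁻¹ := by
  have : Fact p.Prime := ⟨hp⟩
  set J : Set G := {h | h ∈ P ∧ h ∈ invSet θ} with hJ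
  have hJP : J ⊆ P := fun x hx => hx.1
  have hL : Subgroup.closure J = P := by
    refine pgroup_eq_of_card hp hP ((Subgroup.closure_le P).mpr hJP) ?_
    have h1 : J.ncard ≤ Nat.card (Subgroup.closure J) := by
      rw [natCard_eq_ncard]
      exact Set.ncard_le_ncard Subgroup.subset_closure (Set.toFinite _)
    nlinarith
  have hθP : ∀ u ∈ P, θ u ∈ P := by
    intro u hu
    rw [← hL] at hu
    induction hu using Subgroup.closure_induction with
    | mem x hx => rw [hx.2]; exact P.inv_mem hx.1
    | one => rw [map_one]; exact P.one_mem
    | mul x y _ _ h1 h2 => rw [map_mul]; exact P.mul_mem h1 h2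
    | inv x _ h1 => rw [map_inv]; exact P.inv_mem h1
  have hθθ : ∀ u ∈ P, θ (θ u) = u := by
    intro u hu
    rw [← hL] at hu
    induction hu using Subgroup.closure_induction with
    | mem x hx => rw [hx.2, map_inv, hx.2, inv_inv]
    | one => simp
    | mul x y _ _ h1 h2 => rw [map_mul, map_mul, h1, h2]
    | inv x _ h1 => rw [map_inv, map_inv, h1]
  let φ : P →* P := (θ.toMonoidHom.comp P.subtype).codRestrict P (fun u => hθP u u.2)
  have hφ : ∀ u, ((φ u : P) : G) = θ u := fun u => rfl
  let F : Subgroup G := P ⊓ θ.toMonoidHom.eqLocus (MonoidHom.id G)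
  have hF : ∀ f, f ∈ F ↔ f ∈ P ∧ θ f = f := fun f => Iff.rfl
  have hodd : Odd (Nat.card P) := by
    obtain ⟨n, hn⟩ := IsPGroup.iff_card.mp hP
    rw [hn]
    exact (hp.odd_of_ne_two (by omega)).pow
  have hsq : ∀ a ∈ P, ∀ b ∈ P, a ^ 2 = b ^ 2 → a = b := by
    intro a ha b hb hab
    have := (powCoprime (G := P) (n := 2) hodd.coprime_two_right).injective
    have h2 : (⟨a, ha⟩ : P) = ⟨b, hb⟩ := this (Subtype.ext hab)
    exact congrArg Subtype.val h2
  have hcount : J.ncard * Nat.card F ≤ Nat.card P := by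
    rw [natCard_eq_ncard, natCard_eq_ncard, ← Set.ncard_prod]
    refine Set.ncard_le_ncard_of_injOn (fun q : G × G => q.1 * q.2) ?_ ?_ (Set.toFinite _)
    · rintro ⟨a, b⟩ ⟨ha, hb⟩
      exact P.mul_mem ha.1 hb.1
    · rintro ⟨a, b⟩ ⟨ha, hb⟩ ⟨a', b'⟩ ⟨ha', hb'⟩ hab
      simp only at hab ha hb ha' hb'
      have e1 : θ a = a⁻¹ := ha.2
      have e2 : θ b = b := hb.2
      have e3 : θ a' = a'⁻¹ := ha'.2
      have e4 : θ b' = b' := hb'.2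
      have k : a ^ 2 = a' ^ 2 := by
        have s1 : a ^ 2 = (a * b) * (θ (a * b))⁻¹ := by rw [map_mul, e1, e2]; simp [pow_two]
        have s2 : a' ^ 2 = (a' * b') * (θ (a' * b'))⁻¹ := by rw [map_mul, e3, e4]; simp [pow_two]
        rw [s1, s2, hab]
      have e5 := hsq a ha.1 a' ha'.1 k
      subst e5
      simpa using hab
  have hFb : F = ⊥ := by
    symm
    refine pgroup_eq_of_card hp (hP.to_le inf_le_left) bot_le ?_
    rw [Subgroup.card_bot]
    have : 0 < Nat.card F := Nat.card_pos
    by_contra h5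
    push Not at h5
    have : 5 ≤ Nat.card F := by omega
    nlinarith
  have hfpf : MonoidHom.FixedPointFree φ := by
    intro u hu
    have : (u : G) ∈ F := ⟨u.2, congrArg Subtype.val hu⟩
    rw [hFb, Subgroup.mem_bot] at this
    exact Subtype.ext this
  have hinv : Function.Involutive φ := fun u => Subtype.ext (hθθ u u.2)
  intro u hu
  have := congrFun (hfpf.coe_eq_inv_of_involutive hinv) ⟨u, hu⟩
  exact congrArg Subtype.val this

/-- Bound for the number of inverted elements given an inverted abelian subgroup. -/
theorem card_le_of_inverted {G : Type*} [Group G] [Finite G] (θ : G ≃* G) (A : Subgroup G)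
    (hA : ∀ u ∈ A, θ u = u⁻¹) (q : ℕ) (hq : 0 < q)
    (hM : ∀ y, y ∉ Subgroup.centralizer (A : Set G) →
      q * Nat.card (A ⊓ Subgroup.centralizer {y} : Subgroup G) ≤ Nat.card A) :
    q * (invSet θ).ncard + Nat.card (Subgroup.centralizer (A : Set G)) ≤
      q * {x | x ∈ Subgroup.centralizer (A : Set G) ∧ x ∈ invSet θ}.ncard + Nat.card G := by
  set C := Subgroup.centralizer (A : Set G) with hC
  have hab : A ≤ C := by
    intro u hu
    rw [hC, Subgroup.mem_centralizer_iff]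
    intro v hv
    have := hA _ (A.mul_mem hu hv)
    rw [map_mul, hA u hu, hA v hv, ← mul_inv_rev, inv_inj] at this
    exact this
  have h1 := card_coset_le A (invSet θ \ C) (Set.univ \ C) (Nat.card A / q) (by
      rintro h hh s ⟨-, hs⟩
      exact ⟨trivial, fun hc => hs ((C.mul_mem_cancel_left (hab hh)).mp hc)⟩)
    (fun x hx => ⟨trivial, hx.2⟩) (by
      rintro y ⟨hy, hyC⟩
      rw [Nat.le_div_iff_mul_le hq, mul_comm]
      refine le_trans ?_ (hM y hyC)
      rw [natCard_eq_ncard]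
      refine Nat.mul_le_mul_left q (Set.ncard_le_ncard ?_ (Set.toFinite _))
      rintro u ⟨hu, huy, -⟩
      exact ⟨hu, Subgroup.mem_centralizer_singleton_iff.mpr ((mul_mem_invSet (hA u hu) hy).mp huy)⟩)
  have h2 : (Set.univ \ (C : Set G)).ncard + Nat.card C = Nat.card G := by
    rw [natCard_eq_ncard, Set.ncard_sdiff_add_ncard_of_subset (Set.subset_univ _) (Set.toFinite _), Set.ncard_univ]
  have h3 : (invSet θ \ C).ncard + {x | x ∈ C ∧ x ∈ invSet θ}.ncard = (invSet θ).ncard := by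
    have : {x | x ∈ C ∧ x ∈ invSet θ} = invSet θ ∩ C := by
      ext x; exact and_comm
    rw [this, add_comm]
    exact Set.ncard_inter_add_ncard_sdiff_eq_ncard _ _ (Set.toFinite _)
  have hpos : 0 < Nat.card A := Nat.card_pos
  have h4 : q * (invSet θ \ C).ncard ≤ (Set.univ \ (C : Set G)).ncard := by
    have h5 := Nat.div_mul_le_self (Nat.card A) q
    have h6 : (invSet θ \ C).ncard * Nat.card A * q ≤ (Set.univ \ (C : Set G)).ncard * Nat.card A :=
      calc _ ≤ (Set.univ \ (C : Set G)).ncard * (Nat.card A / q) * q := Nat.mul_le_mul_right q h1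
        _ = (Set.univ \ (C : Set G)).ncard * (Nat.card A / q * q) := by ring
        _ ≤ _ := Nat.mul_le_mul_left _ h5
    refine Nat.le_of_mul_le_mul_right (c := Nat.card A) ?_ hpos
    linarith
  nlinarith

theorem inf_centralizer_card {G : Type*} [Group G] [Finite G] {p : ℕ} (hp : p.Prime)
    (P : Subgroup G) (hP : IsPGroup p P) (y : G) (hy : y ∉ Subgroup.centralizer (P : Set G)) :
    p * Nat.card (P ⊓ Subgroup.centralizer {y} : Subgroup G) ≤ Nat.card P := by
  by_contra h
  push Not at h
  have := pgroup_eq_of_card hp hP inf_le_left h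
  apply hy
  rw [Subgroup.mem_centralizer_iff]
  intro u hu
  have hu' : u ∈ P ⊓ Subgroup.centralizer {y} := by rw [this]; exact hu
  exact Subgroup.mem_centralizer_singleton_iff.mp hu'.2


open scoped commutatorElement

theorem cs_perfect {G : Type*} [Group G]
    (hchar : ∀ K : Subgroup G, K.Characteristic → K = ⊥ ∨ K = ⊤) (hns : ¬ Group.IsSolvable G) :
    commutator G = ⊤ := by
  rcases hchar (commutator G) inferInstance with h | h
  · exfalso
    apply hns
    apply Group.isSolvable_of_comm
    intro a b
    have : ⁅a, b⁆ ∈ commutator G := Subgroup.commutator_mem_commutator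
      (Subgroup.mem_top a) (Subgroup.mem_top b)
    rw [h, Subgroup.mem_bot, commutatorElement_eq_one_iff_mul_comm] at this
    exact this
  · exact h

theorem cs_center {G : Type*} [Group G]
    (hchar : ∀ K : Subgroup G, K.Characteristic → K = ⊥ ∨ K = ⊤) (hns : ¬ Group.IsSolvable G) :
    Subgroup.center G = ⊥ := by
  rcases hchar (Subgroup.center G) inferInstance with h | h
  · exact h
  · exfalso
    apply hns
    apply Group.isSolvable_of_comm
    intro a b
    have : b ∈ Subgroup.center G := by rw [h]; trivial
    exact Subgroup.mem_center_iff.mp this a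

theorem hom_trivial {G K : Type*} [Group G] [Group K] (hG : commutator G = ⊤) [Group.IsSolvable K]
    (f : G →* K) (g : G) : f g = 1 := by
  have h1 : commutator f.range = ⊤ := by
    rw [← top_le_iff]
    have h2 : (commutator G).map f.rangeRestrict = ⊤ := by
      rw [hG, ← MonoidHom.range_eq_map]
      exact MonoidHom.range_eq_top.mpr f.rangeRestrict_surjective
    rw [← h2, commutator_def, Subgroup.map_commutator]
    exact Subgroup.commutator_mono le_top le_top
  by_contra hne
  have : Nontrivial f.range := ⟨⟨f g, ⟨g, rfl⟩⟩, 1, fun e => hne (congrArg Subtype.val e)⟩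
  exact (Group.IsSolvable.commutator_lt_top_of_nontrivial f.range).ne h1

theorem perm_solvable {X : Type*} [Finite X] (h : Nat.card X ≤ 4) : Group.IsSolvable (Equiv.Perm X) := by
  refine burnside_pq 2 3 Nat.prime_two Nat.prime_three _ _ rfl ?_
  intro r hr hd
  rw [Nat.card_perm] at hd
  have h1 := (Nat.Prime.dvd_factorial hr).mp hd
  have h2 := hr.two_le
  have : r ≤ 4 := by omega
  interval_cases r
  · exact Or.inl rfl
  · exact Or.inr rfl
  · exact absurd hr (by norm_num)

theorem no_small_index {G : Type*} [Group G] [Finite G] (hG : commutator G = ⊤) (H : Subgroup G)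
    (h : H.index ≤ 4) : H = ⊤ := by
  have := perm_solvable (X := G ⧸ H) h
  rw [← top_le_iff]
  intro g _
  have h1 := hom_trivial hG (MulAction.toPermHom G (G ⧸ H)) g
  have h2 := Equiv.congr_fun h1 ((1 : G) : G ⧸ H)
  rw [MulAction.toPermHom_apply, MulAction.toPerm_apply, Equiv.Perm.one_apply,
    MulAction.Quotient.smul_coe, smul_eq_mul, mul_one] at h2
  have h3 := QuotientGroup.eq.mp h2
  simpa using h3

theorem pgroup_solvable {G : Type*} [Group G] [Finite G] {p : ℕ} [Fact p.Prime] (h : IsPGroup p G) :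
    Group.IsSolvable G := by
  have := h.isNilpotent
  infer_instance

theorem sylow_ne_bot {G : Type*} [Group G] [Finite G] {p : ℕ} [hp : Fact p.Prime] (hd : p ∣ Nat.card G)
    (P : Sylow p G) : (P : Subgroup G) ≠ ⊥ := by
  intro h
  have := P.dvd_card_of_dvd_card hd
  rw [h, Subgroup.card_bot] at this
  exact hp.out.one_lt.ne' (Nat.dvd_one.mp this)

theorem sylow_ne_top {G : Type*} [Group G] [Finite G] {p : ℕ} [hp : Fact p.Prime]
    (hns : ¬ Group.IsSolvable G) (P : Sylow p G) : (P : Subgroup G) ≠ ⊤ := by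
  intro h
  apply hns
  have h1 := P.isPGroup'
  rw [h] at h1
  exact pgroup_solvable (h1.of_equiv Subgroup.topEquiv)

theorem cs_sylow_card {G : Type*} [Group G] [Finite G]
    (hchar : ∀ K : Subgroup G, K.Characteristic → K = ⊥ ∨ K = ⊤) (hns : ¬ Group.IsSolvable G)
    {p : ℕ} [hp : Fact p.Prime] (hd : p ∣ Nat.card G) : Nat.card (Sylow p G) ≠ 1 := by
  intro h1
  obtain ⟨P⟩ : Nonempty (Sylow p G) := inferInstance
  have hn : (P : Subgroup G).Normal := by
    rw [← Subgroup.normalizer_eq_top_iff, ← Subgroup.index_eq_one, ← h1]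
    exact P.card_eq_index_normalizer.symm
  have := P.characteristic_of_normal hn
  rcases hchar P this with h | h
  · exact sylow_ne_bot hd P h
  · exact sylow_ne_top hns P h

theorem perfect_transfer {G : Type*} [Group G] [Finite G] (hG : commutator G = ⊤)
    {p : ℕ} [hp : Fact p.Prime] (hd : p ∣ Nat.card G) (P : Sylow p G) :
    ¬ Subgroup.normalizer (P : Set G) ≤ Subgroup.centralizer (P : Set G) := by
  intro hP
  have h1 := MonoidHom.ker_transferSylow_isComplement' P hP
  have hs : Group.IsSolvable P := pgroup_solvable P.isPGroup'
  have h2 : (MonoidHom.transferSylow P hP).ker = ⊤ := by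
    rw [← top_le_iff]
    intro g _
    exact hom_trivial hG _ g
  rw [h2] at h1
  have h3 := Subgroup.isComplement'_top_left.mp h1
  exact sylow_ne_bot hd P h3

open scoped Pointwise in
theorem mulAut_smul_sylow_mem {G : Type*} [Group G] {p : ℕ} (φ : G ≃* G) (Q : Sylow p G) (x : G)
    (h : ∀ P : Sylow p G, x ∈ P) : φ x ∈ Q := by
  let φ' : MulAut G := φ
  have h1 := h (φ'⁻¹ • Q)
  have h2 : x ∈ φ'⁻¹ • (Q : Subgroup G) := h1
  rw [Subgroup.mem_inv_pointwise_smul_iff] at h2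
  exact h2

open scoped Pointwise in
theorem cs_sylow_faithful {G : Type*} [Group G] [Finite G]
    (hchar : ∀ K : Subgroup G, K.Characteristic → K = ⊥ ∨ K = ⊤) (hns : ¬ Group.IsSolvable G)
    {p : ℕ} [hp : Fact p.Prime] (hd : p ∣ Nat.card G) :
    Function.Injective (MulAction.toPermHom G (Sylow p G)) := by
  rw [← MonoidHom.ker_eq_bot_iff]
  set M := (MulAction.toPermHom G (Sylow p G)).ker with hM
  have hMn : ∀ m ∈ M, ∀ P : Sylow p G, m ∈ Subgroup.normalizer (P : Set G) := by
    intro m hm P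
    have h2 := Equiv.congr_fun (MonoidHom.mem_ker.mp hm) P
    exact Sylow.smul_eq_iff_mem_normalizer.mp h2
  have hO : (⨅ P : Sylow p G, (P : Subgroup G)) = ⊥ := by
    rcases hchar (⨅ P : Sylow p G, (P : Subgroup G)) (by
      rw [Subgroup.characteristic_iff_le_comap]
      intro φ x hx
      rw [Subgroup.mem_iInf] at hx
      rw [Subgroup.mem_comap, Subgroup.mem_iInf]
      intro Q
      exact mulAut_smul_sylow_mem φ Q x hx) with h | h
    · exact h
    · exfalso
      obtain ⟨P⟩ : Nonempty (Sylow p G) := inferInstance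
      exact sylow_ne_top hns P (top_le_iff.mp (h ▸ iInf_le _ P))
  have hS : (⨆ P : Sylow p G, (P : Subgroup G)) = ⊤ := by
    rcases hchar (⨆ P : Sylow p G, (P : Subgroup G)) (by
      rw [Subgroup.characteristic_iff_map_le]
      intro φ
      rw [Subgroup.map_iSup]
      refine iSup_le fun P => ?_
      let φ' : MulAut G := φ
      exact le_iSup_of_le (φ' • P) le_rfl) with h | h
    · exfalso
      obtain ⟨P⟩ : Nonempty (Sylow p G) := inferInstance
      exact sylow_ne_bot hd P (le_bot_iff.mp (h ▸ le_iSup (fun P : Sylow p G => (P : Subgroup G)) P))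
    · exact h
  have hMP : ∀ P : Sylow p G, M ⊓ (P : Subgroup G) = ⊥ := by
    intro P
    rw [← le_bot_iff, ← hO]
    refine le_iInf fun Q => ?_
    have hpg : IsPGroup p (M ⊓ (P : Subgroup G) : Subgroup G) := P.isPGroup'.to_le inf_le_right
    have h1 := hpg.inf_normalizer_sylow Q
    intro x hx
    have h2 : x ∈ (M ⊓ (P : Subgroup G)) ⊓ Subgroup.normalizer (Q : Set G) := ⟨hx, hMn x hx.1 Q⟩
    rw [h1] at h2
    exact h2.2
  have hcen : ∀ P : Sylow p G, (P : Subgroup G) ≤ Subgroup.centralizer (M : Set G) := by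
    intro P u hu
    rw [Subgroup.mem_centralizer_iff]
    intro m hm
    have hc : ⁅m, u⁆ ∈ M ⊓ (P : Subgroup G) := by
      rw [commutatorElement_def]
      constructor
      · have : u * m⁻¹ * u⁻¹ ∈ M := (inferInstance : M.Normal).conj_mem _ (M.inv_mem hm) u
        have := M.mul_mem hm this
        simpa [mul_assoc] using this
      · have h1 := (Subgroup.mem_normalizer_iff.mp (hMn m hm P) u).mp hu
        exact (P : Subgroup G).mul_mem h1 ((P : Subgroup G).inv_mem hu)
    rw [hMP P, Subgroup.mem_bot, commutatorElement_eq_one_iff_mul_comm] at hc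
    exact hc
  have h3 : Subgroup.centralizer (M : Set G) = ⊤ := by
    rw [← top_le_iff, ← hS]
    exact iSup_le hcen
  rw [← le_bot_iff, ← cs_center hchar hns]
  exact Subgroup.centralizer_eq_top_iff_subset.mp h3


theorem cs_twist {G : Type*} [Group G] [Finite G] (θ : G ≃* G)
    (hθ : 2 * Nat.card G < 9 * (invSet θ).ncard) {p : ℕ} (hp : p.Prime) (hp5 : 5 ≤ p)
    (P : Subgroup G) (hP : IsPGroup p P) :
    ∃ θ' : G ≃* G, 2 * Nat.card G < 9 * (invSet θ').ncard ∧ ∀ u ∈ P, θ' u = u⁻¹ := by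
  obtain ⟨x, hx, h1⟩ := exists_twist P θ
  refine ⟨twist θ x, by rwa [ncard_twist hx], sylow_inverted hp hp5 P hP _ ?_⟩
  have hpos : 0 < Nat.card P := Nat.card_pos
  have hpos' : 0 < Nat.card G := Nat.card_pos
  set t := {h | h ∈ P ∧ h ∈ invSet (twist θ x)}.ncard
  have h2 : 2 * Nat.card G * Nat.card P < 9 * (invSet θ).ncard * Nat.card P :=
    Nat.mul_lt_mul_of_pos_right hθ hpos
  refine Nat.lt_of_mul_lt_mul_left (a := Nat.card G) ?_
  nlinarith

theorem cs_index_bound {G : Type*} [Group G] [Finite G] (θ : G ≃* G)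
    (hθ : 2 * Nat.card G < 9 * (invSet θ).ncard) {p : ℕ} (hp : p.Prime)
    (P : Subgroup G) (hP : IsPGroup p P) (hinv : ∀ u ∈ P, θ u = u⁻¹) :
    2 * p * (Subgroup.centralizer (P : Set G)).index + 9 <
      9 * p + 9 * (Subgroup.centralizer (P : Set G)).index := by
  have h1 := card_le_of_inverted θ P hinv p hp.pos (fun y hy => inf_centralizer_card hp P hP y hy)
  set C := Subgroup.centralizer (P : Set G)
  have h2 : {x | x ∈ C ∧ x ∈ invSet θ}.ncard ≤ Nat.card C := by
    rw [natCard_eq_ncard]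
    exact Set.ncard_le_ncard (fun x hx => hx.1) (Set.toFinite _)
  have h3 := C.card_mul_index
  have hpos : 0 < Nat.card C := Nat.card_pos
  have hpp := hp.pos
  refine Nat.lt_of_mul_lt_mul_left (a := Nat.card C) ?_
  have h4 : p * (2 * Nat.card G) < p * (9 * (invSet θ).ncard) := Nat.mul_lt_mul_of_pos_left hθ hpp
  have h5 : p * {x | x ∈ C ∧ x ∈ invSet θ}.ncard ≤ p * Nat.card C := Nat.mul_le_mul_left p h2
  have h6 : Nat.card C * (2 * p * C.index + 9) = p * (2 * Nat.card G) + 9 * Nat.card C := by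
    rw [← h3]; ring
  have h7 : Nat.card C * (9 * p + 9 * C.index) = 9 * (p * Nat.card C) + 9 * Nat.card G := by
    rw [← h3]; ring
  rw [h6, h7]
  linarith

theorem cs_index_eq {G : Type*} [Group G] [Finite G]
    (hchar : ∀ K : Subgroup G, K.Characteristic → K = ⊥ ∨ K = ⊤) (hns : ¬ Group.IsSolvable G)
    {p : ℕ} [hp : Fact p.Prime] (hd : p ∣ Nat.card G) (P : Sylow p G) :
    ∃ k t, 2 ≤ k ∧ 1 ≤ t ∧ Nat.card (Sylow p G) = p * t + 1 ∧
      (Subgroup.centralizer (P : Set G)).index = k * (p * t + 1) := by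
  have h1 := card_sylow_modEq_one p G
  have h2 := cs_sylow_card hchar hns (p := p) hd
  have hpos : 0 < Nat.card (Sylow p G) := Nat.card_pos
  obtain ⟨t, ht⟩ := (Nat.modEq_iff_dvd' hpos).mp h1.symm
  have hn : Nat.card (Sylow p G) = p * t + 1 := by omega
  have hle : Subgroup.centralizer (P : Set G) ≤ Subgroup.normalizer (P : Set G) :=
    Subgroup.centralizer_le_normalizer _
  have h3 := Subgroup.relIndex_mul_index hle
  refine ⟨(Subgroup.centralizer (P : Set G)).relIndex (Subgroup.normalizer (P : Set G)), t, ?_, ?_, hn, ?_⟩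
  · have h4 : (Subgroup.centralizer (P : Set G)).relIndex (Subgroup.normalizer (P : Set G)) ≠ 0 := by
      intro h0
      rw [h0, zero_mul] at h3
      exact Subgroup.index_ne_zero_of_finite h3.symm
    have h5 : (Subgroup.centralizer (P : Set G)).relIndex (Subgroup.normalizer (P : Set G)) ≠ 1 := by
      intro h0
      exact perfect_transfer (cs_perfect hchar hns) hd P (Subgroup.relIndex_eq_one.mp h0)
    omega
  · by_contra h0
    have : t = 0 := by omega
    subst this
    omega
  · rw [← h3, ← hn, P.card_eq_index_normalizer]

theorem cs_primes {G : Type*} [Group G] [Finite G]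
    (hchar : ∀ K : Subgroup G, K.Characteristic → K = ⊥ ∨ K = ⊤) (hns : ¬ Group.IsSolvable G)
    (θ : G ≃* G) (hθ : 2 * Nat.card G < 9 * (invSet θ).ncard) {p : ℕ} (hp : p.Prime) (hp5 : 5 ≤ p)
    (hd : p ∣ Nat.card G) : p = 5 := by
  have : Fact p.Prime := ⟨hp⟩
  obtain ⟨P⟩ : Nonempty (Sylow p G) := inferInstance
  obtain ⟨θ', h1, h2⟩ := cs_twist θ hθ hp hp5 P P.isPGroup'
  have h3 := cs_index_bound θ' h1 hp P P.isPGroup' h2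
  obtain ⟨k, t, hk, ht, hn, hc⟩ := cs_index_eq hchar hns hd P
  by_contra hne
  have hp6 : 6 < p := by
    have : p ≠ 6 := by rintro rfl; exact absurd hp (by norm_num)
    omega
  have h4 : 2 * p * (k * (p * t + 1)) + 9 < 9 * p + 9 * (k * (p * t + 1)) := by
    rw [← hc]; exact h3
  have h5 : 2 * (p + 1) ≤ k * (p * t + 1) := by
    apply Nat.mul_le_mul hk
    nlinarith
  generalize k * (p * t + 1) = c at h4 h5
  nlinarith

theorem cs_five {G : Type*} [Group G] [Finite G]
    (hchar : ∀ K : Subgroup G, K.Characteristic → K = ⊥ ∨ K = ⊤) (hns : ¬ Group.IsSolvable G)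
    (θ : G ≃* G) (hθ : 2 * Nat.card G < 9 * (invSet θ).ncard) :
    5 ∣ Nat.card G ∧ 3 ∣ Nat.card G ∧ ∀ r, r.Prime → r ∣ Nat.card G → r = 2 ∨ r = 3 ∨ r = 5 := by
  have h : ∀ r, r.Prime → r ∣ Nat.card G → r = 2 ∨ r = 3 ∨ r = 5 := by
    intro r hr hd
    by_cases h5 : 5 ≤ r
    · exact Or.inr (Or.inr (cs_primes hchar hns θ hθ hr h5 hd))
    · have := hr.two_le
      have : r ≠ 4 := by rintro rfl; exact absurd hr (by norm_num)
      omega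
  refine ⟨?_, ?_, h⟩
  · by_contra h5
    apply hns
    refine burnside_pq 2 3 Nat.prime_two Nat.prime_three _ G rfl fun r hr hd => ?_
    rcases h r hr hd with h | h | h
    · exact Or.inl h
    · exact Or.inr h
    · exact absurd (h ▸ hd) h5
  · by_contra h5
    apply hns
    refine burnside_pq 2 5 Nat.prime_two Nat.prime_five _ G rfl fun r hr hd => ?_
    rcases h r hr hd with h | h | h
    · exact Or.inl h
    · exact absurd (h ▸ hd) h5
    · exact Or.inr h

theorem cs_cases {G : Type*} [Group G] [Finite G]
    (hchar : ∀ K : Subgroup G, K.Characteristic → K = ⊥ ∨ K = ⊤) (hns : ¬ Group.IsSolvable G)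
    (θ : G ≃* G) (hθ : 2 * Nat.card G < 9 * (invSet θ).ncard) [Fact (Nat.Prime 5)] (P : Sylow 5 G)
    (hinv : ∀ u ∈ P, θ u = u⁻¹) :
    (Nat.card (Sylow 5 G) = 16 ∧ (Subgroup.centralizer (P : Set G)).index = 32) ∨
    (Nat.card (Sylow 5 G) = 6 ∧ ∃ k, 2 ≤ k ∧ k < 6 ∧
      (Subgroup.centralizer (P : Set G)).index = k * 6) := by
  obtain ⟨h5, h3, hr⟩ := cs_five hchar hns θ hθ
  have hb : 2 * 5 * (Subgroup.centralizer (P : Set G)).index + 9 <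
      9 * 5 + 9 * (Subgroup.centralizer (P : Set G)).index :=
    cs_index_bound θ hθ Nat.prime_five P P.isPGroup' hinv
  obtain ⟨k, t, hk, ht, hn, hc⟩ := cs_index_eq hchar hns h5 P
  have hb2 : k * (5 * t + 1) < 36 := by rw [← hc]; omega
  have ht4 : t < 4 := by
    by_contra h
    push Not at h
    have : 2 * 21 ≤ k * (5 * t + 1) := Nat.mul_le_mul hk (by omega)
    omega
  interval_cases t
  · right
    exact ⟨hn, k, hk, by omega, by rw [hc]⟩
  · exfalso
    have h11 : 11 ∣ Nat.card G := by
      have h1 : 11 ∣ (Subgroup.centralizer (P : Set G)).index := by rw [hc]; exact dvd_mul_left _ _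
      exact h1.trans (Subgroup.index_dvd_card _)
    rcases hr 11 (by norm_num) h11 with h | h | h <;> omega
  · left
    exact ⟨hn, by rw [hc]; omega⟩


theorem prime_dvd_relIndex {G : Type*} [Group G] [Finite G] {p : ℕ} (hp : p.Prime)
    (C K Q : Subgroup G) (hC : ∀ x ∈ C, ∀ y ∈ C, x * y = y * x) (hQC : Q ≤ C)
    (hQ : IsPGroup p Q) (h : ¬ Q ≤ K) : p ∣ K.relIndex C := by
  by_contra hd
  apply h
  intro u hu
  have hn : (K.subgroupOf C).Normal := ⟨fun n hn g => by
    have : g * n * g⁻¹ = n := by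
      ext
      have := hC g g.2 n n.2
      simp [this]
    rw [this]; exact hn⟩
  have h1 := Subgroup.pow_index_mem (K.subgroupOf C) ⟨u, hQC hu⟩
  have h2 : u ^ K.relIndex C ∈ K := h1
  obtain ⟨k, hk⟩ := hQ ⟨u, hu⟩
  have hk' : u ^ p ^ k = 1 := congrArg Subtype.val hk
  have h3 : (K.relIndex C).Coprime (orderOf u) := by
    refine Nat.Coprime.coprime_dvd_right (orderOf_dvd_of_pow_eq_one hk') ?_
    exact (Nat.Coprime.pow_left k ((Nat.Prime.coprime_iff_not_dvd hp).mpr hd)).symm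
  obtain ⟨m, hm⟩ := exists_pow_eq_self_of_coprime h3
  rw [← hm]
  exact K.pow_mem h2 m

theorem inf_centralizer_card15 {G : Type*} [Group G] [Finite G] (C P R : Subgroup G)
    (hC2 : ∀ x ∈ C, ∀ y ∈ C, x * y = y * x) (hPC : P ≤ C) (hRC : R ≤ C) (hP : IsPGroup 5 P)
    (hR : IsPGroup 3 R) (hCP : C = Subgroup.centralizer (P : Set G))
    (hCR : C = Subgroup.centralizer (R : Set G)) (y : G) (hy : y ∉ C) :
    15 * Nat.card (C ⊓ Subgroup.centralizer {y} : Subgroup G) ≤ Nat.card C := by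
  set K := C ⊓ Subgroup.centralizer {y} with hK
  have hKC : K ≤ C := inf_le_left
  have hm2 : Nat.card K * K.relIndex C = Nat.card C := by
    have h := Subgroup.card_mul_index (K.subgroupOf C)
    rw [Nat.card_congr (Subgroup.subgroupOfEquivOfLe hKC).toEquiv] at h
    exact h
  have d5 : 5 ∣ K.relIndex C := by
    refine prime_dvd_relIndex Nat.prime_five C _ P hC2 hPC hP ?_
    intro hle
    apply hy
    rw [hCP, Subgroup.mem_centralizer_iff]
    intro u hu
    exact Subgroup.mem_centralizer_singleton_iff.mp (hle hu).2
  have d3 : 3 ∣ K.relIndex C := by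
    refine prime_dvd_relIndex Nat.prime_three C _ R hC2 hRC hR ?_
    intro hle
    apply hy
    rw [hCR, Subgroup.mem_centralizer_iff]
    intro u hu
    exact Subgroup.mem_centralizer_singleton_iff.mp (hle hu).2
  have d15 : 15 ∣ K.relIndex C :=
    Nat.Coprime.mul_dvd_of_dvd_of_dvd (by norm_num : Nat.Coprime 3 5) d3 d5
  have hne : K.relIndex C ≠ 0 := by
    intro h0
    rw [h0, mul_zero] at hm2
    exact (Nat.card_pos (α := C)).ne hm2
  have := Nat.le_of_dvd (Nat.pos_of_ne_zero hne) d15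
  rw [← hm2, mul_comm]
  exact Nat.mul_le_mul_left _ this

theorem cs_not_sixteen {G : Type*} [Group G] [Finite G]
    (hchar : ∀ K : Subgroup G, K.Characteristic → K = ⊥ ∨ K = ⊤) (hns : ¬ Group.IsSolvable G)
    (θ : G ≃* G) (hθ : 2 * Nat.card G < 9 * (invSet θ).ncard) [Fact (Nat.Prime 5)] (P : Sylow 5 G)
    (hinv : ∀ u ∈ (P : Subgroup G), θ u = u⁻¹)
    (h32 : (Subgroup.centralizer ((P : Subgroup G) : Set G)).index = 32) : False := by
  obtain ⟨h5, h3, hr⟩ := cs_five hchar hns θ hθ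
  have hf3 : Fact (Nat.Prime 3) := ⟨Nat.prime_three⟩
  have hM := inf_centralizer_card Nat.prime_five (P : Subgroup G) P.isPGroup'
  have h1 := card_le_of_inverted θ P hinv 5 Nat.prime_five.pos hM
  set C := Subgroup.centralizer ((P : Subgroup G) : Set G) with hCdef
  have hcard := C.card_mul_index
  rw [h32] at hcard
  obtain ⟨hC1, hC2⟩ := three_quarters C {x | x ∈ C ∧ x ∈ invSet θ} (fun x hx => hx.1)
    (by
      rintro x ⟨hx1, hx2⟩ y ⟨hy1, hy2⟩
      rw [← mul_mem_invSet hx2 hy2]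
      exact ⟨fun h => h.2, fun h => ⟨C.mul_mem hx1 hy1, h⟩⟩) (by omega)
  have hCinv : ∀ u ∈ C, θ u = u⁻¹ := fun u hu => (hC1 u hu).2
  have hPC : (P : Subgroup G) ≤ C := by
    intro u hu
    rw [hCdef, Subgroup.mem_centralizer_iff]
    intro v hv
    have := hinv _ ((P : Subgroup G).mul_mem hu hv)
    rw [map_mul, hinv u hu, hinv v hv, ← mul_inv_rev, inv_inj] at this
    exact this
  obtain ⟨R0⟩ : Nonempty (Sylow 3 C) := inferInstance
  have hRp : IsPGroup 3 ((R0 : Subgroup C).map C.subtype) := R0.isPGroup'.map C.subtype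
  have hRi : ¬ 3 ∣ ((R0 : Subgroup C).map C.subtype).index := by
    rw [Subgroup.index_map_subtype, h32, Nat.Prime.dvd_mul Nat.prime_three]
    rintro (h | h)
    · exact R0.not_dvd_index h
    · omega
  have hRC : (R0 : Subgroup C).map C.subtype ≤ C := Subgroup.map_subtype_le _
  obtain ⟨R, hRC⟩ : ∃ R : Sylow 3 G, (R : Subgroup G) ≤ C := ⟨hRp.toSylow hRi, hRC⟩
  have hCR : C ≤ Subgroup.centralizer ((R : Subgroup G) : Set G) := by
    intro x hx
    rw [Subgroup.mem_centralizer_iff]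
    intro r hr
    exact hC2 r (hRC hr) x hx
  obtain ⟨k, t, hk, ht, hn, hc⟩ := cs_index_eq hchar hns h3 R
  have hc' : (Subgroup.centralizer ((R : Subgroup G) : Set G)).index = k * (3 * t + 1) := hc
  have hdvd : k * (3 * t + 1) ∣ 32 := by
    rw [← hc', ← h32]
    exact Subgroup.index_dvd_of_le hCR
  have ht1 : t ≠ 1 := by
    rintro rfl
    rw [R.card_eq_index_normalizer] at hn
    have := no_small_index (cs_perfect hchar hns) _ hn.le
    rw [this, Subgroup.index_top] at hn
    omega
  have hidx : k * (3 * t + 1) = 32 := by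
    have hle := Nat.le_of_dvd (by norm_num) hdvd
    have h16 : 2 * (3 * t + 1) ≤ 32 := le_trans (Nat.mul_le_mul_right _ hk) hle
    have : t ≤ 5 := by omega
    have hd2 : (3 * t + 1) ∣ 32 := (dvd_mul_left _ _).trans hdvd
    interval_cases t
    · omega
    · omega
    · omega
    · omega
    · omega
  have hCReq : C = Subgroup.centralizer ((R : Subgroup G) : Set G) := by
    refine Subgroup.eq_of_le_of_card_ge hCR ?_
    have h7 := (Subgroup.centralizer ((R : Subgroup G) : Set G)).card_mul_index
    rw [hc', hidx] at h7
    omega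
  have hCC : Subgroup.centralizer (C : Set G) = C := by
    apply le_antisymm
    · rw [hCdef]
      exact Subgroup.centralizer_le hPC
    · intro x hx
      rw [Subgroup.mem_centralizer_iff]
      intro r hr
      exact hC2 r hr x hx
  have h8 := card_le_of_inverted θ C hCinv 15 (by norm_num) (by
    intro y hy
    rw [hCC] at hy
    exact inf_centralizer_card15 C P R hC2 hPC hRC P.isPGroup' R.isPGroup' hCdef hCReq y hy)
  rw [hCC] at h8
  have h2 : {x | x ∈ C ∧ x ∈ invSet θ}.ncard ≤ Nat.card C := by
    rw [natCard_eq_ncard]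
    exact Set.ncard_le_ncard (fun x hx => hx.1) (Set.toFinite _)
  have hpos : 0 < Nat.card C := Nat.card_pos
  omega


open scoped commutatorElement

theorem iso_of_embed5 {G Y : Type*} [Group G] [Finite G] [Finite Y] (hY : Nat.card Y = 5)
    (f : G →* Equiv.Perm Y) (hf : Function.Injective f) (hG : Nat.card G = 60) :
    Nonempty (G ≃* alternatingGroup (Fin 5)) := by
  have e : Y ≃ Fin 5 := (Finite.equivFinOfCardEq hY)
  let f' : G →* Equiv.Perm (Fin 5) := (e.permCongrHom.toMonoidHom).comp f
  have hf' : Function.Injective f' := e.permCongrHom.injective.comp hf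
  have h1 := f'.range.card_mul_index
  rw [← Nat.card_congr (MonoidHom.ofInjective hf').toEquiv, hG, Nat.card_perm, Nat.card_fin] at h1
  have h2 : f'.range.index = 2 := by
    have : Nat.factorial 5 = 120 := rfl
    omega
  have h3 := Equiv.Perm.eq_alternatingGroup_of_index_eq_two h2
  exact ⟨(MonoidHom.ofInjective hf').trans (MulEquiv.subgroupCongr h3)⟩

theorem stab_embed {A X : Type*} [Group A] [MulAction A X]
    (hker : Function.Injective (MulAction.toPermHom A X)) (a : X) :
    Function.Injective
      (MulAction.toPermHom (MulAction.stabilizer A a) (SubMulAction.ofStabilizer A a)) := by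
  rw [← MonoidHom.ker_eq_bot_iff, eq_bot_iff]
  intro s hs
  rw [Subgroup.mem_bot]
  apply Subtype.ext
  apply hker
  rw [OneMemClass.coe_one, map_one]
  ext x
  rw [MulAction.toPermHom_apply, MulAction.toPerm_apply, Equiv.Perm.one_apply]
  by_cases hx : x = a
  · rw [hx]; exact s.2
  · have := Equiv.congr_fun (MonoidHom.mem_ker.mp hs) ⟨x, hx⟩
    exact congrArg Subtype.val this

theorem iso_of_index_six {A : Type*} [Group A] [Finite A] [IsSimpleGroup A] (H : Subgroup A)
    (hi : H.index = 6) (hc : Nat.card H = 60) : Nonempty (H ≃* alternatingGroup (Fin 5)) := by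
  have hker : Function.Injective (MulAction.toPermHom A (A ⧸ H)) := by
    rw [← MonoidHom.ker_eq_bot_iff]
    rcases (inferInstance : (MulAction.toPermHom A (A ⧸ H)).ker.Normal).eq_bot_or_eq_top with h | h
    · exact h
    · exfalso
      have : H = ⊤ := by
        rw [← top_le_iff]
        intro g _
        have h1 : g ∈ (MulAction.toPermHom A (A ⧸ H)).ker := by rw [h]; trivial
        have h2 := Equiv.congr_fun (MonoidHom.mem_ker.mp h1) ((1 : A) : A ⧸ H)
        rw [MulAction.toPermHom_apply, MulAction.toPerm_apply, Equiv.Perm.one_apply,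
          MulAction.Quotient.smul_coe, smul_eq_mul, mul_one] at h2
        have h3 := QuotientGroup.eq.mp h2
        simpa using h3
      rw [this, Subgroup.index_top] at hi
      omega
  have hst := MulAction.stabilizer_quotient H
  set a : A ⧸ H := ((1 : A) : A ⧸ H) with ha
  have hf := stab_embed hker a
  have e : MulAction.stabilizer A a ≃* H := MulEquiv.subgroupCongr hst
  have hY : Nat.card (SubMulAction.ofStabilizer A a) = 5 := by
    rw [SubMulAction.nat_card_ofStabilizer_eq]
    have : Nat.card (A ⧸ H) = 6 := hi
    rw [this]
  obtain ⟨g⟩ := iso_of_embed5 hY _ hf (by rw [Nat.card_congr e.toEquiv, hc])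
  exact ⟨e.symm.trans g⟩

theorem cs_centralizer_card {G : Type*} [Group G] [Finite G]
    (hinj : Function.Injective (MulAction.toPermHom G (Sylow 5 G))) [hf : Fact (Nat.Prime 5)]
    (h6 : Nat.card (Sylow 5 G) = 6) (P : Sylow 5 G) :
    Nat.card (Subgroup.centralizer ((P : Subgroup G) : Set G)) ≤ 5 := by
  have : Nontrivial (Sylow 5 G) := by
    rw [← Finite.one_lt_card_iff_nontrivial, h6]; norm_num
  obtain ⟨Q, hQ⟩ := exists_ne P
  have hfix : ∀ R : Sylow 5 G, (∀ u ∈ (P : Subgroup G), u • R = R) → R = P := by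
    intro R hR
    have h1 : (P : Subgroup G) ≤ R := by
      have h2 := P.isPGroup'.inf_normalizer_sylow R
      intro u hu
      have h3 : u ∈ (P : Subgroup G) ⊓ Subgroup.normalizer (R : Set G) :=
        ⟨hu, Sylow.smul_eq_iff_mem_normalizer.mp (hR u hu)⟩
      rw [h2] at h3
      exact h3.2
    exact (Sylow.ext (P.is_maximal' R.isPGroup' h1))
  have hPP : ∀ u ∈ (P : Subgroup G), u • P = P := fun u hu =>
    Sylow.smul_eq_iff_mem_normalizer.mpr (Subgroup.le_normalizer hu)
  -- orbit of Q under P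
  have horb : ∀ R : Sylow 5 G, R ≠ P → ∃ u ∈ (P : Subgroup G), u • Q = R := by
    have hsub : MulAction.orbit P Q ⊆ {P}ᶜ := by
      rintro _ ⟨u, rfl⟩ hR
      apply hQ
      have h1 : (u : G) • Q = P := hR
      rw [← inv_smul_smul (u : G) Q, h1]
      exact hPP _ ((P : Subgroup G).inv_mem u.2)
    have hcard : ({P}ᶜ : Set (Sylow 5 G)).ncard = 5 := by
      rw [Set.ncard_compl, h6, Set.ncard_singleton]
    have hdvd : (MulAction.orbit P Q).ncard ∣ Nat.card P := by
      rw [← MulAction.index_stabilizer]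
      exact Subgroup.index_dvd_card _
    obtain ⟨n, hn⟩ := IsPGroup.iff_card.mp P.isPGroup'
    have hle : (MulAction.orbit P Q).ncard ≤ 5 := by
      exact (Set.ncard_le_ncard hsub (Set.toFinite _)).trans hcard.le
    have heq : (MulAction.orbit P Q).ncard = 5 := by
      rw [hn] at hdvd
      obtain ⟨m, hm, hm2⟩ := (Nat.dvd_prime_pow Nat.prime_five).mp hdvd
      have hm0 : m ≠ 0 := by
        rintro rfl
        rw [pow_zero, Set.ncard_eq_one] at hm2
        obtain ⟨x, hx⟩ := hm2
        apply hQ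
        apply hfix
        intro u hu
        have h1 : Q ∈ MulAction.orbit P Q := MulAction.mem_orbit_self Q
        have h2 : u • Q ∈ MulAction.orbit P Q := ⟨⟨u, hu⟩, rfl⟩
        rw [hx] at h1 h2
        rw [Set.mem_singleton_iff.mp h2, ← Set.mem_singleton_iff.mp h1]
      have := Nat.le_self_pow hm0 5
      omega
    have hset : MulAction.orbit P Q = {P}ᶜ :=
      Set.eq_of_subset_of_ncard_le hsub (by omega) (Set.toFinite _)
    intro R hR
    have : R ∈ MulAction.orbit P Q := by rw [hset]; exact hR
    obtain ⟨u, hu⟩ := this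
    exact ⟨u, u.2, hu⟩
  set C := Subgroup.centralizer ((P : Subgroup G) : Set G) with hC
  have hCP : ∀ c ∈ C, c • P = P := fun c hc =>
    Sylow.smul_eq_iff_mem_normalizer.mpr (Subgroup.centralizer_le_normalizer _ hc)
  have hcfix : ∀ c ∈ C, c • Q = Q → c = 1 := by
    intro c hc hcQ
    apply hinj
    rw [map_one]
    ext1 R
    rw [MulAction.toPermHom_apply, MulAction.toPerm_apply, Equiv.Perm.one_apply]
    by_cases hR : R = P
    · rw [hR]; exact hCP c hc
    · obtain ⟨u, hu, rfl⟩ := horb R hR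
      have := Subgroup.mem_centralizer_iff.mp hc u hu
      rw [smul_smul, ← this, mul_smul, hcQ]
  have hcard : ({P}ᶜ : Set (Sylow 5 G)).ncard = 5 := by
    rw [Set.ncard_compl, h6, Set.ncard_singleton]
  rw [natCard_eq_ncard, ← hcard]
  refine Set.ncard_le_ncard_of_injOn (fun c => c • Q) ?_ ?_ (Set.toFinite _)
  · intro c hc hR
    apply hQ
    have h1 : c • Q = P := hR
    rw [← inv_smul_smul c Q, h1]
    exact hCP _ (C.inv_mem hc)
  · intro c hc c' hc' h
    have h1 : (c'⁻¹ * c) • Q = Q := by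
      rw [mul_smul]
      have h2 : c • Q = c' • Q := h
      rw [h2, inv_smul_smul]
    have := hcfix _ (C.mul_mem (C.inv_mem hc') hc) h1
    exact (inv_mul_eq_one.mp this).symm

theorem cs_six {G : Type*} [Group G] [Finite G]
    (hchar : ∀ K : Subgroup G, K.Characteristic → K = ⊥ ∨ K = ⊤) (hns : ¬ Group.IsSolvable G)
    (h5 : 5 ∣ Nat.card G) [hf : Fact (Nat.Prime 5)] (P : Sylow 5 G)
    (hPC : (P : Subgroup G) ≤ Subgroup.centralizer ((P : Subgroup G) : Set G))
    (h6 : Nat.card (Sylow 5 G) = 6) (k : ℕ) (hk : 2 ≤ k) (hk6 : k < 6)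
    (hidx : (Subgroup.centralizer ((P : Subgroup G) : Set G)).index = k * 6) :
    Nonempty (G ≃* alternatingGroup (Fin 5)) := by
  classical
  have hinj := cs_sylow_faithful hchar hns h5
  have hG := cs_perfect hchar hns
  have hC : Nat.card (Subgroup.centralizer ((P : Subgroup G) : Set G)) = 5 := by
    have h1 := cs_centralizer_card hinj h6 P
    have h2 := P.dvd_card_of_dvd_card h5
    have h3 := h2.trans (Subgroup.card_dvd_of_le hPC)
    have := Nat.le_of_dvd Nat.card_pos h3
    omega
  have hcard : Nat.card G = 30 * k := by
    rw [← (Subgroup.centralizer ((P : Subgroup G) : Set G)).card_mul_index, hC, hidx]; ring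
  have e : Sylow 5 G ≃ Fin 6 := Finite.equivFinOfCardEq h6
  let f : G →* Equiv.Perm (Fin 6) :=
    (e.permCongrHom.toMonoidHom).comp (MulAction.toPermHom G (Sylow 5 G))
  have hf' : Function.Injective f := e.permCongrHom.injective.comp hinj
  have hsign : ∀ g, f g ∈ alternatingGroup (Fin 6) := by
    intro g
    rw [Equiv.Perm.mem_alternatingGroup]
    exact hom_trivial hG (Equiv.Perm.sign.comp f) g
  let φ : G →* alternatingGroup (Fin 6) := f.codRestrict _ hsign
  have hφ : Function.Injective φ := fun a b hab => hf' (congrArg Subtype.val hab)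
  have hA : Nat.card (alternatingGroup (Fin 6)) = 360 := by
    rw [nat_card_alternatingGroup, Nat.card_fin]; rfl
  have hsimple : IsSimpleGroup (alternatingGroup (Fin 6)) :=
    alternatingGroup.isSimpleGroup (by simp)
  have hAp : commutator (alternatingGroup (Fin 6)) = ⊤ := by
    rcases (inferInstance : (commutator (alternatingGroup (Fin 6))).Normal).eq_bot_or_eq_top with h | h
    · exfalso
      apply hns
      apply Group.isSolvable_of_comm
      intro a b
      apply hφ
      have h1 : ⁅φ a, φ b⁆ ∈ commutator (alternatingGroup (Fin 6)) :=
        Subgroup.commutator_mem_commutator (Subgroup.mem_top _) (Subgroup.mem_top _)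
      rw [h, Subgroup.mem_bot, commutatorElement_eq_one_iff_mul_comm] at h1
      rw [map_mul, map_mul, h1]
    · exact h
  have e2 : G ≃* φ.range := MonoidHom.ofInjective hφ
  have hm := φ.range.card_mul_index
  rw [← Nat.card_congr e2.toEquiv, hA, hcard] at hm
  have hbig : ¬ φ.range.index ≤ 4 := by
    intro hle
    have := no_small_index hAp _ hle
    rw [this, Subgroup.index_top] at hm
    omega
  have hk2 : k = 2 := by
    interval_cases k <;> omega
  subst hk2
  obtain ⟨i⟩ := iso_of_index_six φ.range (by omega) (by rw [← Nat.card_congr e2.toEquiv, hcard])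
  exact ⟨e2.trans i⟩

theorem theorem_M {G : Type*} [Group G] [Finite G]
    (hchar : ∀ K : Subgroup G, K.Characteristic → K = ⊥ ∨ K = ⊤) (hns : ¬ Group.IsSolvable G)
    (θ : G ≃* G) (hθ : 2 * Nat.card G < 9 * (invSet θ).ncard) :
    Nonempty (G ≃* alternatingGroup (Fin 5)) := by
  obtain ⟨h5, h3, hr⟩ := cs_five hchar hns θ hθ
  have hf : Fact (Nat.Prime 5) := ⟨Nat.prime_five⟩
  obtain ⟨P⟩ : Nonempty (Sylow 5 G) := inferInstance
  obtain ⟨θ', h1, h2⟩ := cs_twist θ hθ Nat.prime_five le_rfl (P : Subgroup G) P.isPGroup'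
  rcases cs_cases hchar hns θ' h1 P h2 with ⟨h16, h32⟩ | ⟨h6, k, hk, hk6, hidx⟩
  · exact absurd (cs_not_sixteen hchar hns θ' h1 P h2 h32) id
  · refine cs_six hchar hns h5 P ?_ h6 k hk hk6 hidx
    intro u hu
    rw [Subgroup.mem_centralizer_iff]
    intro v hv
    have := h2 _ ((P : Subgroup G).mul_mem hu hv)
    rw [map_mul, h2 u hu, h2 v hv, ← mul_inv_rev, inv_inj] at this
    exact this


theorem fac_le {G : Type*} [Group G] [Finite G] (θ : G ≃* G) (z : G) :
    {x | x ∈ invSet θ ∧ x⁻¹ * z ∈ invSet θ}.ncard ≤ Nat.card (Subgroup.centralizer {z}) ∧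
    (3 * Nat.card (Subgroup.centralizer {z}) < 4 * {x | x ∈ invSet θ ∧ x⁻¹ * z ∈ invSet θ}.ncard →
      ∀ a ∈ Subgroup.centralizer {z}, ∀ b ∈ Subgroup.centralizer {z}, a * b = b * a) := by
  by_cases hne : ∃ x₀, x₀ ∈ invSet θ ∧ x₀⁻¹ * z ∈ invSet θ
  · obtain ⟨x₀, hx₀, hy₀⟩ := hne
    have key : ∀ x, x ∈ invSet θ → x⁻¹ * z ∈ invSet θ → θ z = x⁻¹ * z⁻¹ * x := by
      intro x hx hy
      rw [mem_invSet] at hx hy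
      rw [map_mul, map_inv, hx, inv_inv, mul_inv_rev, inv_inv] at hy
      rw [eq_inv_mul_of_mul_eq hy, mul_assoc]
    set J : Set G := {g | g ∈ Subgroup.centralizer {z} ∧ g ∈ invSet (twist θ x₀)} with hJ
    have h1 : {x | x ∈ invSet θ ∧ x⁻¹ * z ∈ invSet θ}.ncard ≤ J.ncard := by
      refine Set.ncard_le_ncard_of_injOn (fun x => x * x₀⁻¹) ?_ (mul_left_injective _).injOn
        (Set.toFinite _)
      rintro x ⟨hx, hy⟩
      refine ⟨?_, (mem_twist hx₀ _).mpr (by simpa using hx)⟩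
      rw [Subgroup.mem_centralizer_singleton_iff]
      have h2 := (key x hx hy).symm.trans (key x₀ hx₀ hy₀)
      have h3 : x⁻¹ * z * x = x₀⁻¹ * z * x₀ := by
        have := congrArg (fun t => t⁻¹) h2
        simpa [mul_assoc] using this
      have h4 : x * (x⁻¹ * z * x) * x₀⁻¹ = x * (x₀⁻¹ * z * x₀) * x₀⁻¹ := by rw [h3]
      simp only [mul_assoc, mul_inv_cancel_left, mul_inv_cancel, mul_one] at h4 ⊢
      exact h4.symm
    have h2 : J.ncard ≤ Nat.card (Subgroup.centralizer {z}) := by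
      rw [natCard_eq_ncard]
      exact Set.ncard_le_ncard (fun x hx => hx.1) (Set.toFinite _)
    refine ⟨h1.trans h2, fun h3 => ?_⟩
    exact (three_quarters _ J (fun x hx => hx.1) (by
      rintro x ⟨hx1, hx2⟩ y ⟨hy1, hy2⟩
      rw [← mul_mem_invSet hx2 hy2]
      exact ⟨fun h => h.2, fun h => ⟨Subgroup.mul_mem _ hx1 hy1, h⟩⟩) (by omega)).2
  · have : {x | x ∈ invSet θ ∧ x⁻¹ * z ∈ invSet θ} = ∅ := by
      ext x
      constructor
      · intro hx; exact absurd ⟨x, hx⟩ hne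
      · intro hx; exact absurd hx (Set.notMem_empty x)
    rw [this, Set.ncard_empty]
    exact ⟨Nat.zero_le _, fun h => by omega⟩

theorem fac_sum {G : Type*} [Group G] [Fintype G] (θ : G ≃* G) :
    (invSet θ).ncard * (invSet θ).ncard =
      ∑ z : G, {x | x ∈ invSet θ ∧ x⁻¹ * z ∈ invSet θ}.ncard := by
  classical
  rw [← Set.ncard_prod, Set.ncard_eq_toFinset_card',
    Finset.card_eq_sum_card_fiberwise (f := fun q : G × G => q.1 * q.2) (t := Finset.univ)
      (fun _ _ => Finset.mem_coe.mpr (Finset.mem_univ _))]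
  refine Finset.sum_congr rfl fun z _ => ?_
  rw [← Set.ncard_coe_finset]
  refine Set.ncard_congr (fun q _ => q.1) ?_ ?_ ?_
  · rintro ⟨x, y⟩ h
    simp only [Finset.coe_filter, Set.mem_toFinset, Set.mem_prod, Set.mem_ofPred_eq] at h ⊢
    obtain ⟨⟨h1, h2⟩, rfl⟩ := h
    exact ⟨h1, by simpa using h2⟩
  · rintro ⟨x, y⟩ ⟨x', y'⟩ h h' e
    simp only [Finset.coe_filter, Set.mem_toFinset, Set.mem_prod, Set.mem_ofPred_eq] at h h' e
    subst e
    have := h.2.trans h'.2.symm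
    have := mul_left_cancel this
    rw [this]
  · intro x hx
    refine ⟨(x, x⁻¹ * z), ?_, rfl⟩
    simp only [Finset.coe_filter, Set.mem_toFinset, Set.mem_prod, Set.mem_ofPred_eq]
    exact ⟨hx, by simp⟩



theorem inv_transport {G H : Type*} [Group G] [Group H] (e : G ≃* H) (θ : G ≃* G) :
    (invSet (e.symm.trans (θ.trans e))).ncard = (invSet θ).ncard := by
  have : invSet (e.symm.trans (θ.trans e)) = e '' invSet θ := by
    ext h
    constructor
    · intro hh
      refine ⟨e.symm h, ?_, by simp⟩
      rw [mem_invSet] at *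
      apply e.injective
      simpa using hh
    · rintro ⟨g, hg, rfl⟩
      rw [mem_invSet] at *
      simp [hg]
  rw [this, Set.ncard_image_of_injective _ e.injective]

theorem ct5 (z : Equiv.Perm (Fin 5)) :
    z.cycleType = 0 ∨ z.cycleType = {2} ∨ z.cycleType = {3} ∨ z.cycleType = {4} ∨
    z.cycleType = {5} ∨ z.cycleType = {2, 2} ∨ z.cycleType = {2, 3} := by
  have h1 : z.cycleType.sum ≤ 5 := by
    rw [Equiv.Perm.sum_cycleType]
    exact (Finset.card_le_univ _).trans (by simp)
  have h2 : ∀ n ∈ z.cycleType, 2 ≤ n := fun n hn => Equiv.Perm.two_le_of_mem_cycleType hn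
  have h3 : z.cycleType.card * 2 ≤ z.cycleType.sum := by
    have := Multiset.card_nsmul_le_sum h2
    simpa using this
  generalize z.cycleType = m at *
  have h4 : m.card ≤ 2 := by omega
  have h5 : m.card = 0 ∨ m.card = 1 ∨ m.card = 2 := by omega
  rcases h5 with h5 | h5 | h5
  · exact Or.inl (Multiset.card_eq_zero.mp h5)
  · obtain ⟨a, rfl⟩ := Multiset.card_eq_one.mp h5
    have ha := h2 a (by simp)
    rw [Multiset.sum_singleton] at h1
    interval_cases a <;> decide
  · obtain ⟨a, b, rfl⟩ := Multiset.card_eq_two.mp h5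
    have ha := h2 a (by simp)
    have hb := h2 b (by simp)
    have hs : a + b ≤ 5 := by simpa using h1
    have ha' : a ≤ 3 := by omega
    have hb' : b ≤ 3 := by omega
    interval_cases a <;> interval_cases b <;> first | omega | decide

theorem count_ct5 (m : Multiset ℕ) :
    (Finset.univ.filter (fun z : Equiv.Perm (Fin 5) => z.cycleType = m)).card =
    if (m.sum ≤ 5 ∧ ∀ a ∈ m, 2 ≤ a) then
      120 / ((5 - m.sum).factorial * m.prod * (∏ n ∈ m.toFinset, (m.count n).factorial))
      else 0 := by
  have := Equiv.Perm.card_of_cycleType (Fin 5) m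
  rw [Fintype.card_fin] at this
  exact this

theorem sum_ct5 (w : Multiset ℕ → ℕ) : ∑ z : Equiv.Perm (Fin 5), w z.cycleType =
    w 0 + 10 * w {2} + 20 * w {3} + 30 * w {4} + 24 * w {5} + 15 * w {2, 2} + 20 * w {2, 3} := by
  let T : Finset (Multiset ℕ) := {0, {2}, {3}, {4}, {5}, {2, 2}, {2, 3}}
  have h : ∀ z ∈ (Finset.univ : Finset (Equiv.Perm (Fin 5))), z.cycleType ∈ T := by
    intro z _
    simpa [T] using ct5 z
  rw [← Finset.sum_fiberwise_of_maps_to h]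
  have h2 : ∀ m ∈ T, ∑ z ∈ Finset.univ.filter (fun z : Equiv.Perm (Fin 5) => z.cycleType = m),
      w z.cycleType =
      (Finset.univ.filter (fun z : Equiv.Perm (Fin 5) => z.cycleType = m)).card * w m := by
    intro m _
    rw [← smul_eq_mul, ← Finset.sum_const]
    exact Finset.sum_congr rfl fun z hz => by rw [(Finset.mem_filter.mp hz).2]
  rw [Finset.sum_congr rfl h2]
  have e : T = {0, {2}, {3}, {4}, {5}, {2, 2}, {2, 3}} := rfl
  have c0 := (count_ct5 0).trans (b := _) (c := 1) (by decide)
  have c1 := (count_ct5 {2}).trans (b := _) (c := 10) (by decide)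
  have c2 := (count_ct5 {3}).trans (b := _) (c := 20) (by decide)
  have c3 := (count_ct5 {4}).trans (b := _) (c := 30) (by decide)
  have c4 := (count_ct5 {5}).trans (b := _) (c := 24) (by decide)
  have c5 := (count_ct5 {2, 2}).trans (b := _) (c := 15) (by decide)
  have c6 := (count_ct5 {2, 3}).trans (b := _) (c := 20) (by decide)
  rw [e, Finset.sum_insert (by decide), Finset.sum_insert (by decide), Finset.sum_insert (by decide),
    Finset.sum_insert (by decide), Finset.sum_insert (by decide), Finset.sum_insert (by decide),
    Finset.sum_singleton, c0, c1, c2, c3, c4, c5, c6]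
  ring

theorem cent_ct5 (z : Equiv.Perm (Fin 5)) :
    (z.cycleType = 0 → Nat.card (Subgroup.centralizer {z}) = 120) ∧
    (z.cycleType = {2} → Nat.card (Subgroup.centralizer {z}) = 12) ∧
    (z.cycleType = {3} → Nat.card (Subgroup.centralizer {z}) = 6) ∧
    (z.cycleType = {4} → Nat.card (Subgroup.centralizer {z}) = 4) ∧
    (z.cycleType = {5} → Nat.card (Subgroup.centralizer {z}) = 5) ∧
    (z.cycleType = {2, 2} → Nat.card (Subgroup.centralizer {z}) = 8) ∧
    (z.cycleType = {2, 3} → Nat.card (Subgroup.centralizer {z}) = 6) := by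
  rw [Equiv.Perm.nat_card_centralizer, Fintype.card_fin]
  refine ⟨?_, ?_, ?_, ?_, ?_, ?_, ?_⟩ <;> intro h <;> rw [h] <;> rfl

/-- order bounds for centralizers in the alternating group -/
theorem cent_A5 (z : alternatingGroup (Fin 5)) :
    Nat.card (Subgroup.centralizer {z}) ≤ Nat.card (Subgroup.centralizer {(z : Equiv.Perm (Fin 5))}) ∧
    (¬ Subgroup.centralizer {(z : Equiv.Perm (Fin 5))} ≤ alternatingGroup (Fin 5) →
      2 * Nat.card (Subgroup.centralizer {z}) ≤
        Nat.card (Subgroup.centralizer {(z : Equiv.Perm (Fin 5))})) := by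
  set C := Subgroup.centralizer {(z : Equiv.Perm (Fin 5))}
  set D := (Subgroup.centralizer {z}).map (alternatingGroup (Fin 5)).subtype with hD
  have h1 : D ≤ C := by
    rintro _ ⟨g, hg, rfl⟩
    have := Subgroup.mem_centralizer_singleton_iff.mp hg
    exact Subgroup.mem_centralizer_singleton_iff.mpr (congrArg Subtype.val this)
  have h2 : D ≤ alternatingGroup (Fin 5) := Subgroup.map_subtype_le _
  have h3 : Nat.card D = Nat.card (Subgroup.centralizer {z}) :=
    Subgroup.card_map_of_injective (Subgroup.subtype_injective _)
  rw [← h3]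
  refine ⟨Subgroup.card_le_of_le h1, fun h => ?_⟩
  obtain ⟨c, hc⟩ := Subgroup.card_dvd_of_le h1
  have hCpos : 0 < Nat.card C := Nat.card_pos
  have hc0 : c ≠ 0 := by rintro rfl; omega
  have hc1 : c ≠ 1 := by
    rintro rfl
    have := Subgroup.eq_of_le_of_card_ge h1 (by omega)
    exact h (this ▸ h2)
  rw [hc, mul_comm]
  exact Nat.mul_le_mul_left _ (by omega)

theorem bound_A5 {N : Type*} [Group N] (e : N ≃* alternatingGroup (Fin 5)) (θ : N ≃* N) :
    (invSet θ).ncard ≤ 17 := by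
  rw [← inv_transport e θ]
  set φ := e.symm.trans (θ.trans e)
  let w : Multiset ℕ → ℕ := fun m => if m = 0 then 60 else if m = {3} then 3 else
    if m = {5} then 5 else if m = {2, 2} then 4 else 0
  have h1 := fac_sum φ
  have hw : ∀ z : alternatingGroup (Fin 5), {x | x ∈ invSet φ ∧ x⁻¹ * z ∈ invSet φ}.ncard ≤
      w (z : Equiv.Perm (Fin 5)).cycleType := by
    intro z
    refine (fac_le φ z).1.trans ?_
    obtain ⟨h3, h4⟩ := cent_A5 z
    obtain ⟨k0, -, k3, -, k5, k22, -⟩ := cent_ct5 (z : Equiv.Perm (Fin 5))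
    have hs := Equiv.Perm.sign_of_cycleType (z : Equiv.Perm (Fin 5))
    rw [Equiv.Perm.mem_alternatingGroup.mp z.2] at hs
    rcases ct5 (z : Equiv.Perm (Fin 5)) with h | h | h | h | h | h | h <;> rw [h] at hs ⊢
    · have h5 : ¬ Subgroup.centralizer {(z : Equiv.Perm (Fin 5))} ≤ alternatingGroup (Fin 5) := by
        intro h6
        have := Equiv.Perm.card_le_of_centralizer_le_alternating h6
        rw [h] at this
        simp at this
      have h7 := h4 h5
      rw [k0 h] at h7
      have : w 0 = 60 := by decide
      omega
    · exact absurd hs (by decide)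
    · have h5 : ¬ Subgroup.centralizer {(z : Equiv.Perm (Fin 5))} ≤ alternatingGroup (Fin 5) := by
        intro h6
        have := Equiv.Perm.card_le_of_centralizer_le_alternating h6
        rw [h] at this
        simp at this
      have h7 := h4 h5
      rw [k3 h] at h7
      have : w {3} = 3 := by decide
      omega
    · exact absurd hs (by decide)
    · rw [k5 h] at h3
      have : w {5} = 5 := by decide
      omega
    · have h5 : ¬ Subgroup.centralizer {(z : Equiv.Perm (Fin 5))} ≤ alternatingGroup (Fin 5) := by
        intro h6
        have := Equiv.Perm.count_le_one_of_centralizer_le_alternating h6 2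
        rw [h] at this
        simp at this
      have h7 := h4 h5
      rw [k22 h] at h7
      have : w {2, 2} = 4 := by decide
      omega
    · exact absurd hs (by decide)
  have h2 : ∑ z : alternatingGroup (Fin 5), {x | x ∈ invSet φ ∧ x⁻¹ * z ∈ invSet φ}.ncard ≤ 300 := by
    refine (Finset.sum_le_sum fun z _ => hw z).trans ?_
    have h3 : ∑ z : Equiv.Perm (Fin 5), w z.cycleType = 300 := by
      rw [sum_ct5]
      decide
    rw [← h3, ← Finset.sum_image (s := Finset.univ)
      (g := fun z : alternatingGroup (Fin 5) => (z : Equiv.Perm (Fin 5)))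
      (f := fun z => w z.cycleType) (Subtype.val_injective.injOn)]
    exact Finset.sum_le_sum_of_subset (Finset.subset_univ _)
  rw [← h1] at h2
  by_contra h
  push Not at h
  nlinarith

theorem swap_noncomm : ∀ i j : Fin 5, i ≠ j → ∃ k l m : Fin 5,
    Equiv.swap k l * Equiv.swap i j = Equiv.swap i j * Equiv.swap k l ∧
    Equiv.swap l m * Equiv.swap i j = Equiv.swap i j * Equiv.swap l m ∧
    Equiv.swap k l * Equiv.swap l m ≠ Equiv.swap l m * Equiv.swap k l := by
  decide +kernel

theorem bound_S5 {N : Type*} [Group N] (e : N ≃* Equiv.Perm (Fin 5)) (θ : N ≃* N) :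
    (invSet θ).ncard ≤ 26 := by
  rw [← inv_transport e θ]
  set φ := e.symm.trans (θ.trans e)
  let w : Multiset ℕ → ℕ := fun m => if m = 0 then (invSet φ).ncard else if m = {2} then 9 else
    if m = {3} then 6 else if m = {4} then 4 else if m = {5} then 5 else if m = {2, 2} then 8 else 6
  have w0 : w 0 = (invSet φ).ncard := rfl
  have w2 : w {2} = 9 := rfl
  have w3 : w {3} = 6 := rfl
  have w4 : w {4} = 4 := rfl
  have w5 : w {5} = 5 := rfl
  have w22 : w {2, 2} = 8 := rfl
  have w23 : w {2, 3} = 6 := rfl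
  have h1 := fac_sum φ
  have hw : ∀ z : Equiv.Perm (Fin 5), {x | x ∈ invSet φ ∧ x⁻¹ * z ∈ invSet φ}.ncard ≤
      w z.cycleType := by
    intro z
    obtain ⟨h3, h4⟩ := fac_le φ z
    obtain ⟨-, k2, k3, k4, k5, k22, k23⟩ := cent_ct5 z
    rcases ct5 z with h | h | h | h | h | h | h <;> rw [h]
    · rw [w0]
      exact Set.ncard_le_ncard (fun x hx => hx.1) (Set.toFinite _)
    · rw [w2]
      rw [k2 h] at h4
      by_contra h5
      have h6 := h4 (by omega)
      have hz : z.support.card = 2 := by rw [← Equiv.Perm.sum_cycleType, h]; rfl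
      obtain ⟨i, j, hij, rfl⟩ := Equiv.Perm.card_support_eq_two.mp hz
      obtain ⟨k, l, m, ha, hb, hc⟩ := swap_noncomm i j hij
      exact hc (h6 _ (Subgroup.mem_centralizer_singleton_iff.mpr ha) _
        (Subgroup.mem_centralizer_singleton_iff.mpr hb))
    · have := k3 h; omega
    · have := k4 h; omega
    · have := k5 h; omega
    · have := k22 h; omega
    · have := k23 h; omega
  have h2 : (invSet φ).ncard * (invSet φ).ncard ≤ (invSet φ).ncard + 690 := by
    rw [h1]
    refine (Finset.sum_le_sum fun z _ => hw z).trans ?_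
    rw [sum_ct5, w0, w2, w3, w4, w5, w22, w23]
  by_contra h
  push Not at h
  nlinarith

/-- restriction of an automorphism to a characteristic subgroup -/
theorem exists_restrict {G : Type*} [Group G] [Finite G] (N : Subgroup G) [hN : N.Characteristic]
    (θ : G ≃* G) : ∃ ψ : N ≃* N, {h | h ∈ N ∧ h ∈ invSet θ}.ncard = (invSet ψ).ncard := by
  have hm : N.map (θ : G →* G) = N := Subgroup.characteristic_iff_map_eq.mp hN θ
  refine ⟨(θ.subgroupMap N).trans (MulEquiv.subgroupCongr hm), ?_⟩
  rw [← Set.ncard_image_of_injective _ (Subtype.val_injective (p := fun x => x ∈ N))]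
  congr 1
  ext g
  constructor
  · rintro ⟨h1, h2⟩
    refine ⟨⟨g, h1⟩, ?_, rfl⟩
    rw [mem_invSet] at *
    exact Subtype.ext h2
  · rintro ⟨⟨n, hn⟩, h, rfl⟩
    exact ⟨hn, congrArg Subtype.val h⟩

theorem exists_min_char {G : Type*} [Group G] [Finite G] [Nontrivial G] :
    ∃ N : Subgroup G, N.Characteristic ∧ N ≠ ⊥ ∧
      ∀ K : Subgroup N, K.Characteristic → K = ⊥ ∨ K = ⊤ := by
  obtain ⟨N, hN⟩ := (Set.toFinite {N : Subgroup G | N.Characteristic ∧ N ≠ ⊥}).exists_minimal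
    ⟨⊤, inferInstance, top_ne_bot⟩
  obtain ⟨hc, hb⟩ := hN.prop
  refine ⟨N, hc, hb, fun K hK => ?_⟩
  by_cases hKb : K = ⊥
  · exact Or.inl hKb
  right
  have h1 : (K.map N.subtype).Characteristic := by
    rw [Subgroup.characteristic_iff_map_le]
    intro φ
    have hm : N.map (φ : G →* G) = N := Subgroup.characteristic_iff_map_eq.mp hc φ
    have h2 := Subgroup.characteristic_iff_map_eq.mp hK
      ((φ.subgroupMap N).trans (MulEquiv.subgroupCongr hm))
    rintro _ ⟨_, ⟨k, hk, rfl⟩, rfl⟩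
    refine ⟨((φ.subgroupMap N).trans (MulEquiv.subgroupCongr hm)) k, ?_, rfl⟩
    rw [← h2]
    exact ⟨k, hk, rfl⟩
  have h2 : K.map N.subtype ≠ ⊥ := fun h =>
    hKb ((Subgroup.map_eq_bot_iff_of_injective K N.subtype_injective).mp h)
  have h3 : N ≤ K.map N.subtype := hN.le_of_le ⟨h1, h2⟩ (Subgroup.map_subtype_le K)
  rw [← top_le_iff]
  rintro ⟨n, hn⟩ _
  obtain ⟨k, hk, hkn⟩ := h3 hn
  have : k = ⟨n, hn⟩ := Subtype.ext hkn
  exact this ▸ hk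

theorem sylow_five {N : Type*} [Group N] [Finite N]
    (hchar : ∀ K : Subgroup N, K.Characteristic → K = ⊥ ∨ K = ⊤) (hns : ¬ Group.IsSolvable N)
    (h60 : Nat.card N = 60) : Nat.card (Sylow 2 N) = 5 := by
  have hd : 2 ∣ Nat.card N := by omega
  obtain ⟨P⟩ : Nonempty (Sylow 2 N) := inferInstance
  have hP : Nat.card P = 4 := by
    have := P.card_eq_multiplicity
    rw [this, h60]
    have : (60 : ℕ).factorization 2 = 2 := by
      rw [Nat.factorization_def _ Nat.prime_two]
      have : (60 : ℕ) = 2 ^ 2 * 15 := by norm_num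
      rw [this, padicValNat_base_pow_mul (by norm_num) (by norm_num), padicValNat.eq_zero_of_not_dvd (by norm_num)]
    rw [this]; norm_num
  have h1 := cs_sylow_card hchar hns hd
  have hperf := cs_perfect hchar hns
  rw [P.card_eq_index_normalizer] at *
  set R := Subgroup.normalizer (P : Set N) with hR
  have hle : (P : Subgroup N) ≤ R := Subgroup.le_normalizer (H := (P : Subgroup N))
  have h2 := no_small_index hperf R
  have h3 : ¬ R.index ≤ 4 := fun h => h1 (by rw [h2 h, Subgroup.index_top])
  have h4 := R.card_mul_index
  rw [h60] at h4
  have h5 : 4 ∣ Nat.card R := by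
    rw [← hP]; exact Subgroup.card_dvd_of_le hle
  obtain ⟨c, hc⟩ := h5
  have h6 : c * R.index = 15 := by rw [hc, mul_assoc] at h4; omega
  have h7 : c ∣ 15 := ⟨_, h6.symm⟩
  have h8 : c ≤ 15 := Nat.le_of_dvd (by norm_num) h7
  have h9 : c ≠ 1 := by
    rintro rfl
    have h10 : (P : Subgroup N) = R := Subgroup.eq_of_le_of_card_ge hle
      (by rw [hc]; exact hP.ge)
    refine perfect_transfer hperf hd P ?_
    rw [← hR]
    intro x hx
    rw [← h10] at hx
    rw [Subgroup.mem_centralizer_iff]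
    intro y hy
    have hcm := IsPGroup.commutative_of_card_eq_prime_sq (p := 2) (G := P) hP
    exact congrArg Subtype.val (hcm (⟨y, hy⟩ : P) ⟨x, hx⟩)
  interval_cases c <;> omega

theorem aut_sylow_faithful {N : Type*} [Group N] [Finite N]
    (hchar : ∀ K : Subgroup N, K.Characteristic → K = ⊥ ∨ K = ⊤) (hns : ¬ Group.IsSolvable N)
    {p : ℕ} [Fact p.Prime] (hd : p ∣ Nat.card N) :
    Function.Injective (MulAction.toPermHom (MulAut N) (Sylow p N)) := by
  rw [← MonoidHom.ker_eq_bot_iff, eq_bot_iff]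
  intro α hα
  have h1 : ∀ Q : Sylow p N, α • Q = Q := fun Q => Equiv.congr_fun (MonoidHom.mem_ker.mp hα) Q
  rw [Subgroup.mem_bot]
  ext n
  refine cs_sylow_faithful (p := p) hchar hns hd ?_
  ext1 Q
  change (α n) • Q = n • Q
  have h2 : (α n) • Q = α • n • α⁻¹ • Q := by
    have : ∀ (g : N) (Q : Sylow p N), g • Q = MulAut.conj g • Q := fun _ _ => rfl
    rw [this, this, smul_smul, smul_smul]
    congr 1
    ext m
    simp [MulAut.conj_apply]
  rw [h2, inv_smul_eq_iff.mpr (h1 Q).symm, h1]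


open scoped commutatorElement

theorem main_nat {G : Type*} [Group G] [Finite G]
    (hns : ¬ Group.IsSolvable G)
    (hnorm : ∀ N : Subgroup G, N.Normal → Group.IsSolvable N → N = ⊥)
    (θ : G ≃* G) (h : 2 * Nat.card G < 9 * (invSet θ).ncard) :
    Nonempty (G ≃* alternatingGroup (Fin 5)) := by
  have hnt : Nontrivial G := by
    by_contra hn
    rw [not_nontrivial_iff_subsingleton] at hn
    exact hns (Group.isSolvable_of_comm fun a b => Subsingleton.elim _ _)
  obtain ⟨N, hNc, hNb, hchar⟩ := exists_min_char (G := G)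
  have hNn : N.Normal := inferInstance
  have hNs : ¬ Group.IsSolvable N := fun hs => hNb (hnorm N hNn hs)
  have hGpos : 0 < Nat.card G := Nat.card_pos
  obtain ⟨e⟩ : Nonempty (N ≃* alternatingGroup (Fin 5)) := by
    obtain ⟨x, hx, hle⟩ := exists_twist N θ
    obtain ⟨ψ, hψ⟩ := exists_restrict N (twist θ x)
    refine theorem_M hchar hNs ψ ?_
    rw [hψ] at hle
    have hNpos : 0 < Nat.card N := Nat.card_pos
    by_contra hcon
    push Not at hcon
    nlinarith
  have h60 : Nat.card N = 60 := by
    rw [Nat.card_congr e.toEquiv, Nat.card_eq_fintype_card]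
    have := two_mul_card_alternatingGroup (α := Fin 5)
    rw [Fintype.card_perm, Fintype.card_fin] at this
    have h5 : Nat.factorial 5 = 120 := rfl
    omega
  have hmap : N.map (θ : G →* G) = N := Subgroup.characteristic_iff_map_eq.mp hNc θ
  -- the quotient is commutative
  have hq : ∀ a b : G ⧸ N, a * b = b * a := by
    let ψ : (G ⧸ N) ≃* (G ⧸ N) := QuotientGroup.congr N N θ hmap
    have hψ : ∀ g : G, ψ (g : G ⧸ N) = ((θ g : G) : G ⧸ N) := fun g => rfl
    have h1 := card_coset_le N (invSet θ) ((fun g : G => (g : G ⧸ N)) ⁻¹' invSet ψ) 17 (by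
        intro n hn s hs
        have h2 : ((n * s : G) : G ⧸ N) = (s : G ⧸ N) := by
          rw [QuotientGroup.mk_mul, (QuotientGroup.eq_one_iff n).mpr hn, one_mul]
        rw [Set.mem_preimage] at *
        rwa [h2]) (by
        intro g hg
        rw [Set.mem_preimage, mem_invSet, hψ, mem_invSet.mp hg]
        rfl) (by
        intro x hx
        obtain ⟨φ, hφ⟩ := exists_restrict N (twist θ x)
        refine le_trans (le_of_eq ?_) (hφ.le.trans (bound_A5 e φ))
        congr 1
        ext n
        exact and_congr_right fun _ => (mem_twist hx n).symm)
    have h2 : ((fun g : G => (g : G ⧸ N)) ⁻¹' invSet ψ).ncard = 60 * (invSet ψ).ncard := by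
      rw [← h60, ← Nat.card_coe_set_eq, ← Nat.card_coe_set_eq]
      exact QuotientGroup.card_preimage_mk N (invSet ψ)
    have h3 := Subgroup.card_eq_card_quotient_mul_card_subgroup N
    rw [h2, h60] at h1
    rw [h60] at h3
    have h4 := (three_quarters (⊤ : Subgroup (G ⧸ N)) (invSet ψ) (fun _ _ => Subgroup.mem_top _)
      (fun x hx y hy => mul_mem_invSet hx hy) (by rw [Subgroup.card_top]; omega)).2
    exact fun a b => h4 a (Subgroup.mem_top _) b (Subgroup.mem_top _)
  have hcomm : ∀ a b : G, ⁅a, b⁆ ∈ N := by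
    intro a b
    rw [← QuotientGroup.eq_one_iff]
    change ⁅(a : G ⧸ N), (b : G ⧸ N)⁆ = 1
    rw [commutatorElement_eq_one_iff_mul_comm]
    exact hq _ _
  have hcen := cs_center hchar hNs
  have hC : Subgroup.centralizer (N : Set G) = ⊥ := by
    apply hnorm _ inferInstance
    apply Group.isSolvable_of_comm
    rintro ⟨a, ha⟩ ⟨b, hb⟩
    apply Subtype.ext
    change a * b = b * a
    rw [← commutatorElement_eq_one_iff_mul_comm]
    have h1 : ⁅a, b⁆ ∈ Subgroup.centralizer (N : Set G) := by
      rw [commutatorElement_def]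
      exact Subgroup.mul_mem _ (Subgroup.mul_mem _ (Subgroup.mul_mem _ ha hb)
        (Subgroup.inv_mem _ ha)) (Subgroup.inv_mem _ hb)
    have h2 : (⟨⁅a, b⁆, hcomm a b⟩ : N) ∈ Subgroup.center N := by
      rw [Subgroup.mem_center_iff]
      rintro ⟨n, hn⟩
      exact Subtype.ext (Subgroup.mem_centralizer_iff.mp h1 n hn)
    rw [hcen, Subgroup.mem_bot] at h2
    exact congrArg Subtype.val h2
  have hinj : Function.Injective (MulAut.conjNormal : G →* MulAut N) := by
    rw [← MonoidHom.ker_eq_bot_iff, eq_bot_iff, ← hC]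
    intro g hg
    rw [Subgroup.mem_centralizer_iff]
    intro n hn
    have h1 := congrArg Subtype.val (MulEquiv.congr_fun (MonoidHom.mem_ker.mp hg) ⟨n, hn⟩)
    rw [MulAut.conjNormal_apply] at h1
    change g * n * g⁻¹ = n at h1
    rw [mul_inv_eq_iff_eq_mul] at h1
    exact h1.symm
  have hf2 : Fact (Nat.Prime 2) := ⟨Nat.prime_two⟩
  have h5 := sylow_five hchar hNs h60
  let f : G →* Equiv.Perm (Sylow 2 N) :=
    (MulAction.toPermHom (MulAut N) (Sylow 2 N)).comp MulAut.conjNormal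
  have hf : Function.Injective f :=
    (aut_sylow_faithful (p := 2) hchar hNs (by omega)).comp hinj
  have hdvd := Subgroup.card_dvd_of_injective f hf
  have hdvd' := Subgroup.card_subgroup_dvd_card N
  have hfac : Nat.factorial 5 = 120 := rfl
  rw [Nat.card_perm, h5, hfac] at hdvd
  rw [h60] at hdvd'
  obtain ⟨c, hc⟩ := hdvd'
  have hle := Nat.le_of_dvd (by norm_num) hdvd
  have hcases : Nat.card G = 60 ∨ Nat.card G = 120 := by omega
  rcases hcases with hG | hG
  · exact iso_of_embed5 h5 f hf hG
  · exfalso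
    have hb : Function.Bijective f := by
      rw [Nat.bijective_iff_injective_and_card]
      exact ⟨hf, by rw [hG, Nat.card_perm, h5]; rfl⟩
    have e2 : Sylow 2 N ≃ Fin 5 := Finite.equivFinOfCardEq h5
    have := bound_S5 ((MulEquiv.ofBijective f hb).trans e2.permCongrHom) θ
    omega

theorem iso_A5_of_many_inverted {G : Type*} [Group G] [Fintype G] [DecidableEq G]
    (hns : ¬ IsSolvable G)
    (hnorm : ∀ N : Subgroup G, N.Normal → IsSolvable N → N = ⊥)
    (θ : G ≃* G)
    (h : (2 / 9 : ℚ) * (Fintype.card G : ℚ) <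
      ((Finset.univ.filter fun g : G => θ g = g⁻¹).card : ℚ)) :
    Nonempty (G ≃* alternatingGroup (Fin 5)) := by
  refine main_nat hns hnorm θ ?_
  have h1 : (invSet θ).ncard = (Finset.univ.filter fun g : G => θ g = g⁻¹).card := by
    rw [← Set.ncard_coe_finset]
    congr 1
    ext g
    simp [mem_invSet]
  rw [h1, Nat.card_eq_fintype_card]
  have h2 : (2 : ℚ) * (Fintype.card G : ℚ) <
      9 * ((Finset.univ.filter fun g : G => θ g = g⁻¹).card : ℚ) := by linarith
  exact_mod_cast h2
end
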